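/- arXiv:1409.3949 — 9 statements merged into one kernel-verified Lean document; each statement's English description precedes it below -/
import Mathlib

section
/- Let n and k be coprime positive integers and let r, s be integers with r·n − k·s = 1. Let G be the group with presentation on generators a, w, d and relations: d·a = a·d, d·w = w·d, (a·w)^k = d^r, w^n = d^s. Then G is isomorphic to the torus-knot group presented by two generators x, y subject to the single relation x^n = y^k. -/
/-!
Let `r * n - k * s = 1`. By Bézout, a commuting pair `w, d` with `w ^ n = d ^ s` is the same thing
as a single element `x`, through `w = x ^ s`, `d = x ^ n` and `x = w ^ (-k) * d ^ r`. In the same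
way the commuting pair `a * w, d` with `(a * w) ^ k = d ^ r` is the same thing as a single element
`y`, through `a * w = y ^ r`, `d = y ^ k` and `y = (a * w) ^ n * d ^ (-s)`. The two pairs share the
element `d`, which leaves the single relation `x ^ n = y ^ k`.
-/

section Bezout

variable {G : Type*} [Group G] {u v : G} {p q a b : ℤ}

theorem zpow_mul_zpow_zpow_eq_left_of_bezout (hcomm : Commute u v) (huv : u ^ p = v ^ q)
    (hab : a * p + b * q = 1) : (u ^ b * v ^ a) ^ q = u :=
  calc (u ^ b * v ^ a) ^ q = u ^ (b * q) * (v ^ q) ^ a := by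
        rw [(hcomm.zpow_zpow b a).mul_zpow, ← zpow_mul, zpow_comm]
    _ = u ^ (a * p + b * q) := by
        rw [← huv, ← zpow_mul, ← zpow_add, mul_comm p, add_comm]
    _ = u := by rw [hab, zpow_one]

theorem zpow_mul_zpow_zpow_eq_right_of_bezout (hcomm : Commute u v) (huv : u ^ p = v ^ q)
    (hab : a * p + b * q = 1) : (u ^ b * v ^ a) ^ p = v := by
  rw [(hcomm.zpow_zpow b a).eq]
  exact zpow_mul_zpow_zpow_eq_left_of_bezout hcomm.symm huv.symm (by rwa [add_comm])

theorem zpow_zpow_mul_zpow_zpow_of_bezout (g : G) (hab : a * p + b * q = 1) :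
    (g ^ q) ^ b * (g ^ p) ^ a = g := by
  rw [← zpow_mul, ← zpow_mul, ← zpow_add, mul_comm q, mul_comm p, add_comm, hab, zpow_one]

end Bezout

/-- The group `⟨a, w, d : d a = a d, d w = w d, (a w) ^ k = d ^ r, w ^ n = d ^ s⟩`, the fundamental
group of the complement of the cusp `y ^ k = x ^ n` when `n, k > 0` and `r n - k s = 1`. The
exponents are arbitrary integers, and `a`, `w`, `d` are the generators numbered `0`, `1`, `2`. -/
abbrev CuspGroup (n k r s : ℤ) : Type :=
  PresentedGroup
    ({ FreeGroup.of 2 * FreeGroup.of 0 * (FreeGroup.of 0 * FreeGroup.of 2)⁻¹,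
       FreeGroup.of 2 * FreeGroup.of 1 * (FreeGroup.of 1 * FreeGroup.of 2)⁻¹,
       (FreeGroup.of 0 * FreeGroup.of 1) ^ k * ((FreeGroup.of 2) ^ r)⁻¹,
       (FreeGroup.of 1) ^ n * ((FreeGroup.of 2) ^ s)⁻¹ } : Set (FreeGroup (Fin 3)))

/-- The torus-knot group `⟨x, y : x ^ n = y ^ k⟩`, for arbitrary integer exponents; `x` and `y` are
the generators numbered `0` and `1`. -/
abbrev TorusKnotGroup (n k : ℤ) : Type :=
  PresentedGroup
    ({ (FreeGroup.of 0) ^ n * ((FreeGroup.of 1) ^ k)⁻¹ } : Set (FreeGroup (Fin 2)))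

namespace TorusKnotGroup

variable {n k : ℤ} {H : Type*} [Group H]

/-- The first generator of the torus-knot group. -/
def x : TorusKnotGroup n k := PresentedGroup.of 0

/-- The second generator of the torus-knot group. -/
def y : TorusKnotGroup n k := PresentedGroup.of 1

theorem x_zpow_eq_y_zpow : (x : TorusKnotGroup n k) ^ n = y ^ k :=
  PresentedGroup.mk_eq_mk_of_mul_inv_mem (Set.mem_singleton _)

theorem commute_x_zpow_y : Commute ((x : TorusKnotGroup n k) ^ n) y := by
  rw [x_zpow_eq_y_zpow]
  exact .zpow_self y k

/-- The universal property of the torus-knot group. -/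
def lift (X Y : H) (hXY : X ^ n = Y ^ k) : TorusKnotGroup n k →* H :=
  PresentedGroup.toGroup (f := ![X, Y]) <| by
    simpa [mul_inv_eq_one] using hXY

@[simp]
theorem lift_x {X Y : H} (hXY : X ^ n = Y ^ k) : lift X Y hXY x = X :=
  PresentedGroup.toGroup.of _

@[simp]
theorem lift_y {X Y : H} (hXY : X ^ n = Y ^ k) : lift X Y hXY y = Y :=
  PresentedGroup.toGroup.of _

theorem hom_ext {f g : TorusKnotGroup n k →* H} (hx : f x = g x) (hy : f y = g y) : f = g :=
  PresentedGroup.ext <| Fin.forall_fin_two.2 ⟨hx, hy⟩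

end TorusKnotGroup

namespace CuspGroup

variable {n k r s : ℤ} {H : Type*} [Group H]

/-- The generator `α₁` of the cusp group. -/
def a : CuspGroup n k r s := PresentedGroup.of 0

/-- The generator `ω∞` of the cusp group. -/
def w : CuspGroup n k r s := PresentedGroup.of 1

/-- The central generator `δ` of the cusp group. -/
def d : CuspGroup n k r s := PresentedGroup.of 2

theorem commute_d_a : Commute (d : CuspGroup n k r s) a :=
  PresentedGroup.mk_eq_mk_of_mul_inv_mem (by simp)

theorem commute_d_w : Commute (d : CuspGroup n k r s) w :=
  PresentedGroup.mk_eq_mk_of_mul_inv_mem (by simp)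

theorem commute_d_a_mul_w : Commute (d : CuspGroup n k r s) (a * w) :=
  commute_d_a.mul_right commute_d_w

theorem a_mul_w_zpow : ((a : CuspGroup n k r s) * w) ^ k = d ^ r :=
  PresentedGroup.mk_eq_mk_of_mul_inv_mem (by simp)

theorem w_zpow : (w : CuspGroup n k r s) ^ n = d ^ s :=
  PresentedGroup.mk_eq_mk_of_mul_inv_mem (by simp)

/-- The universal property of the cusp group. -/
def lift (A W D : H) (hDA : Commute D A) (hDW : Commute D W) (hAW : (A * W) ^ k = D ^ r)
    (hW : W ^ n = D ^ s) : CuspGroup n k r s →* H :=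
  PresentedGroup.toGroup (f := ![A, W, D]) <| by
    simpa [mul_inv_eq_one, -mul_inv_rev] using ⟨hDA.eq, hDW.eq, hAW, hW⟩

section lift

variable {A W D : H} (hDA : Commute D A) (hDW : Commute D W) (hAW : (A * W) ^ k = D ^ r)
  (hW : W ^ n = D ^ s)

@[simp]
theorem lift_a : lift A W D hDA hDW hAW hW a = A :=
  PresentedGroup.toGroup.of _

@[simp]
theorem lift_w : lift A W D hDA hDW hAW hW w = W :=
  PresentedGroup.toGroup.of _

@[simp]
theorem lift_d : lift A W D hDA hDW hAW hW d = D :=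
  PresentedGroup.toGroup.of _

end lift

theorem hom_ext {f g : CuspGroup n k r s →* H} (ha : f a = g a) (hw : f w = g w)
    (hd : f d = g d) : f = g :=
  PresentedGroup.ext <| by
    simpa [Fin.forall_fin_succ] using ⟨ha, hw, hd⟩

open TorusKnotGroup (x y x_zpow_eq_y_zpow commute_x_zpow_y)

/-- The homomorphism with `w ↦ x ^ s`, `a * w ↦ y ^ r` and `d ↦ x ^ n = y ^ k`. -/
def toTorusKnotGroup (n k r s : ℤ) : CuspGroup n k r s →* TorusKnotGroup n k :=
  have hx : Commute ((x : TorusKnotGroup n k) ^ n) (x ^ s) := .zpow_zpow_self x n s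
  lift (y ^ r * (x ^ s)⁻¹) (x ^ s) (x ^ n)
    ((commute_x_zpow_y.zpow_right r).mul_right hx.inv_right) hx
    (by rw [inv_mul_cancel_right, x_zpow_eq_y_zpow, zpow_comm])
    (zpow_comm x s n)

/-- The homomorphism sending `x` to the element whose `s`-th and `n`-th powers are `w` and `d`, and
`y` to the one whose `r`-th and `k`-th powers are `a * w` and `d`. -/
def ofTorusKnotGroup (hrs : r * n - k * s = 1) : TorusKnotGroup n k →* CuspGroup n k r s :=
  TorusKnotGroup.lift (w ^ (-k) * d ^ r) ((a * w) ^ n * d ^ (-s)) <| by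
    rw [zpow_mul_zpow_zpow_eq_right_of_bezout commute_d_w.symm w_zpow (by linarith),
      zpow_mul_zpow_zpow_eq_right_of_bezout commute_d_a_mul_w.symm a_mul_w_zpow
        (by linarith)]

variable (hrs : r * n - k * s = 1)

theorem ofTorusKnotGroup_x_zpow_s : ofTorusKnotGroup hrs x ^ s = w := by
  rw [ofTorusKnotGroup, TorusKnotGroup.lift_x]
  exact zpow_mul_zpow_zpow_eq_left_of_bezout commute_d_w.symm w_zpow (by linarith)

theorem ofTorusKnotGroup_x_zpow_n : ofTorusKnotGroup hrs x ^ n = d := by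
  rw [ofTorusKnotGroup, TorusKnotGroup.lift_x]
  exact zpow_mul_zpow_zpow_eq_right_of_bezout commute_d_w.symm w_zpow (by linarith)

theorem ofTorusKnotGroup_y_zpow_r : ofTorusKnotGroup hrs y ^ r = a * w := by
  rw [ofTorusKnotGroup, TorusKnotGroup.lift_y]
  exact zpow_mul_zpow_zpow_eq_left_of_bezout commute_d_a_mul_w.symm a_mul_w_zpow (by linarith)

theorem ofTorusKnotGroup_comp_toTorusKnotGroup :
    (ofTorusKnotGroup hrs).comp (toTorusKnotGroup n k r s) = MonoidHom.id _ :=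
  hom_ext
    (by simp [toTorusKnotGroup, ofTorusKnotGroup_x_zpow_s, ofTorusKnotGroup_y_zpow_r])
    (by simp [toTorusKnotGroup, ofTorusKnotGroup_x_zpow_s])
    (by simp [toTorusKnotGroup, ofTorusKnotGroup_x_zpow_n])

theorem toTorusKnotGroup_comp_ofTorusKnotGroup :
    (toTorusKnotGroup n k r s).comp (ofTorusKnotGroup hrs) = MonoidHom.id _ := by
  refine TorusKnotGroup.hom_ext ?_ ?_
  · suffices (x ^ s) ^ (-k) * (x ^ n) ^ r = (x : TorusKnotGroup n k) by
      simpa [ofTorusKnotGroup, toTorusKnotGroup] using this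
    exact zpow_zpow_mul_zpow_zpow_of_bezout x (by linarith)
  · suffices (y ^ r) ^ n * (y ^ k) ^ (-s) = (y : TorusKnotGroup n k) by
      simpa [ofTorusKnotGroup, toTorusKnotGroup, x_zpow_eq_y_zpow] using this
    exact zpow_zpow_mul_zpow_zpow_of_bezout y (by linarith)

/-- The isomorphism between the cusp group and the torus-knot group. -/
def equivTorusKnotGroup : CuspGroup n k r s ≃* TorusKnotGroup n k :=
  (toTorusKnotGroup n k r s).toMulEquiv (ofTorusKnotGroup hrs)
    (ofTorusKnotGroup_comp_toTorusKnotGroup hrs) (toTorusKnotGroup_comp_ofTorusKnotGroup hrs)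

end CuspGroup

theorem stmt_1_general {n k r s : ℤ} (hrs : r * n - k * s = 1) :
    Nonempty (CuspGroup n k r s ≃* TorusKnotGroup n k) :=
  ⟨CuspGroup.equivTorusKnotGroup hrs⟩

/-- the presented group ⟨a, w, d : da=ad, dw=wd, (aw)^k = d^r, w^n = d^s⟩
is isomorphic to the torus-knot group ⟨x, y : x^n = y^k⟩ when rn - ks = 1, n, k coprime. -/
theorem stmt_1 (n k : ℕ) (hn : 1 ≤ n) (hk : 1 ≤ k) (hcop : Nat.Coprime n k)
    (r s : ℤ) (hrs : r * (n : ℤ) - (k : ℤ) * s = 1) :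
    Nonempty
      (PresentedGroup
        ({ FreeGroup.of 2 * FreeGroup.of 0 * (FreeGroup.of 0 * FreeGroup.of 2)⁻¹,
           FreeGroup.of 2 * FreeGroup.of 1 * (FreeGroup.of 1 * FreeGroup.of 2)⁻¹,
           (FreeGroup.of 0 * FreeGroup.of 1) ^ k * ((FreeGroup.of 2) ^ r)⁻¹,
           (FreeGroup.of 1) ^ n * ((FreeGroup.of 2) ^ s)⁻¹ } : Set (FreeGroup (Fin 3))) ≃*
       PresentedGroup
        ({ (FreeGroup.of 0) ^ n * ((FreeGroup.of 1) ^ k)⁻¹ } : Set (FreeGroup (Fin 2)))) := by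
  rw [← zpow_natCast, ← zpow_natCast _ n, ← zpow_natCast _ k]
  exact stmt_1_general hrs
end

section
/- Let V be a finite-dimensional vector space over ℂ and let V₁, …, V_n be linear subspaces of V. The following are equivalent: (a) there exists a unique family of subspaces W₁, …, W_n of V such that V = W₁ ⊕ ⋯ ⊕ W_n and, for every i, V_i = ⊕_{j ≠ i} W_j; (b) dim V = Σ_{i=1}^n codim V_i and ∩_{i=1}^n V_i = {0}. -/
/-!
Independence of a family in a complete modular lattice is dual to coindependence: the operations
`W ↦ (⨆ j ≠ i, W j)ᵢ` and `U ↦ (⨅ j ≠ i, U j)ᵢ` are mutually inverse between finite independent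
families with supremum `⊤` and finite coindependent families with infimum `⊥`. For subspaces `U i`
of `V` the latter condition says that the diagonal map `V → ∏ i, V ⧸ U i` is bijective, and in
finite dimension an injective such map is bijective exactly when
`dim V = ∑ i, codim (U i)`.
-/

section Lattice

variable {ι α : Type*} [CompleteLattice α]

/-- Coindependence of an indexed family, the order dual of `iSupIndep`: every member is codisjoint
from the infimum of the others. -/
def iInfIndep (t : ι → α) : Prop :=
  ∀ i, Codisjoint (t i) (⨅ j ≠ i, t j)

theorem iSupIndep_toDual_comp_iff {t : ι → α} :
    iSupIndep (OrderDual.toDual ∘ t) ↔ iInfIndep t :=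
  forall_congr' fun _ => disjoint_toDual_iff

theorem iSup_ne_iInf_ne_le (t : ι → α) (i : ι) : ⨆ j ≠ i, ⨅ k ≠ j, t k ≤ t i :=
  iSup₂_le fun _ hj => iInf₂_le i hj.symm

theorem le_iInf_ne_iSup_ne (t : ι → α) (i : ι) : t i ≤ ⨅ j ≠ i, ⨆ k ≠ j, t k :=
  iSup_ne_iInf_ne_le (α := αᵒᵈ) t i

theorem iSupIndep_iInf_ne {t : ι → α} (ht : ⨅ i, t i = ⊥) :
    iSupIndep fun i => ⨅ j ≠ i, t j := fun i => by
  refine Disjoint.mono_right (iSup_ne_iInf_ne_le t i) ?_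
  rw [disjoint_iff, inf_comm, ← iInf_split_single, ht]

theorem iInfIndep_iSup_ne {t : ι → α} (ht : ⨆ i, t i = ⊤) :
    iInfIndep fun i => ⨆ j ≠ i, t j :=
  iSupIndep_toDual_comp_iff.1 (iSupIndep_iInf_ne (α := αᵒᵈ) ht)

variable [IsModularLattice α]

theorem iSup_inf_biInf_iSup_ne {t : ι → α} (ht : iSupIndep t) (s : Finset ι) :
    (⨆ j, t j) ⊓ ⨅ i ∈ s, ⨆ j ≠ i, t j = ⨆ j ∉ s, t j := by
  classical
  induction s using Finset.induction_on with
  | empty => simp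
  | insert i s hi ih =>
    have remove_i : ⨆ j ∉ s, t j = (⨆ j ∉ insert i s, t j) ⊔ t i := by
      refine le_antisymm (iSup₂_le fun j hj => ?_) (sup_le ?_ (le_iSup₂_of_le i hi le_rfl))
      · obtain rfl | hji := eq_or_ne j i
        · exact le_sup_right
        · exact le_sup_of_le_left (le_iSup₂_of_le j (by simp [hji, hj]) le_rfl)
      · exact biSup_mono fun j hj => mt Finset.mem_insert_of_mem hj
    have le_others : ⨆ j ∉ insert i s, t j ≤ ⨆ j ≠ i, t j :=
      biSup_mono fun j hj hji => hj (hji ▸ Finset.mem_insert_self i s)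
    calc (⨆ j, t j) ⊓ ⨅ k ∈ insert i s, ⨆ j ≠ k, t j
        = ((⨆ j, t j) ⊓ ⨅ k ∈ s, ⨆ j ≠ k, t j) ⊓ ⨆ j ≠ i, t j := by
          rw [Finset.iInf_insert, inf_comm (⨆ j ≠ i, t j), inf_assoc]
      _ = ((⨆ j ∉ insert i s, t j) ⊔ t i) ⊓ ⨆ j ≠ i, t j := by rw [ih, remove_i]
      _ = (⨆ j ∉ insert i s, t j) ⊔ t i ⊓ ⨆ j ≠ i, t j := sup_inf_assoc_of_le _ le_others
      _ = ⨆ j ∉ insert i s, t j := by rw [(ht i).eq_bot, sup_bot_eq]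

variable [Finite ι]

theorem iInf_iSup_ne_eq_bot {t : ι → α} (ht : iSupIndep t) (htop : ⨆ i, t i = ⊤) :
    ⨅ i, ⨆ j ≠ i, t j = ⊥ := by
  have := Fintype.ofFinite ι
  simpa [htop] using iSup_inf_biInf_iSup_ne ht Finset.univ

theorem iSup_iInf_ne_eq_top {t : ι → α} (ht : iInfIndep t) (hbot : ⨅ i, t i = ⊥) :
    ⨆ i, ⨅ j ≠ i, t j = ⊤ :=
  iInf_iSup_ne_eq_bot (α := αᵒᵈ) (iSupIndep_toDual_comp_iff.2 ht) hbot

theorem eq_iInf_ne_iSup_ne {t : ι → α} (ht : iSupIndep t) (htop : ⨆ i, t i = ⊤) :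
    t = fun i => ⨅ j ≠ i, ⨆ k ≠ j, t k :=
  ((iSupIndep_iInf_ne (iInf_iSup_ne_eq_bot ht htop)).le_iff_eq_of_iSup_eq_top htop).1
    (le_iInf_ne_iSup_ne t)

theorem eq_iSup_ne_iInf_ne {t : ι → α} (ht : iInfIndep t) (hbot : ⨅ i, t i = ⊥) :
    t = fun i => ⨆ j ≠ i, ⨅ k ≠ j, t k :=
  eq_iInf_ne_iSup_ne (α := αᵒᵈ) (iSupIndep_toDual_comp_iff.2 ht) hbot

theorem existsUnique_eq_iSup_ne_iff (u : ι → α) :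
    (∃! w : ι → α, (iSupIndep w ∧ ⨆ i, w i = ⊤) ∧ ∀ i, u i = ⨆ j ≠ i, w j) ↔
      iInfIndep u ∧ ⨅ i, u i = ⊥ := by
  constructor
  · rintro ⟨w, ⟨⟨hw, htop⟩, huw⟩, -⟩
    obtain rfl : u = fun i => ⨆ j ≠ i, w j := funext huw
    exact ⟨iInfIndep_iSup_ne htop, iInf_iSup_ne_eq_bot hw htop⟩
  · rintro ⟨hu, hbot⟩
    refine ⟨fun i => ⨅ j ≠ i, u j, ⟨⟨iSupIndep_iInf_ne hbot, iSup_iInf_ne_eq_top hu hbot⟩,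
      congrFun (eq_iSup_ne_iInf_ne hu hbot)⟩, ?_⟩
    rintro w ⟨⟨hw, htop⟩, huw⟩
    simpa only [huw] using eq_iInf_ne_iSup_ne hw htop

end Lattice

section Quotients

variable {ι R M : Type*} [Ring R] [AddCommGroup M] [Module R M]

theorem injective_pi_mkQ_iff (U : ι → Submodule R M) :
    Function.Injective (LinearMap.pi fun i => (U i).mkQ) ↔ ⨅ i, U i = ⊥ := by
  simp only [← LinearMap.ker_eq_bot, LinearMap.ker_pi, Submodule.ker_mkQ]

theorem pi_mkQ_eq_single_iff [DecidableEq ι] (U : ι → Submodule R M) (i : ι) (x w : M) :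
    LinearMap.pi (fun j => (U j).mkQ) w = Pi.single i ((U i).mkQ x) ↔
      x - w ∈ U i ∧ w ∈ ⨅ j ≠ i, U j := by
  rw [Pi.single, Function.eq_update_iff, eq_comm]
  simp only [LinearMap.pi_apply, Submodule.mkQ_apply, Submodule.Quotient.eq, Pi.zero_apply,
    Submodule.Quotient.mk_eq_zero, Submodule.mem_iInf]

theorem surjective_pi_mkQ_iff [Finite ι] (U : ι → Submodule R M) :
    Function.Surjective (LinearMap.pi fun i => (U i).mkQ) ↔ iInfIndep U := by
  classical
  constructor
  · intro hsurj i
    rw [Submodule.codisjoint_iff_exists_add_eq]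
    intro x
    obtain ⟨w, hw⟩ := hsurj (Pi.single i ((U i).mkQ x))
    obtain ⟨hxw, hw⟩ := (pi_mkQ_eq_single_iff U i x w).1 hw
    exact ⟨x - w, w, hxw, hw, sub_add_cancel x w⟩
  · intro hU
    rw [← LinearMap.range_eq_top, eq_top_iff, ← LinearMap.iSup_range_single, iSup_le_iff]
    rintro i _ ⟨y, rfl⟩
    obtain ⟨x, rfl⟩ := (U i).mkQ_surjective y
    obtain ⟨v, w, hv, hw, rfl⟩ := Submodule.codisjoint_iff_exists_add_eq.1 (hU i) x
    exact ⟨w, (pi_mkQ_eq_single_iff U i _ w).2 ⟨by rwa [add_sub_cancel_right], hw⟩⟩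

end Quotients

section FiniteDimensional

variable {ι K V : Type*} [Fintype ι] [DivisionRing K] [AddCommGroup V] [Module K V]
  [FiniteDimensional K V]

theorem finrank_pi_quotient (U : ι → Submodule K V) :
    Module.finrank K (∀ i, V ⧸ U i) = ∑ i, (Module.finrank K V - Module.finrank K (U i)) := by
  simp only [Module.finrank_pi_fintype, Submodule.finrank_quotient]

theorem iInfIndep_iff_finrank_eq_sum {U : ι → Submodule K V} (hU : ⨅ i, U i = ⊥) :
    iInfIndep U ↔
      Module.finrank K V = ∑ i, (Module.finrank K V - Module.finrank K (U i)) := by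
  have hinj := (injective_pi_mkQ_iff U).2 hU
  rw [← surjective_pi_mkQ_iff, ← finrank_pi_quotient]
  exact ⟨fun hsurj => (LinearEquiv.ofBijective _ ⟨hinj, hsurj⟩).finrank_eq,
    fun hdim => (LinearMap.injective_iff_surjective_of_finrank_eq_finrank hdim).1 hinj⟩

theorem stmt_2_general [DecidableEq ι] (U : ι → Submodule K V) :
    (∃! W : ι → Submodule K V, DirectSum.IsInternal W ∧ ∀ i, U i = ⨆ j ≠ i, W j) ↔
      Module.finrank K V = ∑ i, (Module.finrank K V - Module.finrank K (U i)) ∧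
        ⨅ i, U i = ⊥ := by
  simp only [DirectSum.isInternal_submodule_iff_iSupIndep_and_iSup_eq_top]
  rw [existsUnique_eq_iSup_ne_iff]
  exact and_congr_left iInfIndep_iff_finrank_eq_sum

end FiniteDimensional

/-- characterization of Pochhammer-type subspace configurations
(Lemma 4.1 (a) ⇔ (b) of the paper). -/
theorem stmt_2 {V : Type*} [AddCommGroup V] [Module ℂ V] [FiniteDimensional ℂ V]
    {n : ℕ} (Vsub : Fin n → Submodule ℂ V) :
    (∃! W : Fin n → Submodule ℂ V,
        DirectSum.IsInternal W ∧
        ∀ i, Vsub i = ⨆ j ∈ ({i}ᶜ : Set (Fin n)), W j) ↔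
    (Module.finrank ℂ V =
        ∑ i, (Module.finrank ℂ V - Module.finrank ℂ (Vsub i)) ∧
      (⨅ i, Vsub i) = ⊥) :=
  stmt_2_general Vsub
end

section
/- Let m ≥ 1 and, for i = 1, …, m, let f_i ∈ ℂ^m be nonzero vectors; set A_i = I_m − f_i·e_iᵀ, where e_i is the i-th standard basis vector of ℂ^m, and set A = A₁·A₂⋯A_m. Then the following are equivalent: (1) the m×m matrix whose (i,j) entry is e_iᵀ·f_j is invertible; (2) the vectors f₁, …, f_m are linearly independent; (3) I_m − A is invertible. -/
/-!
Let `Pₖ = A₁ ⋯ Aₖ₋₁` for `Aᵢ = 1 - fᵢ φᵢᵀ`. Telescoping gives `1 - Pₖ = ∑_{i < k} (Pᵢ fᵢ) φᵢᵀ`.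
With `F`, `G` the matrices of columns `fₖ`, `Pₖ fₖ` and `Φ` the matrix of rows `φₖᵀ`, the full
product `A` satisfies `1 - A = G Φ`, while applying the identity for `Pₖ` to `fₖ` gives `F = G V`
with `V` the upper unitriangular matrix whose strictly upper part is that of the Gram matrix `Φ F`.
Hence `det (1 - A) = det G * det Φ = det F * det Φ = det (Φ F)`.
-/

open Matrix

theorem one_sub_partialProd_one_sub {R : Type*} [Ring R] {k : ℕ} (a : Fin k → R)
    (j : Fin (k + 1)) :
    1 - Fin.partialProd (fun i => 1 - a i) j =
      ∑ i with i.castSucc < j, Fin.partialProd (fun i => 1 - a i) i.castSucc * a i := by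
  induction j using Fin.induction with
  | zero => simp
  | succ j ih =>
    have filter_succ : Finset.univ.filter (fun i : Fin k => i.castSucc < j.succ) =
        insert j (Finset.univ.filter fun i => i.castSucc < j.castSucc) := by
      ext i
      simp [le_iff_eq_or_lt]
    rw [filter_succ, Finset.sum_insert (by simp), ← ih, Fin.partialProd_succ]
    noncomm_ring

theorem of_dotProduct_eq_mul_transpose {k l n R : Type*} [Fintype n]
    [NonUnitalNonAssocSemiring R] (φ : k → n → R) (f : l → n → R) :
    (of fun i j => φ i ⬝ᵥ f j) = of φ * (of f)ᵀ :=
  rfl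

theorem isUnit_of_dotProduct_iff_linearIndependent {K n : Type*} [Field K] [Fintype n]
    [DecidableEq n] (f : n → n → K) {φ : n → n → K} (hφ : LinearIndependent K φ) :
    IsUnit (of fun i j => φ i ⬝ᵥ f j) ↔ LinearIndependent K f := by
  have isUnit_φ : IsUnit (of φ) := linearIndependent_rows_iff_isUnit.mp hφ
  rw [of_dotProduct_eq_mul_transpose, isUnit_φ.mul_left_iff, isUnit_transpose]
  exact linearIndependent_rows_iff_isUnit.symm

section StrictUpperPart

variable {ι R : Type*} [LinearOrder ι]

/-- The part of a square matrix strictly above the diagonal, with zeros elsewhere. Applied to the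
Gram matrix it collects the coefficients `φᵢᵀ fₖ`, `i < k`. -/
def strictUpperPart [Zero R] (M : Matrix ι ι R) : Matrix ι ι R :=
  of fun i j => if i < j then M i j else 0

theorem det_one_add_strictUpperPart [Fintype ι] [CommRing R] (M : Matrix ι ι R) :
    (1 + strictUpperPart M).det = 1 := by
  have isUpperTriangular : (1 + strictUpperPart M).IsUpperTriangular := by
    intro i j (hji : j < i)
    simp [strictUpperPart, hji.ne', hji.not_gt]
  rw [det_of_isUpperTriangular isUpperTriangular]
  simp [strictUpperPart]

end StrictUpperPart

/-- The matrix `1 - f φᵀ`. It is a pseudo-reflection when `f` and `φ` are nonzero; the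
standard form is the case where `φ` is a standard basis vector. -/
def pseudoReflection {n R : Type*} [DecidableEq n] [Ring R] (f φ : n → R) : Matrix n n R :=
  1 - vecMulVec f φ

namespace pseudoReflection

section Ring

variable {n R : Type*} [Fintype n] [DecidableEq n] [Ring R] {k : ℕ} (f φ : Fin k → n → R)

/-- The vectors `A₁ ⋯ Aᵢ₋₁ fᵢ`, where `Aᵢ` is the pseudo-reflection of `fᵢ` and `φᵢ`: the
coefficients of the `φᵢᵀ` in the telescoped form of `1 - A₁ ⋯ Aₖ`. -/
def transportedVector (i : Fin k) : n → R :=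
  Fin.partialProd (fun i => pseudoReflection (f i) (φ i)) i.castSucc *ᵥ f i

theorem one_sub_partialProd (j : Fin (k + 1)) :
    1 - Fin.partialProd (fun i => pseudoReflection (f i) (φ i)) j =
      ∑ i with i.castSucc < j, vecMulVec (transportedVector f φ i) (φ i) := by
  simp only [transportedVector, ← mul_vecMulVec]
  exact one_sub_partialProd_one_sub _ j

theorem one_sub_prod_eq_mul :
    1 - (List.ofFn fun i => pseudoReflection (f i) (φ i)).prod =
      (of (transportedVector f φ))ᵀ * of φ :=
  calc 1 - (List.ofFn fun i => pseudoReflection (f i) (φ i)).prod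
      = 1 - Fin.partialProd (fun i => pseudoReflection (f i) (φ i)) (Fin.last k) := by
        rw [Fin.partialProd, Fin.val_last, List.take_of_length_le List.length_ofFn.le]
    _ = ∑ i, vecMulVec (transportedVector f φ i) (φ i) := by
        simp only [one_sub_partialProd, Fin.castSucc_lt_last, Finset.filter_true]
    _ = (of (transportedVector f φ))ᵀ * of φ := by
        ext r s
        simp only [Matrix.sum_apply, vecMulVec_apply, mul_apply, transpose_apply, of_apply]

theorem eq_transportedVector_add_sum (j : Fin k) :
    f j = transportedVector f φ j +
      ∑ i with i < j, MulOpposite.op (φ i ⬝ᵥ f j) • transportedVector f φ i := by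
  have sub_eq : f j - transportedVector f φ j =
      (1 - Fin.partialProd (fun i => pseudoReflection (f i) (φ i)) j.castSucc) *ᵥ f j := by
    rw [sub_mulVec, one_mulVec, transportedVector]
  rw [← sub_eq_iff_eq_add', sub_eq, one_sub_partialProd, sum_mulVec]
  simp only [Fin.castSucc_lt_castSucc_iff, vecMulVec_mulVec]

theorem transpose_eq_mul_one_add_strictUpperPart :
    (of f)ᵀ =
      (of (transportedVector f φ))ᵀ * (1 + strictUpperPart (of fun i j => φ i ⬝ᵥ f j)) := by
  ext r j
  rw [Matrix.mul_add, Matrix.mul_one]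
  simpa [strictUpperPart, mul_apply, ← Finset.sum_filter] using
    congrFun (eq_transportedVector_add_sum f φ j) r

end Ring

section CommRing

variable {R : Type*} [CommRing R] {m : ℕ} (f φ : Fin m → Fin m → R)

theorem det_one_sub_prod :
    (1 - (List.ofFn fun i => pseudoReflection (f i) (φ i)).prod).det =
      (of fun i j => φ i ⬝ᵥ f j).det := by
  have det_transported : (of f)ᵀ.det = (of (transportedVector f φ))ᵀ.det := by
    rw [transpose_eq_mul_one_add_strictUpperPart f φ, det_mul, det_one_add_strictUpperPart,
      mul_one]
  rw [one_sub_prod_eq_mul, of_dotProduct_eq_mul_transpose, det_mul, det_mul, det_transported,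
    mul_comm]

theorem isUnit_one_sub_prod_iff :
    IsUnit (1 - (List.ofFn fun i => pseudoReflection (f i) (φ i)).prod) ↔
      IsUnit (of fun i j => φ i ⬝ᵥ f j) := by
  rw [isUnit_iff_isUnit_det, det_one_sub_prod, ← isUnit_iff_isUnit_det]

end CommRing

end pseudoReflection

theorem stmt_6_general {K : Type*} [Field K] {m : ℕ} (f : Fin m → Fin m → K)
    {φ : Fin m → Fin m → K} (hφ : LinearIndependent K φ) :
    (IsUnit (of fun i j => φ i ⬝ᵥ f j) ↔ LinearIndependent K f) ∧
    (LinearIndependent K f ↔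
      IsUnit (1 - (List.ofFn fun i => pseudoReflection (f i) (φ i)).prod)) :=
  have gram_iff := isUnit_of_dotProduct_iff_linearIndependent f hφ
  ⟨gram_iff, gram_iff.symm.trans (pseudoReflection.isUnit_one_sub_prod_iff f φ).symm⟩

/-- for pseudo-reflections in standard form `A_i = I − f_i·e_iᵀ`,
invertibility of the Gram-type matrix `[e_iᵀ f_j]`, linear independence of the `f_i`,
and invertibility of `I − A₁⋯A_m` are equivalent. -/
theorem stmt_6 {m : ℕ} (hm : 1 ≤ m) (f : Fin m → (Fin m → ℂ)) (hf : ∀ i, f i ≠ 0) :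
    let A : Fin m → Matrix (Fin m) (Fin m) ℂ :=
      fun i => 1 - Matrix.vecMulVec (f i) (Pi.single i 1)
    (IsUnit (Matrix.of fun i j : Fin m => f j i) ↔ LinearIndependent ℂ f) ∧
    (LinearIndependent ℂ f ↔
      IsUnit ((1 : Matrix (Fin m) (Fin m) ℂ) - (List.ofFn A).prod)) := by
  simpa only [single_one_dotProduct, pseudoReflection] using
    stmt_6_general f (Pi.linearIndependent_single_one (Fin m) ℂ)
end

section
/- Let k ≥ 1, ℓ ≥ 2 and ν ≥ 1 be integers, and let m₁ ≥ m₂ ≥ … ≥ m_ν be integers with 1 ≤ m_i ≤ ℓ for all i, Σ_{i=1}^ν m_i = kℓ and Σ_{i=1}^ν m_i² = kℓ² − 2ℓ + 2. Then ν = k + 1, m₁ = … = m_{k−1} = ℓ, m_k = ℓ − 1 and m_{k+1} = 1. -/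
/-!
A multiplicity `t` contributes `t * (ℓ - t)` to `ℓ * ∑ mᵢ - ∑ mᵢ² = 2 * (ℓ - 1)`. This is `0` for
`t = ℓ` and at least `ℓ - 1` for `1 ≤ t < ℓ`, so at most two multiplicities are smaller than `ℓ`.
Their sum is divisible by `ℓ`, which excludes a single one; if there are two, both contributions
are exactly `ℓ - 1` and they add up to `ℓ`, so they are `ℓ - 1` and `1`.
-/

theorem mul_sub_eq_sub_one_add {t ℓ : ℕ} (hpos : 0 < t) (hlt : t < ℓ) :
    t * (ℓ - t) = (ℓ - 1) + (t - 1) * (ℓ - t - 1) := by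
  obtain ⟨a, rfl⟩ := Nat.exists_eq_add_of_le' hpos
  obtain ⟨b, rfl⟩ := Nat.exists_eq_add_of_lt hlt
  rw [show a + 1 + b + 1 - (a + 1) = b + 1 by lia]
  simp only [Nat.add_sub_cancel]
  ring

theorem sub_one_le_mul_sub {t ℓ : ℕ} (hpos : 0 < t) (hlt : t < ℓ) : ℓ - 1 ≤ t * (ℓ - t) :=
  mul_sub_eq_sub_one_add hpos hlt ▸ Nat.le_add_right _ _

theorem mul_sub_eq_sub_one_iff {t ℓ : ℕ} (hpos : 0 < t) (hlt : t < ℓ) :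
    t * (ℓ - t) = ℓ - 1 ↔ t = 1 ∨ t = ℓ - 1 := by
  rw [mul_sub_eq_sub_one_add hpos hlt, Nat.add_eq_left, mul_eq_zero]
  lia

theorem sum_map_mul_sub_add_sum_map_sq {s : Multiset ℕ} {ℓ : ℕ} (hle : ∀ t ∈ s, t ≤ ℓ) :
    (s.map fun t ↦ t * (ℓ - t)).sum + (s.map (· ^ 2)).sum = s.sum * ℓ :=
  calc
    _ = (s.map fun t ↦ t * (ℓ - t) + t ^ 2).sum := Multiset.sum_map_add.symm
    _ = (s.map fun t ↦ t * ℓ).sum := by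
      refine congrArg Multiset.sum (Multiset.map_congr rfl fun t ht ↦ ?_)
      rw [sq, ← mul_add, Nat.sub_add_cancel (hle t ht)]
    _ = s.sum * ℓ := by rw [Multiset.sum_map_mul_right, Multiset.map_id']

theorem card_mul_sub_one_le_sum_map_mul_sub {s : Multiset ℕ} {ℓ : ℕ}
    (hpos : ∀ t ∈ s, 0 < t) (hlt : ∀ t ∈ s, t < ℓ) :
    s.card * (ℓ - 1) ≤ (s.map fun t ↦ t * (ℓ - t)).sum := by
  simpa using Multiset.card_nsmul_le_sum (s := s.map fun t ↦ t * (ℓ - t)) (a := ℓ - 1)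
    (by simpa using fun t ht ↦ sub_one_le_mul_sub (hpos t ht) (hlt t ht))

theorem pair_eq_of_dvd_add_of_sum_mul_sub_eq {a b ℓ : ℕ} (ha : 0 < a) (haℓ : a < ℓ)
    (hb : 0 < b) (hbℓ : b < ℓ) (hdvd : ℓ ∣ a + b)
    (hsum : a * (ℓ - a) + b * (ℓ - b) = 2 * (ℓ - 1)) :
    ({a, b} : Multiset ℕ) = {ℓ - 1, 1} := by
  have hadd : a + b = ℓ := Nat.eq_of_dvd_of_lt_two_mul (by lia) hdvd (by lia)
  have hmin : a * (ℓ - a) = ℓ - 1 := by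
    have := sub_one_le_mul_sub ha haℓ
    have := sub_one_le_mul_sub hb hbℓ
    lia
  obtain rfl : b = ℓ - a := by lia
  rcases (mul_sub_eq_sub_one_iff ha haℓ).1 hmin with rfl | rfl
  · exact Multiset.pair_comm _ _
  · rw [show ℓ - (ℓ - 1) = 1 by lia]

theorem eq_pair_of_dvd_sum_of_sum_map_mul_sub_eq {s : Multiset ℕ} {ℓ : ℕ} (hℓ : 2 ≤ ℓ)
    (hpos : ∀ t ∈ s, 0 < t) (hlt : ∀ t ∈ s, t < ℓ) (hdvd : ℓ ∣ s.sum)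
    (hsum : (s.map fun t ↦ t * (ℓ - t)).sum = 2 * (ℓ - 1)) :
    s = {ℓ - 1, 1} := by
  have hcard : s.card ≤ 2 :=
    Nat.le_of_mul_le_mul_right (hsum ▸ card_mul_sub_one_le_sum_map_mul_sub hpos hlt) (by lia)
  interval_cases hs : s.card
  · obtain rfl := Multiset.card_eq_zero.1 hs
    simp only [Multiset.map_zero, Multiset.sum_zero] at hsum
    lia
  · obtain ⟨a, rfl⟩ := Multiset.card_eq_one.1 hs
    simp only [Multiset.mem_singleton, forall_eq, Multiset.sum_singleton] at hpos hlt hdvd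
    exact absurd hdvd (Nat.not_dvd_of_pos_of_lt hpos hlt)
  · obtain ⟨a, b, rfl⟩ := Multiset.card_eq_two.1 hs
    exact pair_eq_of_dvd_add_of_sum_mul_sub_eq (hpos a (by simp)) (hlt a (by simp))
      (hpos b (by simp)) (hlt b (by simp)) (by simpa using hdvd) (by simpa using hsum)

theorem eq_replicate_add_pair_of_sum_map_mul_sub_eq {s : Multiset ℕ} {k ℓ : ℕ} (hℓ : 2 ≤ ℓ)
    (hpos : ∀ t ∈ s, 0 < t) (hle : ∀ t ∈ s, t ≤ ℓ) (hsum : s.sum = (k + 1) * ℓ)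
    (hdef : (s.map fun t ↦ t * (ℓ - t)).sum = 2 * (ℓ - 1)) :
    s = Multiset.replicate k ℓ + {ℓ - 1, 1} := by
  obtain ⟨n, d, rfl, hd⟩ : ∃ n d, s = Multiset.replicate n ℓ + d ∧ ℓ ∉ d :=
    ⟨s.count ℓ, s.filter (ℓ ≠ ·),
      by rw [← Multiset.filter_eq, Multiset.filter_add_not], by simp⟩
  simp only [Multiset.sum_add, Multiset.sum_replicate, smul_eq_mul] at hsum
  have hpair : d = {ℓ - 1, 1} := by
    have hmem {t} (ht : t ∈ d) : t ∈ Multiset.replicate n ℓ + d := Multiset.mem_add.2 (.inr ht)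
    have hdvd : ℓ ∣ d.sum :=
      (Nat.dvd_add_right (dvd_mul_left ℓ n)).1 (hsum ▸ dvd_mul_left ℓ _)
    exact eq_pair_of_dvd_sum_of_sum_map_mul_sub_eq hℓ (fun t ht ↦ hpos t (hmem ht))
      (fun t ht ↦ (hle t (hmem ht)).lt_of_ne (ne_of_mem_of_not_mem ht hd)) hdvd
      (by simpa using hdef)
  have hn : n = k := by
    rw [hpair, Multiset.sum_pair, Nat.sub_add_cancel (by lia), ← Nat.succ_mul] at hsum
    exact Nat.succ.inj (Nat.eq_of_mul_eq_mul_right (by lia) hsum)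
  rw [hpair, hn]

theorem eq_replicate_add_pair_of_sum_map_sq_eq {s : Multiset ℕ} {k ℓ : ℕ} (hℓ : 2 ≤ ℓ)
    (hpos : ∀ t ∈ s, 0 < t) (hle : ∀ t ∈ s, t ≤ ℓ) (hsum : s.sum = (k + 1) * ℓ)
    (hsq : (s.map (· ^ 2)).sum = (k + 1) * ℓ ^ 2 - 2 * ℓ + 2) :
    s = Multiset.replicate k ℓ + {ℓ - 1, 1} := by
  refine eq_replicate_add_pair_of_sum_map_mul_sub_eq hℓ hpos hle hsum ?_
  have hadd := sum_map_mul_sub_add_sum_map_sq hle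
  have hno_truncation : 2 * ℓ ≤ (k + 1) * ℓ ^ 2 := by nlinarith
  rw [hsum, hsq, mul_assoc, ← sq] at hadd
  lia

theorem ofFn_eq_of_antitone_of_map_eq {α : Type*} [PartialOrder α] {n : ℕ} {f : Fin n → α}
    {l : List α} (hf : Antitone f) (hl : l.SortedGE) (h : Finset.univ.val.map f = l) :
    List.ofFn f = l :=
  (Multiset.coe_eq_coe.1 ((Fin.univ_val_map f).symm.trans h)).eq_of_sortedGE hf.sortedGE_ofFn hl

/-- combinatorial lemma for turbines without shaft:
if ℓ ≥ m₁ ≥ ⋯ ≥ m_ν ≥ 1, Σ m_i = kℓ and Σ m_i² = kℓ² − 2ℓ + 2, then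
ν = k + 1, m₁ = ⋯ = m_{k−1} = ℓ, m_k = ℓ − 1 and m_{k+1} = 1. -/
theorem stmt_9 {k ℓ ν : ℕ} (hk : 1 ≤ k) (hℓ : 2 ≤ ℓ) (hν : 1 ≤ ν)
    (m : Fin ν → ℕ) (hanti : Antitone m)
    (hlb : ∀ i, 1 ≤ m i) (hub : ∀ i, m i ≤ ℓ)
    (hsum : ∑ i, m i = k * ℓ)
    (hsq : ∑ i, (m i) ^ 2 = k * ℓ ^ 2 - 2 * ℓ + 2) :
    ν = k + 1 ∧ ∀ i : Fin ν,
      ((i : ℕ) < k - 1 → m i = ℓ) ∧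
      ((i : ℕ) = k - 1 → m i = ℓ - 1) ∧
      ((i : ℕ) = k → m i = 1) := by
  obtain ⟨k, rfl⟩ := Nat.exists_eq_add_of_le' hk
  have hmap : Finset.univ.val.map m = Multiset.replicate k ℓ + {ℓ - 1, 1} :=
    eq_replicate_add_pair_of_sum_map_sq_eq hℓ (Multiset.forall_mem_map_iff.2 fun i _ ↦ hlb i)
      (Multiset.forall_mem_map_iff.2 fun i _ ↦ hub i) hsum (by rwa [Multiset.map_map])
  have hsorted : (List.replicate k ℓ ++ [ℓ - 1, 1]).SortedGE := by grind
  have hlist : List.ofFn m = List.replicate k ℓ ++ [ℓ - 1, 1] :=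
    ofFn_eq_of_antitone_of_map_eq hanti hsorted hmap
  obtain rfl : ν = k + 2 := by simpa using congrArg List.length hlist
  have hget (i : Fin (k + 2)) : some (m i) = (List.replicate k ℓ ++ [ℓ - 1, 1])[(i : ℕ)]? := by
    rw [← hlist, List.getElem?_ofFn, dif_pos i.isLt]
  refine ⟨rfl, fun i ↦ ?_⟩
  rw [Nat.add_sub_cancel]
  refine ⟨fun hi ↦ ?_, fun hi ↦ ?_, fun hi ↦ ?_⟩ <;>
    simpa [List.getElem?_append, hi] using hget i
end

section
/- Let k ≥ 1, ℓ ≥ 1, m = kℓ, and let c be a nonzero complex number. Let W ∈ GL_m(ℂ) satisfy W^k = c·I_m and let X₁, …, X_ℓ ∈ GL_m(ℂ) be pseudo-reflections. For j = 0, …, k−1 and i = 1, …, ℓ set g_{j,i} = W^{k−1−j}·X_i·W^{−(k−1−j)}. If ∩_{j,i} ker(g_{j,i} − I_m) = {0}, then W is diagonalizable and each of the k distinct k-th roots of c is an eigenvalue of W of multiplicity exactly ℓ; equivalently, W is conjugate in GL_m(ℂ) to the m×m block matrix with k×k blocks of size ℓ×ℓ, having identity blocks I_ℓ on the superdiagonal,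 the block c·I_ℓ in the lower-left corner, and zero blocks elsewhere. -/
/-!
Write `X i - 1 = u i ⊗ v i` and consider the `kℓ` row vectors `v i * W ^ (-(k - 1 - j))`. Right
multiplication by `W` sends the row `(j, i)` to the row `(j + 1, i)`, and sends `(k - 1, i)` to
`v i * W = c • v i * W ^ (-(k - 1))`, that is, to `c` times the row `(0, i)`: on these rows `W` acts
through the block cyclic matrix. A vector killed by the row `(j, i)` is fixed by the conjugate
`W ^ (k - 1 - j) * X i * W ^ (-(k - 1 - j))`, so the absence of a common fixed vector makes the
square matrix of these rows invertible.
-/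

open Matrix

section BlockCyclic

variable {R n ι : Type*} [NonAssocSemiring R] [DecidableEq ι] {k : ℕ}

/-- The block matrix with `k × k` blocks of size `ι × ι` having identity blocks on the
superdiagonal, the block `c • 1` in the lower-left corner and zeros elsewhere. A row or column is
indexed by the position of its block, then its position in the block. -/
def blockCyclic (k : ℕ) (ι : Type*) [DecidableEq ι] (c : R) :
    Matrix (Fin k × ι) (Fin k × ι) R :=
  Matrix.of fun p q =>
    if (q.1 : ℕ) = (p.1 : ℕ) + 1 ∧ p.2 = q.2 then 1
    else if (p.1 : ℕ) = k - 1 ∧ (q.1 : ℕ) = 0 ∧ p.2 = q.2 then c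
    else 0

theorem blockCyclic_row_of_lt (c : R) {j : Fin k} (hj : (j : ℕ) + 1 < k) (i : ι) :
    blockCyclic k ι c (j, i) = Pi.single (⟨j + 1, hj⟩, i) 1 := by
  funext ⟨j', i'⟩
  have hlast : (j : ℕ) ≠ k - 1 := by omega
  simp [blockCyclic, Pi.single_apply, Fin.ext_iff, hlast, eq_comm]

theorem blockCyclic_row_last (c : R) {j : Fin k} (hj : (j : ℕ) + 1 = k) (i : ι) :
    blockCyclic k ι c (j, i) = Pi.single (⟨0, j.pos⟩, i) c := by
  funext ⟨j', i'⟩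
  have hlast : (j : ℕ) = k - 1 := by omega
  have hnosucc : (j' : ℕ) ≠ k - 1 + 1 := by omega
  simp [blockCyclic, Pi.single_apply, Fin.ext_iff, hlast, hnosucc, eq_comm]

variable [Fintype ι]

theorem blockCyclic_mul_row_of_lt (c : R) (M : Matrix (Fin k × ι) n R) {j : Fin k}
    (hj : (j : ℕ) + 1 < k) (i : ι) :
    (blockCyclic k ι c * M) (j, i) = M (⟨j + 1, hj⟩, i) := by
  rw [mul_apply_eq_vecMul, blockCyclic_row_of_lt c hj, single_one_vecMul, row_def]

theorem blockCyclic_mul_row_last (c : R) (M : Matrix (Fin k × ι) n R) {j : Fin k}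
    (hj : (j : ℕ) + 1 = k) (i : ι) :
    (blockCyclic k ι c * M) (j, i) = c • M (⟨0, j.pos⟩, i) := by
  rw [mul_apply_eq_vecMul, blockCyclic_row_last c hj, single_vecMul, row_def]

end BlockCyclic

section PastObservability

variable {R n ι : Type*} [CommRing R] [Fintype n] [DecidableEq n] {k : ℕ}

/-- The observability matrix of the pair `(A, C)` over the times `-(k - 1), …, -1, 0`: its
`(j, i)`-th row is the `i`-th row of `C * A ^ (-(k - 1 - j))`. Inverse powers are used so that its
rows are the functionals cutting out the fixed spaces of conjugates by powers of `A`. -/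
noncomputable def pastObservability (k : ℕ) (A : Matrix n n R) (C : Matrix ι n R) :
    Matrix (Fin k × ι) n R :=
  Matrix.of fun p => (C * (A ^ (k - 1 - (p.1 : ℕ)))⁻¹) p.2

theorem pastObservability_mulVec (A : Matrix n n R) (C : Matrix ι n R) (x : n → R) (j : Fin k)
    (i : ι) :
    (pastObservability k A C *ᵥ x) (j, i) = C i ⬝ᵥ (A ^ (k - 1 - (j : ℕ)))⁻¹ *ᵥ x :=
  congrFun (mulVec_mulVec x C _).symm i

theorem pastObservability_mul_row (A : Matrix n n R) (C : Matrix ι n R) (j : Fin k) (i : ι) :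
    (pastObservability k A C * A) (j, i) = (C * ((A ^ (k - 1 - (j : ℕ)))⁻¹ * A)) i := by
  rw [← Matrix.mul_assoc]
  rfl

theorem inv_pow_succ_mul_self {A : Matrix n n R} (hA : IsUnit A) (s : ℕ) :
    (A ^ (s + 1))⁻¹ * A = (A ^ s)⁻¹ := by
  have hdet : IsUnit A.det := (isUnit_iff_isUnit_det A).1 hA
  rw [pow_succ', Matrix.mul_inv_rev, nonsing_inv_mul_cancel_right _ _ hdet]

theorem smul_inv_pow_eq_self {A : Matrix n n R} (hA : IsUnit A) {s : ℕ} {c : R}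
    (hAc : A ^ (s + 1) = c • (1 : Matrix n n R)) : c • (A ^ s)⁻¹ = A := by
  have hdet : IsUnit (A ^ s).det := (isUnit_iff_isUnit_det _).1 (hA.pow s)
  calc c • (A ^ s)⁻¹ = A ^ (s + 1) * (A ^ s)⁻¹ := by rw [hAc, smul_mul, Matrix.one_mul]
    _ = A := by rw [pow_succ', mul_nonsing_inv_cancel_right _ _ hdet]

theorem pastObservability_mul_eq_blockCyclic_mul [Fintype ι] [DecidableEq ι] {A : Matrix n n R}
    (hA : IsUnit A) {c : R} (hAc : A ^ k = c • (1 : Matrix n n R)) (C : Matrix ι n R) :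
    pastObservability k A C * A = blockCyclic k ι c * pastObservability k A C := by
  funext ⟨j, i⟩
  rw [pastObservability_mul_row]
  rcases (Nat.succ_le_of_lt j.isLt).lt_or_eq with hj | hj
  · have hexp : k - 1 - (j : ℕ) = k - 1 - (j + 1) + 1 := by omega
    rw [blockCyclic_mul_row_of_lt c _ hj, hexp, inv_pow_succ_mul_self hA]
    rfl
  · have hexp : k - 1 - (j : ℕ) = 0 := by omega
    have hAc' : A ^ (k - 1 + 1) = c • (1 : Matrix n n R) := by
      rwa [Nat.sub_add_cancel j.pos]
    have hA_eq : c • (A ^ (k - 1))⁻¹ = A := smul_inv_pow_eq_self hA hAc'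
    rw [blockCyclic_mul_row_last c _ hj, hexp, pow_zero, inv_one, Matrix.one_mul]
    calc (C * A) i = (C * (c • (A ^ (k - 1))⁻¹)) i := by rw [hA_eq]
      _ = c • (C * (A ^ (k - 1))⁻¹) i := by rw [Matrix.mul_smul]; rfl

end PastObservability

theorem conj_sub_one_mulVec_eq_zero {R n : Type*} [CommRing R] [Fintype n] [DecidableEq n]
    {S X : Matrix n n R} (hS : IsUnit S) {u v x : n → R} (hX : X - 1 = vecMulVec u v)
    (hx : v ⬝ᵥ S⁻¹ *ᵥ x = 0) : (S * X * S⁻¹ - 1) *ᵥ x = 0 := by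
  have hconj : S * X * S⁻¹ - 1 = S * (X - 1) * S⁻¹ := by
    rw [Matrix.mul_sub, Matrix.sub_mul, Matrix.mul_one,
      mul_nonsing_inv _ ((isUnit_iff_isUnit_det S).1 hS)]
  rw [hconj, hX, ← mulVec_mulVec, ← mulVec_mulVec, vecMulVec_mulVec, hx, MulOpposite.op_zero,
    zero_smul, mulVec_zero]

section Field

variable {K m n ι : Type*} [Field K] [Fintype n]

theorem exists_eq_vecMulVec_of_rank_le_one {M : Matrix m n K} (hM : M.rank ≤ 1) :
    ∃ (u : m → K) (v : n → K), M = vecMulVec u v := by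
  classical
  obtain ⟨u, hu⟩ := finrank_le_one_iff.1 hM
  choose v hv using fun j => hu ⟨M.col j, Pi.single j 1, mulVec_single_one M j⟩
  refine ⟨u, v, ext fun i j => ?_⟩
  have hcol : v j • (u : m → K) = M.col j := congrArg Subtype.val (hv j)
  calc M i j = (v j • (u : m → K)) i := (congrFun hcol i).symm
    _ = vecMulVec u v i j := mul_comm _ _

variable [DecidableEq n]

theorem exists_eq_conj_reindex_of_mul_eq_mul [Fintype m] (e : m ≃ n) {A : Matrix n n K}
    {B : Matrix m m K} {Q : Matrix m n K} (hQ : LinearMap.ker Q.mulVecLin = ⊥)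
    (hQA : Q * A = B * Q) :
    ∃ P : Matrix n n K, IsUnit P ∧ A = P * reindex e e B * P⁻¹ := by
  set T : Matrix n n K := Q.submatrix e.symm id
  have hT : IsUnit T := by
    refine mulVec_injective_iff_isUnit.1 fun x y hxy => LinearMap.ker_eq_bot.1 hQ ?_
    exact e.symm.surjective.injective_comp_right hxy
  have hTA : T * A = reindex e e B * T := by
    calc T * A = (Q * A).submatrix e.symm id := rfl
      _ = reindex e e B * T := by rw [hQA, reindex_apply, submatrix_mul_equiv]
  have hdet : IsUnit T.det := (isUnit_iff_isUnit_det T).1 hT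
  refine ⟨T⁻¹, isUnit_nonsing_inv_iff.2 hT, ?_⟩
  rw [nonsing_inv_nonsing_inv T hdet, Matrix.mul_assoc, ← hTA, nonsing_inv_mul_cancel_left _ _ hdet]

theorem stmt_10_general [Finite ι] [DecidableEq ι] {k : ℕ} (e : Fin k × ι ≃ n) {c : K}
    {W : Matrix n n K} (hW : IsUnit W) (hWk : W ^ k = c • (1 : Matrix n n K))
    {X : ι → Matrix n n K} (hX : ∀ i, (X i - 1).rank ≤ 1)
    (hker : (⨅ (j : Fin k) (i : ι), LinearMap.ker
      ((W ^ (k - 1 - (j : ℕ)) * X i * (W ^ (k - 1 - (j : ℕ)))⁻¹ - 1).mulVecLin)) = ⊥) :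
    ∃ P : Matrix n n K, IsUnit P ∧ W = P * reindex e e (blockCyclic k ι c) * P⁻¹ := by
  cases nonempty_fintype ι
  choose u v huv using fun i => exists_eq_vecMulVec_of_rank_le_one (hX i)
  refine exists_eq_conj_reindex_of_mul_eq_mul e (Q := pastObservability k W (Matrix.of v)) ?_
    (pastObservability_mul_eq_blockCyclic_mul hW hWk _)
  rw [eq_bot_iff, ← hker]
  intro x hx
  simp only [Submodule.mem_iInf, LinearMap.mem_ker, mulVecLin_apply] at hx ⊢
  intro j i
  refine conj_sub_one_mulVec_eq_zero (hW.pow _) (huv i) ?_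
  exact (pastObservability_mulVec W (Matrix.of v) x j i).symm.trans (congrFun hx (j, i))

end Field

/-- linear-algebra core of the lemma on turbines without shaft:
if W^k = c·I, the g_{j,i} = W^{k−1−j}·X_i·W^{−(k−1−j)} are conjugates of
pseudo-reflections with trivial common fixed space, then W is conjugate to the
block cyclic matrix with identity blocks on the superdiagonal and c·I_ℓ in the
lower-left corner. -/
theorem stmt_10 {k ℓ : ℕ} (hk : 1 ≤ k) (hℓ : 1 ≤ ℓ) (c : ℂ) (hc : c ≠ 0)
    (W : Matrix (Fin (k * ℓ)) (Fin (k * ℓ)) ℂ) (hWu : IsUnit W)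
    (hWk : W ^ k = c • (1 : Matrix (Fin (k * ℓ)) (Fin (k * ℓ)) ℂ))
    (X : Fin ℓ → Matrix (Fin (k * ℓ)) (Fin (k * ℓ)) ℂ)
    (hX : ∀ i, IsUnit (X i) ∧ (X i - 1).rank = 1)
    (hker : (⨅ (j : Fin k) (i : Fin ℓ),
        LinearMap.ker
          ((W ^ (k - 1 - (j : ℕ)) * X i * (W ^ (k - 1 - (j : ℕ)))⁻¹ - 1).mulVecLin)) = ⊥) :
    ∃ P : Matrix (Fin (k * ℓ)) (Fin (k * ℓ)) ℂ, IsUnit P ∧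
      W = P *
        (Matrix.reindex finProdFinEquiv finProdFinEquiv
          (Matrix.of fun p q : Fin k × Fin ℓ =>
            if (q.1 : ℕ) = (p.1 : ℕ) + 1 ∧ p.2 = q.2 then (1 : ℂ)
            else if (p.1 : ℕ) = k - 1 ∧ (q.1 : ℕ) = 0 ∧ p.2 = q.2 then c
            else 0)) * P⁻¹ :=
  stmt_10_general finProdFinEquiv hWu hWk (fun i => (hX i).2.le) hker
end

section
/- Let k ≥ 1, let ε be a nonzero complex number, let r be an integer, and let λ₁, ξ₁, …, ξ_k be nonzero complex numbers such that: λ₁ ≠ 1; the ξ_j are pairwise distinct; ξ_j^k ≠ ε^r for all j; ξ₁ + ⋯ + ξ_k ≠ 0; and λ₁·ξ₁⋯ξ_k = (−1)^{k−1}·ε^r. Then there exist matrices Ω₀, A₁ ∈ GL_k(ℂ) such that: (1) Ω₀^k = ε^r·I_k and the eigenvalues of Ω₀ are exactly the k distinct k-th roots of ε^r; (2) A₁ is a pseudo-reflection with special eigenvalue λ₁; (3) A₁^{−1}·Ω₀ is diagonalizable with eigenvalues ξ₁, …, ξ_k; (4) the family {Ω₀, A₁} acts irreducibly on ℂ^k.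 -/
/-!
Levelt's construction of hypergeometric groups. If `ξ` has distinct entries, then by Lagrange
interpolation every monic polynomial `p` of the right degree is the characteristic polynomial of a
rank one perturbation `diagonal ξ - 1 ⊗ w`: evaluating at `ξ j` determines `w j`, which vanishes
only if `p (ξ j) = 0`. Factoring out `diagonal ξ` on the right leaves a pseudo-reflection `A`.
A subspace stable under `A` and `A * diagonal ξ` is stable under `diagonal ξ`, hence spanned by
coordinate vectors, and since no `w j` vanishes `A` links each coordinate vector to all the others.
The theorem is the case `p = X ^ k - C (ε ^ r)`; the Fuchs relation identifies `det A`.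
-/

section

open Matrix Polynomial Finset

section CharacteristicPolynomial

variable {ι R : Type*} [Fintype ι] [DecidableEq ι] [CommRing R]

lemma det_diagonal_add_vecMulVec_of_apply_eq_zero (d u v : ι → R) {j : ι} (hj : d j = 0) :
    (diagonal d + vecMulVec u v).det = u j * v j * ∏ i ∈ univ.erase j, d i := by
  have row_j : diagonal d + vecMulVec u v =
      (diagonal d + vecMulVec u v).updateRow j (u j • v) := by
    ext a b
    obtain rfl | ha := eq_or_ne a j
    · simp [vecMulVec_apply, diagonal_apply, hj]
    · rw [updateRow_ne ha]
  have clear_rows : ((diagonal d + vecMulVec u v).updateRow j v).det =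
      ((diagonal d).updateRow j v).det := by
    refine det_eq_of_forall_row_eq_smul_add_const (fun i ↦ if i = j then 0 else u i) j
      (by simp) fun a b ↦ ?_
    by_cases ha : a = j <;> simp [ha, vecMulVec_apply, updateRow_apply]
  rw [row_j, det_updateRow_smul, clear_rows, ← cramer_transpose_apply, diagonal_transpose,
    cramer_eq_adjugate_mulVec, adjugate_diagonal, mulVec_diagonal]
  ring

lemma eval_charpoly_diagonal_sub_vecMulVec (ξ u v : ι → R) (j : ι) :
    (diagonal ξ - vecMulVec u v).charpoly.eval (ξ j) =
      u j * v j * ∏ i ∈ univ.erase j, (ξ j - ξ i) := by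
  have hchar : scalar ι (ξ j) - (diagonal ξ - vecMulVec u v) =
      diagonal (fun i ↦ ξ j - ξ i) + vecMulVec u v := by
    rw [scalar_apply, ← diagonal_sub]
    abel
  rw [eval_charpoly, hchar, det_diagonal_add_vecMulVec_of_apply_eq_zero _ _ _ (sub_self _)]

lemma charpoly_diagonal_sub_vecMulVec_eq {K : Type*} [Field K] {ξ u v : ι → K} {p : K[X]}
    (hξ : Function.Injective ξ) (hp : p.Monic) (hdeg : p.natDegree = Fintype.card ι)
    (huv : ∀ j, u j * v j = p.eval (ξ j) * Lagrange.nodalWeight univ ξ j) :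
    (diagonal ξ - vecMulVec u v).charpoly = p := by
  have hdeg' : p.degree = #(univ : Finset ι) := by
    rw [degree_eq_natDegree hp.ne_zero, hdeg, card_univ]
  have hcharpoly := charpoly_monic (diagonal ξ - vecMulVec u v)
  refine eq_of_degree_le_of_eval_index_eq univ hξ.injOn (charpoly_degree_eq_dim _).le
    (by rw [charpoly_degree_eq_dim, hdeg', card_univ])
    (by rw [hcharpoly.leadingCoeff, hp.leadingCoeff]) fun j _ ↦ ?_
  have hprod : ∏ i ∈ univ.erase j, (ξ j - ξ i) ≠ 0 :=
    prod_ne_zero_iff.2 fun i hi ↦ sub_ne_zero.2 (hξ.ne (ne_of_mem_erase hi).symm)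
  rw [eval_charpoly_diagonal_sub_vecMulVec, huv, Lagrange.nodalWeight, prod_inv_distrib,
    inv_mul_cancel_right₀ hprod]

lemma pow_eq_smul_one_of_charpoly_eq {M : Matrix ι ι R} {n : ℕ} {c : R}
    (hM : M.charpoly = X ^ n - C c) : M ^ n = c • (1 : Matrix ι ι R) := by
  have h := aeval_self_charpoly M
  rwa [hM, map_sub, map_pow, aeval_X, aeval_C, sub_eq_zero, Algebra.algebraMap_eq_smul_one] at h

lemma det_eq_of_charpoly_eq [Nonempty ι] {M : Matrix ι ι R} {c : R}
    (hM : M.charpoly = X ^ Fintype.card ι - C c) :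
    M.det = (-1) ^ (Fintype.card ι - 1) * c := by
  have hcard : Fintype.card ι ≠ 0 := Fintype.card_ne_zero
  rw [det_eq_sign_charpoly_coeff, hM, coeff_sub, coeff_X_pow, if_neg hcard.symm, coeff_C_zero,
    zero_sub, ← mul_pow_sub_one hcard]
  ring

lemma spectrum_eq_of_charpoly_eq {K : Type*} [Field K] {M : Matrix ι ι K} {n : ℕ} {c : K}
    (hM : M.charpoly = X ^ n - C c) : spectrum K M = {z | z ^ n = c} := by
  ext z
  simp [mem_spectrum_iff_isRoot_charpoly, hM, sub_eq_zero]

end CharacteristicPolynomial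

lemma rank_vecMulVec_eq_one {m n K : Type*} [Fintype n] [Field K] {u : m → K} {v : n → K}
    (hu : u ≠ 0) (hv : v ≠ 0) : (vecMulVec u v).rank = 1 := by
  classical
  refine le_antisymm (rank_vecMulVec_le u v) (Nat.one_le_iff_ne_zero.2 fun hrank ↦ ?_)
  have hlin : toLin' (vecMulVec u v) = 0 :=
    LinearMap.range_eq_bot.1 (Submodule.finrank_eq_zero.1 hrank)
  have hzero : vecMulVec u v = 0 := toLin'.map_eq_zero_iff.1 hlin
  obtain ⟨i, hi⟩ := Function.ne_iff.1 hu
  obtain ⟨j, hj⟩ := Function.ne_iff.1 hv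
  exact mul_ne_zero hi hj (congrFun₂ hzero i j)

section InvariantSubspaces

lemma aeval_mul_mem {R S : Type*} [CommSemiring R] [Semiring S] [Algebra R S]
    {U : Submodule R S} {a : S} (ha : ∀ x ∈ U, a * x ∈ U) (q : R[X]) :
    ∀ x ∈ U, aeval a q * x ∈ U := by
  induction q using Polynomial.induction_on' with
  | add q₁ q₂ h₁ h₂ =>
    intro x hx
    rw [map_add, add_mul]
    exact U.add_mem (h₁ x hx) (h₂ x hx)
  | monomial n c =>
    intro x hx
    rw [aeval_monomial, ← Algebra.smul_def, smul_mul_assoc]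
    refine U.smul_mem c ?_
    induction n with
    | zero => simpa using hx
    | succ n ih => simpa only [pow_succ', mul_assoc] using ha _ ih

variable {ι K : Type*} [Field K] {U : Submodule K (ι → K)}

lemma single_mem_of_mul_mem [Finite ι] [DecidableEq ι] {ξ : ι → K}
    (hξ : Function.Injective ξ) (hU : ∀ x ∈ U, ξ * x ∈ U)
    {x : ι → K} (hx : x ∈ U) {j : ι} (hj : x j ≠ 0) : Pi.single j 1 ∈ U := by
  cases nonempty_fintype ι
  have hbasis : aeval ξ (Lagrange.basis univ ξ j) = Pi.single j (1 : K) := by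
    ext i
    rw [aeval_pi_apply₂, coe_aeval_eq_eval]
    obtain rfl | hij := eq_or_ne j i
    · rw [Lagrange.eval_basis_self hξ.injOn (mem_univ j), Pi.single_eq_same]
    · rw [Lagrange.eval_basis_of_ne hij (mem_univ i), Pi.single_eq_of_ne' hij]
  have hmem := aeval_mul_mem hU (Lagrange.basis univ ξ j) x hx
  rw [hbasis, ← Pi.single_mul_left, one_mul] at hmem
  exact (U.smul_mem_iff hj).1 (by rwa [← Pi.single_smul', smul_eq_mul, mul_one])

lemma eq_bot_or_eq_top_of_mul_mem_of_vecMulVec_mulVec_mem [Fintype ι] {ξ u v : ι → K}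
    (hξ : Function.Injective ξ) (hu : ∀ i, u i ≠ 0) (hv : ∀ i, v i ≠ 0)
    (hUξ : ∀ x ∈ U, ξ * x ∈ U) (hUuv : ∀ x ∈ U, vecMulVec u v *ᵥ x ∈ U) :
    U = ⊥ ∨ U = ⊤ := by
  classical
  refine or_iff_not_imp_left.2 fun hbot ↦ ?_
  obtain ⟨x, hx, hx0⟩ := U.ne_bot_iff.1 hbot
  obtain ⟨j, hj⟩ := Function.ne_iff.1 hx0
  have hsingle : Pi.single j 1 ∈ U := single_mem_of_mul_mem hξ hUξ hx hj
  have hu_mem : u ∈ U := by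
    have h := hUuv _ hsingle
    rw [vecMulVec_mulVec, dotProduct_single_one, op_smul_eq_smul] at h
    exact (U.smul_mem_iff (hv j)).1 h
  rw [eq_top_iff, ← (Pi.basisFun K ι).span_eq, Submodule.span_le]
  rintro _ ⟨i, rfl⟩
  rw [Pi.basisFun_apply]
  exact single_mem_of_mul_mem hξ hUξ hu_mem (hu i)

lemma mulVec_mem_of_mul_mulVec_mem [Fintype ι] [DecidableEq ι] {A B : Matrix ι ι K}
    (hA : IsUnit A) (hUA : U.map A.mulVecLin ≤ U) (hUAB : U.map (A * B).mulVecLin ≤ U) :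
    ∀ x ∈ U, B *ᵥ x ∈ U := by
  intro x hx
  have hinj : Function.Injective A.mulVecLin := mulVec_injective_iff_isUnit.2 hA
  have hmap : U.map A.mulVecLin = U :=
    Submodule.eq_of_le_of_finrank_eq hUA (U.equivMapOfInjective _ hinj).finrank_eq.symm
  have hABx : A.mulVecLin (B *ᵥ x) ∈ U.map A.mulVecLin := by
    rw [hmap, mulVecLin_apply, mulVec_mulVec]
    exact hUAB ⟨x, hx, rfl⟩
  exact hinj.mem_set_image.1 hABx

end InvariantSubspaces

section PrescribedReflection

variable {ι K : Type*} [Fintype ι] [DecidableEq ι] [Field K]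

/-- The row vector with entries `Res_{z = ξ j} p(z) / (z ∏ i, (z - ξ i))`, for distinct nonzero
`ξ j`: the covector of the pseudo-reflection `prescribedReflection ξ p`. -/
def reflectionCovector (ξ : ι → K) (p : K[X]) (j : ι) : K :=
  p.eval (ξ j) * Lagrange.nodalWeight univ ξ j / ξ j

/-- Levelt's pseudo-reflection `A`: for distinct nonzero `ξ j`, the product `A * diagonal ξ` has
characteristic polynomial `p`. The eigenvectors of `diagonal ξ` are scaled so that the image of
`A - 1` is spanned by the constant vector `1`. -/
def prescribedReflection (ξ : ι → K) (p : K[X]) : Matrix ι ι K :=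
  1 - vecMulVec 1 (reflectionCovector ξ p)

variable {ξ : ι → K} {p : K[X]}

lemma reflectionCovector_ne_zero (hξ : Function.Injective ξ) (hξ0 : ∀ j, ξ j ≠ 0)
    (hpξ : ∀ j, p.eval (ξ j) ≠ 0) (j : ι) : reflectionCovector ξ p j ≠ 0 :=
  div_ne_zero (mul_ne_zero (hpξ j) (Lagrange.nodalWeight_ne_zero hξ.injOn (mem_univ j))) (hξ0 j)

lemma prescribedReflection_mul_diagonal (ξ : ι → K) (p : K[X]) :
    prescribedReflection ξ p * diagonal ξ =
      diagonal ξ - vecMulVec 1 (reflectionCovector ξ p * ξ) := by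
  have hvecMul : reflectionCovector ξ p ᵥ* diagonal ξ = reflectionCovector ξ p * ξ :=
    funext (vecMul_diagonal _ _)
  rw [prescribedReflection, sub_mul, one_mul, vecMulVec_mul, hvecMul]

lemma charpoly_prescribedReflection_mul_diagonal (hξ : Function.Injective ξ)
    (hξ0 : ∀ j, ξ j ≠ 0) (hp : p.Monic) (hdeg : p.natDegree = Fintype.card ι) :
    (prescribedReflection ξ p * diagonal ξ).charpoly = p := by
  rw [prescribedReflection_mul_diagonal]
  refine charpoly_diagonal_sub_vecMulVec_eq hξ hp hdeg fun j ↦ ?_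
  rw [Pi.one_apply, one_mul, Pi.mul_apply, reflectionCovector, div_mul_cancel₀ _ (hξ0 j)]

lemma rank_prescribedReflection_sub_one [Nonempty ι] (hξ : Function.Injective ξ)
    (hξ0 : ∀ j, ξ j ≠ 0) (hpξ : ∀ j, p.eval (ξ j) ≠ 0) :
    (prescribedReflection ξ p - 1).rank = 1 := by
  obtain ⟨j⟩ := ‹Nonempty ι›
  rw [prescribedReflection, sub_sub_cancel_left, ← neg_vecMulVec]
  exact rank_vecMulVec_eq_one (by simp)
    (Function.ne_iff.2 ⟨j, reflectionCovector_ne_zero hξ hξ0 hpξ j⟩)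

lemma eq_bot_or_eq_top_of_map_prescribedReflection_le (hξ : Function.Injective ξ)
    (hξ0 : ∀ j, ξ j ≠ 0) (hpξ : ∀ j, p.eval (ξ j) ≠ 0) (hA : IsUnit (prescribedReflection ξ p))
    {U : Submodule K (ι → K)}
    (hUΩ : U.map (prescribedReflection ξ p * diagonal ξ).mulVecLin ≤ U)
    (hUA : U.map (prescribedReflection ξ p).mulVecLin ≤ U) : U = ⊥ ∨ U = ⊤ := by
  refine eq_bot_or_eq_top_of_mul_mem_of_vecMulVec_mulVec_mem hξ (fun _ ↦ one_ne_zero)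
    (reflectionCovector_ne_zero hξ hξ0 hpξ) (fun x hx ↦ ?_) fun x hx ↦ ?_
  · have hdiag : diagonal ξ *ᵥ x = ξ * x := funext (mulVec_diagonal _ _)
    exact hdiag ▸ mulVec_mem_of_mul_mulVec_mem hA hUA hUΩ x hx
  · have hAx : prescribedReflection ξ p *ᵥ x ∈ U := hUA ⟨x, hx, rfl⟩
    rwa [prescribedReflection, sub_mulVec, one_mulVec, U.sub_mem_iff_right hx] at hAx

end PrescribedReflection

theorem stmt_11_general {K : Type*} [Field K] {k : ℕ} (hk : 1 ≤ k) {c : K} (hc : c ≠ 0)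
    {lam : K} {ξ : Fin k → K} (hξinj : Function.Injective ξ) (hξk : ∀ j, ξ j ^ k ≠ c)
    (hfuchs : lam * ∏ j, ξ j = (-1) ^ (k - 1) * c) :
    ∃ Ω A : Matrix (Fin k) (Fin k) K,
      IsUnit Ω ∧ IsUnit A ∧
      Ω ^ k = c • (1 : Matrix (Fin k) (Fin k) K) ∧
      spectrum K Ω = {z : K | z ^ k = c} ∧
      (A - 1).rank = 1 ∧ A.det = lam ∧
      (∃ P : Matrix (Fin k) (Fin k) K, IsUnit P ∧
        A⁻¹ * Ω = P * diagonal ξ * P⁻¹) ∧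
      (∀ U : Submodule K (Fin k → K),
        U.map Ω.mulVecLin ≤ U → U.map A.mulVecLin ≤ U → U = ⊥ ∨ U = ⊤) := by
  have : NeZero k := ⟨Nat.one_le_iff_ne_zero.1 hk⟩
  set p : K[X] := X ^ k - C c
  set A := prescribedReflection ξ p
  set Ω := A * diagonal ξ
  have hfuchs0 : lam * ∏ j, ξ j ≠ 0 := by
    rw [hfuchs]
    exact mul_ne_zero (pow_ne_zero _ (neg_ne_zero.2 one_ne_zero)) hc
  have hξprod := right_ne_zero_of_mul hfuchs0
  have hξ0 (j : Fin k) : ξ j ≠ 0 := prod_ne_zero_iff.1 hξprod j (mem_univ j)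
  have hpξ (j : Fin k) : p.eval (ξ j) ≠ 0 := by simpa [p, sub_eq_zero] using hξk j
  have hcharpoly : Ω.charpoly = p :=
    charpoly_prescribedReflection_mul_diagonal hξinj hξ0 (monic_X_pow_sub_C c (NeZero.ne k))
      (by rw [natDegree_X_pow_sub_C, Fintype.card_fin])
  have hdetΩ : Ω.det = lam * ∏ j, ξ j := by
    rw [hfuchs, det_eq_of_charpoly_eq (by rw [hcharpoly, Fintype.card_fin]), Fintype.card_fin]
  have hdetA : A.det = lam := by
    rw [det_mul, det_diagonal] at hdetΩ
    exact mul_right_cancel₀ hξprod hdetΩ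
  have hA : IsUnit A := (isUnit_iff_isUnit_det A).2 (hdetA ▸ (left_ne_zero_of_mul hfuchs0).isUnit)
  have hΩ : IsUnit Ω := (isUnit_iff_isUnit_det Ω).2 (hdetΩ ▸ hfuchs0.isUnit)
  refine ⟨Ω, A, hΩ, hA, pow_eq_smul_one_of_charpoly_eq hcharpoly,
    spectrum_eq_of_charpoly_eq hcharpoly, rank_prescribedReflection_sub_one hξinj hξ0 hpξ, hdetA,
    ⟨1, isUnit_one, ?_⟩,
    fun U ↦ eq_bot_or_eq_top_of_map_prescribedReflection_le hξinj hξ0 hpξ hA⟩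
  rw [one_mul, inv_one, mul_one,
    nonsing_inv_mul_cancel_left A (diagonal ξ) ((isUnit_iff_isUnit_det A).1 hA)]

end

/-- construction of the monodromy matrices of an irreducible rigid
Pochhammer local system of multiplicity one on the turbine without shaft T_{n,k,1}
with prescribed numerical local data (ε; λ₁; ξ₁, …, ξ_k; 1, …, 1). -/
theorem stmt_11 {k : ℕ} (hk : 1 ≤ k) (ε : ℂ) (hε : ε ≠ 0) (r : ℤ)
    (lam : ℂ) (ξ : Fin k → ℂ)
    (hlam0 : lam ≠ 0) (hlam1 : lam ≠ 1)
    (hξ0 : ∀ j, ξ j ≠ 0) (hξinj : Function.Injective ξ)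
    (hξk : ∀ j, ξ j ^ k ≠ ε ^ r)
    (hξsum : ∑ j, ξ j ≠ 0)
    (hfuchs : lam * ∏ j, ξ j = (-1 : ℂ) ^ (k - 1) * ε ^ r) :
    ∃ Ω A : Matrix (Fin k) (Fin k) ℂ,
      IsUnit Ω ∧ IsUnit A ∧
      Ω ^ k = (ε ^ r) • (1 : Matrix (Fin k) (Fin k) ℂ) ∧
      spectrum ℂ Ω = {z : ℂ | z ^ k = ε ^ r} ∧
      (A - 1).rank = 1 ∧ A.det = lam ∧
      (∃ P : Matrix (Fin k) (Fin k) ℂ, IsUnit P ∧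
        A⁻¹ * Ω = P * Matrix.diagonal ξ * P⁻¹) ∧
      (∀ U : Submodule ℂ (Fin k → ℂ),
        U.map Ω.mulVecLin ≤ U → U.map A.mulVecLin ≤ U → U = ⊥ ∨ U = ⊤) := by
  exact stmt_11_general hk (zpow_ne_zero r hε) hξinj hξk hfuchs
end

section
/- Let k, ℓ ≥ 1 be integers, m = kℓ + 1, let ε be a nonzero complex number, let r be an integer, and let b, λ₁, …, λ_ℓ, ξ₁, …, ξ_{k+1} be nonzero complex numbers. Set η₁ = (−1)^{k−1}·ε^r·(ξ₁⋯ξ_k)^{−1} and η₂ = (−1)^k·ε^r·b·(ξ₁⋯ξ_{k+1})^{−1}. Assume: λ_i ≠ 1 and λ_i ≠ η₁ for all i; η₁ ≠ 1; η₂ ≠ 1; η₁ ≠ η₂; the ξ_j are pairwise distinct; ξ_j ≠ b for all j; b^k ≠ ε^r and ξ_j^k ≠ ε^r for all j; ξ₁ + ⋯ + ξ_k ≠ 0; and the Fuchs relation λ₁⋯λ_ℓ·ξ₁^ℓ⋯ξ_k^ℓ·ξ_{k+1} = (−1)^{(k−1)ℓ}·b·ε^{rℓ}. Then there exist pseudo-reflections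 X₁, …, X_ℓ ∈ GL_m(ℂ) with special eigenvalues λ₁, …, λ_ℓ respectively, and a matrix Ω₀ ∈ GL_m(ℂ), such that: (1) ε^r·Ω₀^{−k} is a pseudo-reflection with special eigenvalue ε^r·b^{−k}; (2) Ω∞ := (X₁⋯X_ℓ)^{−1}·Ω₀ is diagonalizable, with eigenvalues ξ₁, …, ξ_k each of multiplicity ℓ and ξ_{k+1} of multiplicity 1; (3) the family {X₁, …, X_ℓ, Ω₀} acts irreducibly on ℂ^m. -/
/-!
Write `c = ε ^ r`. The matrix `Ω₀` is multiplication by `X` on `V = ⨁ i, K[X] ⧸ (gᵢ)`, the sum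
having `ℓ` terms, with `gᵢ = X ^ k - c` except for one index `i₀`, where `gᵢ = (X ^ k - c) (X - b)`.
Thus `Ω₀ ^ k - c` has rank one. A remainder modulo `gᵢ` is determined by its values at `ξ₁, …, ξ_k`
(and `ξ_{k+1}` if `i = i₀`), and in these coordinates `Ω₀ = (1 + W Φ) diag(ξ)`, where each block
contributes one column of `W` and one row of `Φ`.

It remains to write `1 + W Φ` as a product of pseudo-reflections with special eigenvalues `λᵢ`.
Up to a change of basis of `K ^ ℓ`, this depends only on the Gram matrix `Φ W`. By Lagrange
interpolation it is diagonal, with all entries `η₁ - 1` except the one at `i₀`, and the Fuchs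
relation says that the exceptional entry is the right one for `Φ W` to be conjugate to the Gram
matrix of a product of pseudo-reflections with special eigenvalues `λᵢ`.

If `U` is invariant, then either `U` lies in the fixed space of every pseudo-reflection or it
contains all their images, so `Ω₀` and `Ω∞ = diag(ξ)` agree on `U` or modulo `U`. Since
`h = (X ^ k - c) (X - b)` satisfies `h(Ω₀) = 0` while `h(Ω∞)` is invertible, `U = 0` or `U = V`.
-/

section RankOne

open Matrix

variable {K J I : Type*} [Field K] [Fintype J] [DecidableEq J]

lemma rank_sub_one_eq_one_of_det_ne_one {M : Matrix J J K} (hM : (M - 1).rank ≤ 1)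
    (hdet : M.det ≠ 1) : (M - 1).rank = 1 := by
  refine le_antisymm hM (Nat.one_le_iff_ne_zero.2 fun h => hdet ?_)
  have hzero : (M - 1).mulVecLin = 0 := LinearMap.range_eq_bot.1 (Submodule.finrank_eq_zero.1 h)
  rw [sub_eq_zero.1 ((toLin' (R := K)).map_eq_zero_iff.1 hzero), det_one]

lemma det_one_add_vecMulVec (w ψ : J → K) : (1 + vecMulVec w ψ).det = 1 + ψ ⬝ᵥ w := by
  rw [vecMulVec_eq Unit, det_one_add_replicateCol_mul_replicateRow]

lemma rank_one_add_vecMulVec_sub_one {w ψ : J → K} (h : ψ ⬝ᵥ w ≠ 0) :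
    (1 + vecMulVec w ψ - 1).rank = 1 :=
  rank_sub_one_eq_one_of_det_ne_one
    (by simpa only [add_sub_cancel_left] using rank_vecMulVec_le w ψ)
    (by simpa only [det_one_add_vecMulVec, ne_eq, add_eq_left] using h)

variable [Fintype I] [DecidableEq I]

/- A matrix `Q` with `Q u = u'` and `v'ᵀ Q = vᵀ` is `1 + u' vᵀ / (v ⬝ u) - u v'ᵀ / (v' ⬝ u)`. -/
lemma exists_isUnit_mul_vecMulVec_eq {u v u' v' : I → K} (huv : v ⬝ᵥ u ≠ 0)
    (huv' : v' ⬝ᵥ u' = v ⬝ᵥ u) (hv'u : v' ⬝ᵥ u ≠ 0) :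
    ∃ Q : Matrix I I K, IsUnit Q ∧ Q * vecMulVec u v = vecMulVec u' v' * Q := by
  set Q : Matrix I I K :=
    1 + (v ⬝ᵥ u)⁻¹ • vecMulVec u' v - (v' ⬝ᵥ u)⁻¹ • vecMulVec u v' with hQ
  have hmulVec (x : I → K) :
      Q *ᵥ x = x + ((v ⬝ᵥ u)⁻¹ * (v ⬝ᵥ x)) • u' - ((v' ⬝ᵥ u)⁻¹ * (v' ⬝ᵥ x)) • u := by
    simp only [hQ, sub_mulVec, add_mulVec, one_mulVec, smul_mulVec, vecMulVec_mulVec,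
      op_smul_eq_smul, smul_smul]
  have hQu : Q *ᵥ u = u' := by
    simp only [hmulVec, inv_mul_cancel₀ huv, inv_mul_cancel₀ hv'u, one_smul, add_sub_cancel_left]
  have hdot (x : I → K) : v' ⬝ᵥ Q *ᵥ x = v ⬝ᵥ x := by
    simp only [hmulVec, dotProduct_sub, dotProduct_add, dotProduct_smul, huv', smul_eq_mul]
    field_simp
    ring
  refine ⟨Q, mulVec_injective_iff_isUnit.1 <|
    (injective_iff_map_eq_zero Q.mulVecLin).2 fun x hx => ?_, ?_⟩
  · replace hx : Q *ᵥ x = 0 := hx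
    have hvx : v ⬝ᵥ x = 0 := by rw [← hdot, hx, dotProduct_zero]
    have hxu : x = ((v' ⬝ᵥ u)⁻¹ * (v' ⬝ᵥ x)) • u := by
      simpa only [hmulVec, hvx, mul_zero, zero_smul, add_zero, sub_eq_zero] using hx
    have hv'x : v' ⬝ᵥ x = 0 := by
      rw [hxu, dotProduct_smul, smul_eq_mul, mul_eq_zero, or_iff_left huv] at hvx
      simpa only [mul_eq_zero, inv_eq_zero, hv'u, false_or] using hvx
    rw [hxu, hv'x, mul_zero, zero_smul]
  · have hvQ : v' ᵥ* Q = v := dotProduct_eq _ _ fun x => by rw [← dotProduct_mulVec, hdot]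
    rw [mul_vecMulVec, vecMulVec_mul, hQu, hvQ]

end RankOne

section ReflectionProduct

open Matrix

variable {K J : Type*} [Field K]

lemma mul_eq_sum_vecMulVec {I : Type*} [Fintype I] (W : Matrix J I K) (Φ : Matrix I J K) :
    W * Φ = ∑ i, vecMulVec (W.col i) (Φ.row i) := by
  ext x y
  simp only [mul_apply, Matrix.sum_apply, vecMulVec_apply, col_apply, row_apply]

/-- The weight `(λᵢ - θ) ∏_{j > i} λⱼ / θ`: vectors `w` and covectors `φ` with
`φᵢ ⬝ wⱼ = (θ - 1) δᵢⱼ + tailWeight θ lam i` come from a product of pseudo-reflections with special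
eigenvalues `λᵢ`. -/
def tailWeight {ι : Type*} [LinearOrder ι] [LocallyFiniteOrderTop ι] (θ : K) (lam : ι → K)
    (i : ι) : K :=
  (lam i - θ) * ∏ j > i, lam j / θ

lemma sum_tailWeight {ι : Type*} [LinearOrder ι] [LocallyFiniteOrderTop ι] {θ : K} (hθ : θ ≠ 0)
    (lam : ι → K) {s : Finset ι} (hs : IsUpperSet (s : Set ι)) :
    ∑ i ∈ s, tailWeight θ lam i = θ * (∏ i ∈ s, lam i / θ) - θ := by
  have htail {i} (hi : i ∈ s) : {j ∈ s | i < j} = Finset.Ioi i := by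
    ext j
    simpa using fun hij => hs hij.le hi
  have h := Finset.prod_add_ordered s (fun i => lam i / θ) fun i => 1 - lam i / θ
  simp only [add_sub_cancel, Finset.prod_const_one, mul_one] at h
  calc ∑ i ∈ s, tailWeight θ lam i
      = -θ * ∑ i ∈ s, (1 - lam i / θ) * ∏ j ∈ s with i < j, lam j / θ := by
        rw [Finset.mul_sum]
        refine Finset.sum_congr rfl fun i hi => ?_
        rw [tailWeight, htail hi]
        field_simp
        ring
    _ = θ * (∏ i ∈ s, lam i / θ) - θ := by linear_combination θ * h

variable [Fintype J] [DecidableEq J]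

lemma det_prod_one_add_vecMulVec {n : ℕ} (w ψ : Fin n → J → K) :
    (List.ofFn fun i => 1 + vecMulVec (w i) (ψ i)).prod.det = ∏ i, (1 + ψ i ⬝ᵥ w i) := by
  rw [← coe_detMonoidHom, map_list_prod, List.map_ofFn, List.prod_ofFn]
  exact Finset.prod_congr rfl fun i _ => det_one_add_vecMulVec (w i) (ψ i)

theorem prod_one_add_vecMulVec {n : ℕ} {w ψ φ : Fin n → J → K}
    (h : ∀ i, φ i = ψ i + ∑ j > i, (ψ i ⬝ᵥ w j) • φ j) :
    (List.ofFn fun i => 1 + vecMulVec (w i) (ψ i)).prod = 1 + ∑ i, vecMulVec (w i) (φ i) := by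
  induction n with
  | zero => simp
  | succ n ih =>
    have htail : (List.ofFn fun i : Fin n => 1 + vecMulVec (w i.succ) (ψ i.succ)).prod =
        1 + ∑ i : Fin n, vecMulVec (w i.succ) (φ i.succ) :=
      ih fun i => by rw [h i.succ, Fin.sum_Ioi_succ]
    have hhead : vecMulVec (w 0) (φ 0) = vecMulVec (w 0) (ψ 0) +
        vecMulVec (w 0) (ψ 0) * ∑ i : Fin n, vecMulVec (w i.succ) (φ i.succ) := by
      rw [h 0, Fin.sum_Ioi_zero, vecMulVec_add, vecMulVec_mul, vecMul_sum]
      simp only [vecMul_vecMulVec]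
    rw [List.ofFn_succ, List.prod_cons, htail, Fin.sum_univ_succ, hhead]
    noncomm_ring

theorem exists_prod_one_add_vecMulVec_eq {n : ℕ} {θ : K} (hθ : θ ≠ 0) {lam : Fin n → K}
    (hlam : ∀ i, lam i ≠ θ) {w φ : Fin n → J → K}
    (hφw : ∀ i j, φ i ⬝ᵥ w j = (if i = j then θ - 1 else 0) + tailWeight θ lam i) :
    ∃ ψ : Fin n → J → K,
      (List.ofFn fun i => 1 + vecMulVec (w i) (ψ i)).prod = 1 + ∑ i, vecMulVec (w i) (φ i) ∧
      (∀ i, ψ i ⬝ᵥ w i = lam i - 1) ∧ Pairwise fun i j => ψ i ⬝ᵥ w j ≠ 0 := by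
  set ψ : Fin n → J → K := fun i => φ i - ((lam i - θ) / θ) • ∑ j > i, φ j with hψ
  have hψw (i j) : ψ i ⬝ᵥ w j = (if i = j then θ - 1 else 0) + (lam i - θ) -
      (if i < j then (lam i - θ) / θ * (θ - 1) else 0) := by
    have hs : IsUpperSet (Finset.Ioi i : Set (Fin n)) := by simpa using isUpperSet_Ioi i
    simp only [hψ, sub_dotProduct, smul_dotProduct, sum_dotProduct, hφw, Finset.sum_add_distrib,
      Finset.sum_ite_eq', Finset.mem_Ioi, sum_tailWeight hθ lam hs, smul_eq_mul]
    rw [tailWeight]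
    split_ifs <;> field_simp <;> ring
  have hlt {i j} (hij : i < j) : ψ i ⬝ᵥ w j = (lam i - θ) / θ := by
    rw [hψw, if_neg hij.ne, if_pos hij]
    field_simp
    ring
  refine ⟨ψ, prod_one_add_vecMulVec fun i => ?_, fun i => by simp [hψw], fun i j hij => ?_⟩
  · rw [Finset.sum_congr rfl fun j hj => by rw [hlt (Finset.mem_Ioi.1 hj)], ← Finset.smul_sum]
    simp only [hψ, sub_add_cancel]
  · obtain hij | hij := hij.lt_or_gt
    · rw [hlt hij]
      exact div_ne_zero (sub_ne_zero.2 (hlam i)) hθ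
    · rw [hψw, if_neg hij.ne', if_neg hij.not_gt, zero_add, sub_zero]
      exact sub_ne_zero.2 (hlam i)

/- Conjugating by some `Q` replaces the diagonal matrix `Φ * W` by `(θ - 1) • 1` plus the matrix of
rank one all of whose columns are `tailWeight θ lam`. -/
theorem exists_prod_one_add_vecMulVec_eq_one_add_mul {n : ℕ} {θ : K} (hθ : θ ≠ 0)
    {lam : Fin n → K} (hlam : ∀ i, lam i ≠ θ) (i₀ : Fin n) (hne : θ * ∏ i, lam i / θ ≠ θ)
    {W : Matrix J (Fin n) K} {Φ : Matrix (Fin n) J K}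
    (hΦW : Φ * W = (θ - 1) • 1 + single i₀ i₀ (θ * (∏ i, lam i / θ) - θ)) :
    ∃ w ψ : Fin n → J → K, (List.ofFn fun i => 1 + vecMulVec (w i) (ψ i)).prod = 1 + W * Φ ∧
      (∀ i, ψ i ⬝ᵥ w i = lam i - 1) ∧ Pairwise fun i j => ψ i ⬝ᵥ w j ≠ 0 := by
  set s := θ * (∏ i, lam i / θ) - θ
  have hs0 : s ≠ 0 := sub_ne_zero.2 hne
  have hsum : ∑ i, tailWeight θ lam i = s :=
    sum_tailWeight hθ lam (Finset.coe_univ (α := Fin n) ▸ isUpperSet_univ)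
  have hsingle : single i₀ i₀ s = vecMulVec (Pi.single i₀ 1) (Pi.single i₀ s) := by
    ext i j
    simp [-mul_ite, single_apply, vecMulVec_apply, Pi.single_apply, ite_and, eq_comm]
  obtain ⟨Q, hQ, hconj⟩ := exists_isUnit_mul_vecMulVec_eq (u := Pi.single i₀ (1 : K))
    (v := Pi.single i₀ s) (u' := tailWeight θ lam) (v' := 1) (by simpa using hs0)
    (by simp [one_dotProduct, hsum]) (by simp)
  have hdet : IsUnit Q.det := (isUnit_iff_isUnit_det Q).1 hQ
  have hgram : Q * Φ * (W * Q⁻¹) = (θ - 1) • 1 + vecMulVec (tailWeight θ lam) 1 := by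
    rw [Matrix.mul_assoc, ← Matrix.mul_assoc Φ, ← Matrix.mul_assoc, hΦW, hsingle, mul_add, hconj,
      Matrix.mul_smul, mul_one, add_mul, Matrix.smul_mul, mul_nonsing_inv_cancel_right _ _ hdet,
      mul_nonsing_inv _ hdet]
  obtain ⟨ψ, hprod, hdiag, hoff⟩ := exists_prod_one_add_vecMulVec_eq hθ hlam
    (w := (W * Q⁻¹).col) (φ := (Q * Φ).row) fun i j =>
      (congrFun₂ hgram i j).trans (by simp [one_apply])
  refine ⟨_, ψ, ?_, hdiag, hoff⟩
  rw [hprod, ← mul_eq_sum_vecMulVec, Matrix.mul_assoc, nonsing_inv_mul_cancel_left _ _ hdet]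

end ReflectionProduct

section Irreducibility

open Matrix Polynomial

variable {K J : Type*} [Field K] [Fintype J] [DecidableEq J] {A B : Matrix J J K}
  {U : Submodule K (J → K)}

lemma aeval_mulVec_sub_aeval_mulVec_mem (hA : ∀ v ∈ U, A *ᵥ v ∈ U)
    (hAB : ∀ v, A *ᵥ v - B *ᵥ v ∈ U) (h : K[X]) (v : J → K) :
    aeval A h *ᵥ v - aeval B h *ᵥ v ∈ U := by
  induction h using Polynomial.induction_on generalizing v with
  | C a => simp
  | add p q hp hq =>
    simpa only [map_add, add_mulVec, add_sub_add_comm] using U.add_mem (hp v) (hq v)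
  | monomial n a ih =>
    rw [pow_succ', mul_left_comm, map_mul (aeval A), map_mul (aeval B), aeval_X, aeval_X,
      ← mulVec_mulVec, ← mulVec_mulVec]
    have hmem := U.add_mem (hA _ (ih v)) (hAB (aeval B (C a * X ^ n) *ᵥ v))
    rwa [mulVec_sub, sub_add_sub_cancel] at hmem

lemma aeval_mulVec_eq_aeval_mulVec (hA : ∀ v ∈ U, A *ᵥ v ∈ U) (hAB : ∀ v ∈ U, A *ᵥ v = B *ᵥ v)
    (h : K[X]) {v : J → K} (hv : v ∈ U) : aeval A h *ᵥ v = aeval B h *ᵥ v := by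
  induction h using Polynomial.induction_on generalizing v with
  | C a => simp
  | add p q hp hq => rw [map_add, map_add, add_mulVec, add_mulVec, hp hv, hq hv]
  | monomial n a ih =>
    rw [pow_succ, ← mul_assoc, map_mul (aeval A), map_mul (aeval B), aeval_X, aeval_X,
      ← mulVec_mulVec, ← mulVec_mulVec, ih (hA v hv), hAB v hv]

lemma list_prod_mulVec_eq_self {L : List (Matrix J J K)} {v : J → K} (h : ∀ M ∈ L, M *ᵥ v = v) :
    L.prod *ᵥ v = v := by
  induction L with
  | nil => rw [List.prod_nil, one_mulVec]
  | cons M L ih =>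
    rw [List.forall_mem_cons] at h
    rw [List.prod_cons, ← mulVec_mulVec, ih h.2, h.1]

lemma list_prod_mulVec_sub_mem {L : List (Matrix J J K)}
    (h : ∀ M ∈ L, ∀ v, M *ᵥ v - v ∈ U) (v : J → K) : L.prod *ᵥ v - v ∈ U := by
  induction L with
  | nil => simp only [List.prod_nil, one_mulVec, sub_self, zero_mem]
  | cons M L ih =>
    rw [List.forall_mem_cons] at h
    rw [List.prod_cons, ← mulVec_mulVec]
    simpa only [sub_add_sub_cancel] using U.add_mem (h.1 (L.prod *ᵥ v)) (ih h.2)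

/- If some `ψ i` is nonzero on `U`, then `U` contains every `w i`, so `A` and `B` agree modulo `U`
and `h(B)` vanishes modulo `U`; otherwise they agree on `U`, and `h(B)` vanishes on `U`. -/
theorem eq_bot_or_eq_top_of_pseudoReflections_invariant {n : ℕ} {w ψ : Fin n → J → K}
    (hψw : Pairwise fun i j => ψ i ⬝ᵥ w j ≠ 0)
    (hC : IsUnit (List.ofFn fun i => 1 + vecMulVec (w i) (ψ i)).prod) {h : K[X]}
    (hA : aeval ((List.ofFn fun i => 1 + vecMulVec (w i) (ψ i)).prod * B) h = 0)
    (hB : IsUnit (aeval B h)) (hUX : ∀ i, U.map (1 + vecMulVec (w i) (ψ i)).mulVecLin ≤ U)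
    (hUA : U.map ((List.ofFn fun i => 1 + vecMulVec (w i) (ψ i)).prod * B).mulVecLin ≤ U) :
    U = ⊥ ∨ U = ⊤ := by
  set C := (List.ofFn fun i => 1 + vecMulVec (w i) (ψ i)).prod
  have hreflection (i v) : (1 + vecMulVec (w i) (ψ i)) *ᵥ v - v = (ψ i ⬝ᵥ v) • w i := by
    rw [add_mulVec, one_mulVec, add_sub_cancel_left, vecMulVec_mulVec, op_smul_eq_smul]
  have hUX' (i) (v) (hv : v ∈ U) : (ψ i ⬝ᵥ v) • w i ∈ U :=
    hreflection i v ▸ U.sub_mem (hUX i ⟨v, hv, rfl⟩) hv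
  have hUA' (v) (hv : v ∈ U) : (C * B) *ᵥ v ∈ U := hUA ⟨v, hv, rfl⟩
  by_cases htrivial : ∀ v ∈ U, ∀ i, ψ i ⬝ᵥ v = 0
  · left
    have hCU (v) (hv : v ∈ U) : C *ᵥ v = v := list_prod_mulVec_eq_self <|
      (List.forall_mem_ofFn_iff).2 fun i => by
        rw [← sub_eq_zero, hreflection, htrivial v hv i, zero_smul]
    have hABU (v) (hv : v ∈ U) : (C * B) *ᵥ v = B *ᵥ v := by
      refine mulVec_injective_of_isUnit hC ?_
      rw [hCU _ (hUA' v hv), mulVec_mulVec]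
    refine (Submodule.eq_bot_iff U).2 fun v hv => mulVec_injective_of_isUnit hB ?_
    rw [← aeval_mulVec_eq_aeval_mulVec hUA' hABU h hv, hA, zero_mulVec, mulVec_zero]
  · right
    push Not at htrivial
    obtain ⟨v, hv, i, hiv⟩ := htrivial
    have hwi : w i ∈ U := (U.smul_mem_iff hiv).1 (hUX' i v hv)
    have hw (j) : w j ∈ U := by
      obtain rfl | hji := eq_or_ne j i
      · exact hwi
      · exact (U.smul_mem_iff (hψw hji)).1 (hUX' j _ hwi)
    have hABU (x) : (C * B) *ᵥ x - B *ᵥ x ∈ U := by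
      rw [← mulVec_mulVec]
      exact list_prod_mulVec_sub_mem ((List.forall_mem_ofFn_iff).2 fun i v =>
        hreflection i v ▸ U.smul_mem _ (hw i)) _
    refine (Submodule.eq_top_iff').2 fun y => ?_
    obtain ⟨x, rfl⟩ := mulVec_surjective_iff_isUnit.2 hB y
    simpa only [hA, zero_mulVec, zero_sub, neg_mem_iff] using
      aeval_mulVec_sub_aeval_mulVec_mem hUA' hABU h x

end Irreducibility

section Interpolation

open Polynomial

variable {K : Type*} [Field K]

lemma X_mul_modByMonic {g : K[X]} (hg : g.Monic) (hdeg : 0 < g.natDegree) (f : K[X]) :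
    (X * f) %ₘ g = X * (f %ₘ g) - C ((f %ₘ g).coeff (g.natDegree - 1)) * g := by
  refine (div_modByMonic_unique (X * (f /ₘ g) + C ((f %ₘ g).coeff (g.natDegree - 1))) _ hg
    ⟨?_, ?_⟩).2
  · linear_combination X * modByMonic_add_div f g
  · rw [degree_eq_natDegree hg.ne_zero, degree_lt_iff_coeff_zero]
    have hcoeff := (degree_lt_iff_coeff_zero _ _).1 <|
      (degree_modByMonic_lt f hg).trans_eq (degree_eq_natDegree hg.ne_zero)
    intro m hm
    obtain ⟨m, rfl⟩ := Nat.exists_eq_add_one.2 (hdeg.trans_le hm)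
    rw [coeff_sub, coeff_X_mul, coeff_C_mul]
    obtain hm | hm := hm.eq_or_lt
    · rw [← hm, hg.coeff_natDegree, hm, Nat.add_sub_cancel, mul_one, sub_self]
    · rw [coeff_eq_zero_of_natDegree_lt hm, hcoeff m (Nat.lt_succ_iff.1 hm), mul_zero, sub_zero]

variable {ι : Type*} [DecidableEq ι] {s : Finset ι} {v : ι → K}

lemma sum_nodalWeight_mul_eval (hv : Set.InjOn v s) {f : K[X]} (hf : f.degree < s.card) :
    ∑ i ∈ s, Lagrange.nodalWeight s v i * f.eval (v i) = f.coeff (s.card - 1) := by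
  rw [Lagrange.coeff_eq_sum hv hf]
  refine Finset.sum_congr rfl fun i _ => ?_
  rw [Lagrange.nodalWeight, Finset.prod_inv_distrib, div_eq_inv_mul]

/- A monic `g` of degree `#s` is the sum of the nodal polynomial and of the interpolant of `g`. -/
lemma sum_nodalWeight_mul_inv_mul_eval (hv : Set.InjOn v s) {g : K[X]} (hg : g.Monic)
    (hdeg : g.natDegree = s.card) {x : K} (hx : ∀ i ∈ s, x ≠ v i) :
    ∑ i ∈ s, Lagrange.nodalWeight s v i * (x - v i)⁻¹ * g.eval (v i) =
      g.eval x / (∏ i ∈ s, (x - v i)) - 1 := by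
  have hinterpolate : g - Lagrange.nodal s v = Lagrange.interpolate s v fun i => g.eval (v i) := by
    refine Lagrange.eq_interpolate_of_eval_eq _ hv ?_ fun i hi => ?_
    · rw [← hdeg, ← degree_eq_natDegree hg.ne_zero]
      refine degree_sub_lt_left ?_ hg.ne_zero ?_
      · rw [Lagrange.degree_nodal, ← hdeg, degree_eq_natDegree hg.ne_zero]
      · rw [hg.leadingCoeff, Lagrange.nodal_monic.leadingCoeff]
    · rw [eval_sub, Lagrange.eval_nodal_at_node hi, sub_zero]
  have heval := congrArg (eval x) hinterpolate
  rw [eval_sub, Lagrange.eval_interpolate_not_at_node _ hx, Lagrange.eval_nodal] at heval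
  have hprod : ∏ i ∈ s, (x - v i) ≠ 0 :=
    Finset.prod_ne_zero_iff.2 fun i hi => sub_ne_zero.2 (hx i hi)
  rw [div_sub_one hprod, eq_div_iff hprod, heval, mul_comm]

end Interpolation

section BlockCompanion

open Matrix Polynomial

variable {K J I : Type*} [Field K]

/-- The coordinates, on the nodes `d`, of an element of `⨁ i, K[X] ⧸ (g i)`, where the node `d x`
belongs to the block `σ x`: the values of the remainders. -/
noncomputable def remainderValues (σ : J → I) (d : J → K) (g : I → K[X]) :
    (I → K[X]) →ₗ[K] (J → K) :=
  LinearMap.pi fun x => leval (d x) ∘ₗ modByMonicHom (g (σ x)) ∘ₗ LinearMap.proj (σ x)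

variable {σ : J → I} {d : J → K} {g : I → K[X]}

lemma remainderValues_apply (f : I → K[X]) (x : J) :
    remainderValues σ d g f x = (f (σ x) %ₘ g (σ x)).eval (d x) := rfl

lemma remainderValues_eq_zero (hg : ∀ i, (g i).Monic) {f : I → K[X]} (hf : ∀ i, g i ∣ f i) :
    remainderValues σ d g f = 0 :=
  funext fun x => by
    rw [remainderValues_apply, (modByMonic_eq_zero_iff_dvd (hg _)).2 (hf _), eval_zero,
      Pi.zero_apply]

variable [Fintype J] [DecidableEq I]

/-- The set of nodes in the block `i`. -/
abbrev block (σ : J → I) (i : I) : Finset J := {x | σ x = i}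

/-- Each polynomial `g i` is monic and has as many nodes as its degree; the nodes are nonzero and
those of one block are distinct. They need not be roots of `g i`. -/
structure IsNodeSystem (σ : J → I) (d : J → K) (g : I → K[X]) : Prop where
  monic (i : I) : (g i).Monic
  natDegree_eq (i : I) : (g i).natDegree = (block σ i).card
  injOn (i : I) : Set.InjOn d (block σ i)
  ne_zero (x : J) : d x ≠ 0

lemma IsNodeSystem.remainderValues_surjective (h : IsNodeSystem σ d g) :
    Function.Surjective (remainderValues σ d g) := by
  classical
  intro v
  refine ⟨fun i => Lagrange.interpolate (block σ i) d v, funext fun x => ?_⟩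
  have hdegree : (Lagrange.interpolate (block σ (σ x)) d v).degree < (g (σ x)).degree := by
    rw [degree_eq_natDegree (h.monic _).ne_zero, h.natDegree_eq]
    exact Lagrange.degree_interpolate_lt _ (h.injOn _)
  rw [remainderValues_apply, (modByMonic_eq_self_iff (h.monic _)).2 hdegree,
    Lagrange.eval_interpolate_at_node _ (h.injOn _) (by simp)]

/-- The columns of the perturbation which turns `diagonal d` into multiplication by `X` on
`⨁ i, K[X] ⧸ (g i)`. -/
def blockColumns (σ : J → I) (d : J → K) (g : I → K[X]) : Matrix J I K :=
  of fun x i => if σ x = i then -(g i).eval (d x) else 0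

variable [DecidableEq J]

/-- The rows of the perturbation which turns `diagonal d` into multiplication by `X` on
`⨁ i, K[X] ⧸ (g i)`: up to the factors `(d x)⁻¹`, the `i`-th row reads off the coefficient of degree
`natDegree (g i) - 1` of the remainder in the block `i`. -/
def blockRows (σ : J → I) (d : J → K) : Matrix I J K :=
  of fun i x => if σ x = i then Lagrange.nodalWeight (block σ i) d x * (d x)⁻¹ else 0

lemma IsNodeSystem.blockRows_mul_blockColumns (h : IsNodeSystem σ d g) :
    blockRows σ d * blockColumns σ d g =
      diagonal fun i => (g i).eval 0 / (∏ x ∈ block σ i, -d x) - 1 := by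
  ext i j
  rw [mul_apply]
  obtain rfl | hij := eq_or_ne i j
  · have hsum := sum_nodalWeight_mul_inv_mul_eval (h.injOn i) (h.monic i) (h.natDegree_eq i)
      (x := 0) fun x _ => (h.ne_zero x).symm
    simp only [zero_sub] at hsum
    rw [diagonal_apply_eq, ← hsum, Finset.sum_filter]
    refine Finset.sum_congr rfl fun x _ => ?_
    simp only [blockRows, blockColumns, of_apply]
    split_ifs <;> simp [inv_neg]
  · rw [diagonal_apply_ne _ hij]
    refine Finset.sum_eq_zero fun x _ => ?_
    simp only [blockRows, blockColumns, of_apply]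
    split_ifs with hi hj
    · exact absurd (hi.symm.trans hj) hij
    all_goals simp

variable [Fintype I]

/-- The matrix of multiplication by `X` on `⨁ i, K[X] ⧸ (g i)` in the coordinates
`remainderValues`. -/
def blockCompanion (σ : J → I) (d : J → K) (g : I → K[X]) : Matrix J J K :=
  (1 + blockColumns σ d g * blockRows σ d) * diagonal d

lemma blockCompanion_mulVec_apply (hd0 : ∀ x, d x ≠ 0) (v : J → K) (x : J) :
    (blockCompanion σ d g *ᵥ v) x = d x * v x -
      (g (σ x)).eval (d x) *
        ∑ y ∈ block σ (σ x), Lagrange.nodalWeight (block σ (σ x)) d y * v y := by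
  have hrow (i : I) : (blockRows σ d *ᵥ (diagonal d *ᵥ v)) i =
      ∑ y ∈ block σ i, Lagrange.nodalWeight (block σ i) d y * v y := by
    rw [Finset.sum_filter]
    refine Finset.sum_congr rfl fun y _ => ?_
    simp only [mulVec_diagonal, blockRows, of_apply]
    split_ifs
    · rw [mul_assoc, inv_mul_cancel_left₀ (hd0 y)]
    · rw [zero_mul]
  rw [blockCompanion, ← mulVec_mulVec, add_mulVec, one_mulVec, ← mulVec_mulVec, Pi.add_apply,
    mulVec_diagonal, sub_eq_add_neg, ← hrow]
  simp [mulVec, dotProduct, blockColumns]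

theorem IsNodeSystem.blockCompanion_mulVec_remainderValues (h : IsNodeSystem σ d g)
    (f : I → K[X]) :
    blockCompanion σ d g *ᵥ remainderValues σ d g f =
      remainderValues σ d g fun i => X * f i := by
  funext x
  have hx : 0 < (g (σ x)).natDegree := h.natDegree_eq _ ▸ Finset.card_pos.2 ⟨x, by simp⟩
  have hlt : (f (σ x) %ₘ g (σ x)).degree < (block σ (σ x)).card := by
    rw [← h.natDegree_eq, ← degree_eq_natDegree (h.monic _).ne_zero]
    exact degree_modByMonic_lt _ (h.monic _)
  have hsum : ∑ y ∈ block σ (σ x), Lagrange.nodalWeight (block σ (σ x)) d y *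
      remainderValues σ d g f y = (f (σ x) %ₘ g (σ x)).coeff ((g (σ x)).natDegree - 1) := by
    rw [h.natDegree_eq, ← sum_nodalWeight_mul_eval (h.injOn _) hlt]
    refine Finset.sum_congr rfl fun y hy => ?_
    rw [remainderValues_apply, (Finset.mem_filter.1 hy).2]
  rw [blockCompanion_mulVec_apply h.ne_zero, hsum, remainderValues_apply, remainderValues_apply,
    X_mul_modByMonic (h.monic _) hx, eval_sub, eval_mul, eval_mul, eval_X, eval_C,
    mul_comm (eval _ _)]

theorem IsNodeSystem.aeval_blockCompanion_mulVec_remainderValues (h : IsNodeSystem σ d g)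
    (p : K[X]) (f : I → K[X]) :
    aeval (blockCompanion σ d g) p *ᵥ remainderValues σ d g f =
      remainderValues σ d g fun i => p * f i := by
  induction p using Polynomial.induction_on with
  | C a =>
    rw [aeval_C, Algebra.algebraMap_eq_smul_one, smul_mulVec, one_mulVec, ← map_smul]
    simp only [C_mul', Pi.smul_def]
  | add p q hp hq =>
    simp only [map_add, add_mulVec, hp, hq, add_mul]
    exact (map_add (remainderValues σ d g) _ _).symm
  | monomial n a ih =>
    rw [pow_succ', mul_left_comm, map_mul (aeval _), aeval_X, ← mulVec_mulVec, ih,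
      h.blockCompanion_mulVec_remainderValues]
    simp only [mul_assoc]

theorem IsNodeSystem.aeval_blockCompanion_eq_zero (h : IsNodeSystem σ d g) {p : K[X]}
    (hp : ∀ i, g i ∣ p) : aeval (blockCompanion σ d g) p = 0 := by
  refine ext_of_mulVec_single fun x => ?_
  obtain ⟨f, hf⟩ := h.remainderValues_surjective (Pi.single x 1)
  rw [← hf, h.aeval_blockCompanion_mulVec_remainderValues, zero_mulVec]
  exact remainderValues_eq_zero h.monic fun i => (hp i).mul_right _

theorem IsNodeSystem.rank_aeval_blockCompanion_le_one (h : IsNodeSystem σ d g) {p : K[X]} {b : K}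
    {i₀ : I} (hp : ∀ i ≠ i₀, g i ∣ p) (hp₀ : g i₀ ∣ p * (X - C b)) :
    (aeval (blockCompanion σ d g) p).rank ≤ 1 := by
  suffices hrange : LinearMap.range (aeval (blockCompanion σ d g) p).mulVecLin ≤
      K ∙ remainderValues σ d g fun _ => p from
    (Submodule.finrank_mono hrange).trans ((finrank_span_le_card _).trans_eq (by simp))
  rintro _ ⟨v, rfl⟩
  obtain ⟨f, rfl⟩ := h.remainderValues_surjective v
  refine Submodule.mem_span_singleton.2 ⟨(f i₀).eval b, ?_⟩
  rw [mulVecLin_apply, h.aeval_blockCompanion_mulVec_remainderValues, ← map_smul,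
    ← sub_eq_zero, ← map_sub]
  refine remainderValues_eq_zero h.monic fun i => ?_
  rw [Pi.sub_apply, Pi.smul_apply, smul_eq_C_mul, mul_comm, ← mul_sub]
  obtain rfl | hi := eq_or_ne i i₀
  · rw [← neg_sub, mul_neg, dvd_neg]
    exact hp₀.trans (mul_dvd_mul_left p X_sub_C_dvd_sub_C_eval)
  · exact (hp i hi).mul_right _

end BlockCompanion

section MatrixPolynomials

open Matrix Polynomial

variable {K J : Type*} [Field K] [Fintype J] [DecidableEq J]

lemma isUnit_aeval_diagonal {d : J → K} {h : K[X]} (hd : ∀ x, h.eval (d x) ≠ 0) :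
    IsUnit (aeval (diagonal d) h) := by
  have hdiagonal : aeval (diagonal d) h = diagonal fun x => h.eval (d x) := by
    rw [← diagonalAlgHom_apply (R := K), aeval_algHom_apply, diagonalAlgHom_apply]
    congr 1
    funext x
    rw [← coe_aeval_eq_eval]
    exact (aeval_algHom_apply (Pi.evalAlgHom K (fun _ => K) x) d h).symm
  rw [hdiagonal, isUnit_diagonal, Pi.isUnit_iff]
  exact fun x => (hd x).isUnit

lemma rank_smul_inv_pow_sub_one_le {A : Matrix J J K} (hA : IsUnit A) (c : K) (k : ℕ) :
    (c • (A ^ k)⁻¹ - 1).rank ≤ (aeval A (X ^ k - C c)).rank := by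
  have hdet : IsUnit (A ^ k).det := (isUnit_iff_isUnit_det _).1 (hA.pow k)
  have hfactor : c • (A ^ k)⁻¹ - 1 = -(A ^ k)⁻¹ * aeval A (X ^ k - C c) := by
    rw [map_sub, aeval_X_pow, aeval_C, Algebra.algebraMap_eq_smul_one, mul_sub, neg_mul,
      nonsing_inv_mul _ hdet, Matrix.mul_smul, mul_one, smul_neg]
    abel
  rw [hfactor]
  exact rank_mul_le_right _ _

end MatrixPolynomials

section NodeLayout

open Matrix Polynomial

/-- The block of each of the `k * ℓ + 1` nodes: every block has `k` of the first `k * ℓ` nodes, and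
the last node is added to the block `i₀`. -/
def nodeBlock (k : ℕ) {ℓ : ℕ} (i₀ : Fin ℓ) : Fin (k * ℓ + 1) → Fin ℓ :=
  Fin.snoc (α := fun _ => Fin ℓ) (fun x => (finProdFinEquiv.symm x).2) i₀

/-- The index of the value taken at each of the `k * ℓ + 1` nodes: the first `k` values occur once
in every block, and the last one only at the last node. -/
def nodeIndex (k ℓ : ℕ) : Fin (k * ℓ + 1) → Fin (k + 1) :=
  Fin.snoc (α := fun _ => Fin (k + 1)) (fun x => (finProdFinEquiv.symm x).1.castSucc) (Fin.last k)

variable {k ℓ : ℕ}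

@[to_additive]
lemma prod_nodeBlock_nodeIndex {M : Type*} [CommMonoid M] (i₀ : Fin ℓ)
    (F : Fin ℓ → Fin (k + 1) → M) :
    ∏ x, F (nodeBlock k i₀ x) (nodeIndex k ℓ x) =
      (∏ i, ∏ j : Fin k, F i j.castSucc) * F i₀ (Fin.last k) := by
  simp only [Fin.prod_univ_castSucc, nodeBlock, nodeIndex, Fin.snoc_castSucc, Fin.snoc_last]
  rw [Finset.prod_comm, ← Fintype.prod_prod_type', ← finProdFinEquiv.symm.prod_comp]

@[to_additive]
lemma prod_block_nodeBlock {M : Type*} [CommMonoid M] (i₀ i : Fin ℓ) (f : Fin (k + 1) → M) :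
    ∏ x ∈ block (nodeBlock k i₀) i, f (nodeIndex k ℓ x) =
      (∏ j : Fin k, f j.castSucc) * if i = i₀ then f (Fin.last k) else 1 := by
  rw [Finset.prod_filter,
    prod_nodeBlock_nodeIndex i₀ fun i' j => if i' = i then f j else 1]
  simp [Finset.prod_ite_irrel, eq_comm]

lemma nodeBlock_nodeIndex_injective (k : ℕ) (i₀ : Fin ℓ) :
    Function.Injective fun x => (nodeBlock k i₀ x, nodeIndex k ℓ x) := by
  have hsnoc : (fun x => (nodeBlock k i₀ x, nodeIndex k ℓ x)) =
      Fin.snoc (α := fun _ => Fin ℓ × Fin (k + 1))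
        (fun x => Prod.map id Fin.castSucc (finProdFinEquiv.symm x).swap) (i₀, Fin.last k) := by
    funext x
    induction x using Fin.lastCases <;> simp [nodeBlock, nodeIndex]
  rw [hsnoc, Fin.snoc_injective_iff]
  refine ⟨((Function.injective_id.prodMap (Fin.castSucc_injective k)).comp
    Prod.swap_injective).comp finProdFinEquiv.symm.injective, ?_⟩
  rintro ⟨x, hx⟩
  exact Fin.castSucc_ne_last _ (congrArg Prod.snd hx)

lemma ncard_nodeIndex_eq (k : ℕ) (hℓ : 0 < ℓ) (j : Fin (k + 1)) :
    {x | nodeIndex k ℓ x = j}.ncard = if (j : ℕ) < k then ℓ else 1 := by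
  have hcard := sum_nodeBlock_nodeIndex (⟨0, hℓ⟩ : Fin ℓ) fun _ j' => if j' = j then 1 else 0
  rw [Finset.sum_boole, Nat.cast_id, ← Set.ncard_coe_finset, Finset.coe_filter_univ] at hcard
  rw [hcard]
  induction j using Fin.lastCases with
  | last => simp
  | cast j => simp [(Fin.castSucc_ne_last j).symm]

end NodeLayout

section Turbine

open Matrix Polynomial

variable {K : Type*} [Field K] {k ℓ : ℕ} {b c : K}

/-- The minimal polynomial of the matrix `Ω₀` to be constructed on each block:
`(X ^ k - c) * (X - b)` on the block `i₀`, and `X ^ k - c` on the others, so that `Ω₀ ^ k - c` has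
rank one. -/
noncomputable def blockPolynomial (k : ℕ) (b c : K) (i₀ i : Fin ℓ) : K[X] :=
  (X ^ k - C c) * if i = i₀ then X - C b else 1

lemma blockPolynomial_dvd (i₀ i : Fin ℓ) :
    blockPolynomial k b c i₀ i ∣ (X ^ k - C c) * (X - C b) := by
  rw [blockPolynomial]
  split_ifs
  · exact dvd_rfl
  · exact mul_dvd_mul_left _ (one_dvd _)

variable {ξ : Fin (k + 1) → K}

lemma isNodeSystem_blockPolynomial (hk : k ≠ 0) (b c : K) (i₀ : Fin ℓ) (hξ0 : ∀ j, ξ j ≠ 0)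
    (hξinj : Function.Injective ξ) :
    IsNodeSystem (nodeBlock k i₀) (ξ ∘ nodeIndex k ℓ) (blockPolynomial k b c i₀) where
  monic i := by
    rw [blockPolynomial]
    split_ifs
    exacts [(monic_X_pow_sub_C c hk).mul (monic_X_sub_C b),
      (monic_X_pow_sub_C c hk).mul monic_one]
  natDegree_eq i := by
    rw [Finset.card_eq_sum_ones, sum_block_nodeBlock i₀ i fun _ => 1, blockPolynomial]
    split_ifs
    · rw [(monic_X_pow_sub_C c hk).natDegree_mul (monic_X_sub_C b)]
      simp
    · simp
  injOn i x hx y hy hxy := by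
    have hblock : nodeBlock k i₀ x = nodeBlock k i₀ y := by simp_all
    exact nodeBlock_nodeIndex_injective k i₀ (Prod.ext hblock (hξinj hxy))
  ne_zero x := hξ0 _

lemma eval_zero_blockPolynomial_div (hk : k ≠ 0) (hξ0 : ∀ j, ξ j ≠ 0) (i₀ i : Fin ℓ) :
    (blockPolynomial k b c i₀ i).eval 0 /
        (∏ x ∈ block (nodeBlock k i₀) i, -(ξ ∘ nodeIndex k ℓ) x) =
      (-1) ^ (k - 1) * c * (∏ j : Fin k, ξ j.castSucc)⁻¹ *
        if i = i₀ then b / ξ (Fin.last k) else 1 := by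
  have hprod : ∏ j : Fin k, ξ j.castSucc ≠ 0 := Finset.prod_ne_zero_iff.2 fun j _ => hξ0 _
  have hξlast : ξ (Fin.last k) ≠ 0 := hξ0 _
  have hsign : (-1 : K) ^ k * (-1) ^ (k - 1) = -1 := by
    rw [← mul_pow_sub_one hk, mul_assoc, ← mul_pow, neg_mul_neg, one_mul, one_pow, mul_one]
  simp only [Function.comp_apply, prod_block_nodeBlock i₀ i fun j => -ξ j, Finset.prod_neg,
    Finset.card_univ, Fintype.card_fin]
  rw [div_eq_iff]
  · simp only [blockPolynomial, eval_mul, eval_sub, eval_pow, eval_X, eval_C, zero_pow hk]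
    split_ifs
    · simp only [zero_sub, eval_sub, eval_X, eval_C, mul_neg, neg_mul, neg_neg]
      field_simp
      linear_combination c * b * hsign
    · simp only [zero_sub, eval_one, mul_one]
      field_simp
      linear_combination -c * hsign
  · split_ifs <;> simp [hprod, hξlast]

lemma blockRows_mul_blockColumns_blockPolynomial (hk : k ≠ 0) (hξ0 : ∀ j, ξ j ≠ 0)
    (hξinj : Function.Injective ξ) {η : K}
    (hη : η = (-1) ^ (k - 1) * c * (∏ j : Fin k, ξ j.castSucc)⁻¹) (i₀ : Fin ℓ) :
    blockRows (nodeBlock k i₀) (ξ ∘ nodeIndex k ℓ) *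
        blockColumns (nodeBlock k i₀) (ξ ∘ nodeIndex k ℓ) (blockPolynomial k b c i₀) =
      (η - 1) • 1 + single i₀ i₀ (η * (b / ξ (Fin.last k)) - η) := by
  rw [(isNodeSystem_blockPolynomial hk b c i₀ hξ0 hξinj).blockRows_mul_blockColumns,
    smul_one_eq_diagonal, ← diagonal_single, diagonal_add]
  congr 1
  funext i
  rw [eval_zero_blockPolynomial_div hk hξ0, ← hη]
  obtain rfl | hi := eq_or_ne i i₀
  · rw [if_pos rfl, Pi.single_eq_same]
    ring
  · rw [if_neg hi, Pi.single_eq_of_ne hi, mul_one, add_zero]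

lemma mul_prod_div_eq_of_fuchs (hc : c ≠ 0) (hξ0 : ∀ j, ξ j ≠ 0) {η : K}
    (hη : η = (-1) ^ (k - 1) * c * (∏ j : Fin k, ξ j.castSucc)⁻¹) {lam : Fin ℓ → K}
    (hfuchs : (∏ i, lam i) * (∏ j : Fin k, ξ j.castSucc ^ ℓ) * ξ (Fin.last k) =
      (-1) ^ ((k - 1) * ℓ) * b * c ^ ℓ) :
    η * ∏ i, lam i / η = η * (b / ξ (Fin.last k)) := by
  have hprod : ∏ j : Fin k, ξ j.castSucc ≠ 0 := Finset.prod_ne_zero_iff.2 fun j _ => hξ0 _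
  have hη0 : η ≠ 0 := by simp [hη, hc, hprod]
  have hηpow : η ^ ℓ * (∏ j : Fin k, ξ j.castSucc ^ ℓ) = (-1) ^ ((k - 1) * ℓ) * c ^ ℓ := by
    rw [Finset.prod_pow, ← mul_pow, hη, inv_mul_cancel_right₀ hprod, mul_pow, pow_mul]
  rw [Finset.prod_div_distrib, Fin.prod_const]
  congr 1
  rw [div_eq_div_iff (pow_ne_zero _ hη0) (hξ0 _)]
  refine mul_right_cancel₀ (b := ∏ j : Fin k, ξ j.castSucc ^ ℓ) ?_ ?_
  · rw [Finset.prod_pow]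
    exact pow_ne_zero _ hprod
  · linear_combination hfuchs - b * hηpow

lemma det_diagonal_nodeIndex (i₀ : Fin ℓ) :
    (diagonal (ξ ∘ nodeIndex k ℓ)).det =
      (∏ j : Fin k, ξ j.castSucc ^ ℓ) * ξ (Fin.last k) := by
  rw [det_diagonal, Finset.prod_pow]
  exact (prod_nodeBlock_nodeIndex i₀ fun _ j => ξ j).trans (by simp)

lemma det_smul_inv_pow {b : K} {A : Matrix (Fin (k * ℓ + 1)) (Fin (k * ℓ + 1)) K}
    (hc : c ≠ 0) (hdet : A.det = (-1) ^ ((k - 1) * ℓ) * b * c ^ ℓ) :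
    (c • (A ^ k)⁻¹).det = c * (b ^ k)⁻¹ := by
  have hsign : ((-1 : K) ^ ((k - 1) * ℓ)) ^ k = 1 := by
    rw [← pow_mul, mul_right_comm, mul_comm (k - 1), pow_mul,
      (Nat.even_mul_pred_self k).neg_one_pow, one_pow]
  have hpow : (A ^ k).det = c ^ (k * ℓ) * b ^ k := by
    rw [det_pow, hdet, mul_pow, mul_pow, hsign, one_mul, ← pow_mul, mul_comm, mul_comm ℓ]
  rw [det_smul, Fintype.card_fin, det_nonsing_inv, Ring.inverse_eq_inv', hpow, mul_inv, pow_succ',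
    mul_assoc, mul_inv_cancel_left₀ (pow_ne_zero _ hc)]

theorem exists_prod_one_add_vecMulVec_mul_diagonal_eq_blockCompanion (hk : k ≠ 0) (hc : c ≠ 0)
    (hξ0 : ∀ j, ξ j ≠ 0) (hξinj : Function.Injective ξ) (hξb : ξ (Fin.last k) ≠ b) {η : K}
    (hη : η = (-1) ^ (k - 1) * c * (∏ j : Fin k, ξ j.castSucc)⁻¹) {lam : Fin ℓ → K}
    (hlamη : ∀ i, lam i ≠ η)
    (hfuchs : (∏ i, lam i) * (∏ j : Fin k, ξ j.castSucc ^ ℓ) * ξ (Fin.last k) =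
      (-1) ^ ((k - 1) * ℓ) * b * c ^ ℓ) (i₀ : Fin ℓ) :
    ∃ w ψ : Fin ℓ → Fin (k * ℓ + 1) → K,
      (List.ofFn fun i => 1 + vecMulVec (w i) (ψ i)).prod * diagonal (ξ ∘ nodeIndex k ℓ) =
        blockCompanion (nodeBlock k i₀) (ξ ∘ nodeIndex k ℓ) (blockPolynomial k b c i₀) ∧
      (∀ i, ψ i ⬝ᵥ w i = lam i - 1) ∧ Pairwise fun i j => ψ i ⬝ᵥ w j ≠ 0 := by
  have hη0 : η ≠ 0 := by simp [hη, hc, Finset.prod_ne_zero_iff, hξ0]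
  have hscale := mul_prod_div_eq_of_fuchs hc hξ0 hη hfuchs
  have hne : η * ∏ i, lam i / η ≠ η := by
    rw [hscale, ne_eq, mul_eq_left₀ hη0, div_eq_one_iff_eq (hξ0 _)]
    exact hξb.symm
  have hgram := blockRows_mul_blockColumns_blockPolynomial (b := b) hk hξ0 hξinj hη i₀
  rw [← hscale] at hgram
  obtain ⟨w, ψ, hprod, hpairing⟩ :=
    exists_prod_one_add_vecMulVec_eq_one_add_mul hη0 hlamη i₀ hne hgram
  exact ⟨w, ψ, by rw [hprod, blockCompanion], hpairing⟩

theorem rank_smul_inv_pow_blockCompanion_sub_one (hk : k ≠ 0) (hc : c ≠ 0)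
    (hξ0 : ∀ j, ξ j ≠ 0) (hξinj : Function.Injective ξ) (hb : b ≠ 0) (hbk : b ^ k ≠ c)
    {i₀ : Fin ℓ} {A : Matrix (Fin (k * ℓ + 1)) (Fin (k * ℓ + 1)) K}
    (hA : A = blockCompanion (nodeBlock k i₀) (ξ ∘ nodeIndex k ℓ) (blockPolynomial k b c i₀))
    (hdet : A.det = (-1) ^ ((k - 1) * ℓ) * b * c ^ ℓ) :
    (c • (A ^ k)⁻¹ - 1).rank = 1 := by
  have hunit : IsUnit A := (isUnit_iff_isUnit_det A).2 (by simp [hdet, hb, hc])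
  refine rank_sub_one_eq_one_of_det_ne_one
    ((rank_smul_inv_pow_sub_one_le hunit c k).trans ?_) ?_
  · rw [hA]
    refine (isNodeSystem_blockPolynomial hk b c i₀ hξ0 hξinj).rank_aeval_blockCompanion_le_one
      (fun i hi => ?_) (blockPolynomial_dvd i₀ i₀)
    rw [blockPolynomial, if_neg hi, mul_one]
  · rw [det_smul_inv_pow hc hdet, ne_eq, mul_inv_eq_one₀ (pow_ne_zero k hb)]
    exact hbk.symm

end Turbine

section Realization

open Matrix Polynomial

theorem stmt_14_general {K : Type*} [Field K] {k ℓ : ℕ} (hk : 1 ≤ k) (hℓ : 1 ≤ ℓ) {c : K}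
    (hc : c ≠ 0) {b : K} (hb : b ≠ 0) {lam : Fin ℓ → K} {ξ : Fin (k + 1) → K} {η : K}
    (hη : η = (-1) ^ (k - 1) * c * (∏ j : Fin k, ξ j.castSucc)⁻¹)
    (hlam0 : ∀ i, lam i ≠ 0) (hlam1 : ∀ i, lam i ≠ 1) (hlamη : ∀ i, lam i ≠ η)
    (hξ0 : ∀ j, ξ j ≠ 0) (hξinj : Function.Injective ξ) (hξb : ∀ j, ξ j ≠ b)
    (hbk : b ^ k ≠ c) (hξk : ∀ j, ξ j ^ k ≠ c)
    (hfuchs : (∏ i, lam i) * (∏ j : Fin k, ξ j.castSucc ^ ℓ) * ξ (Fin.last k) =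
      (-1) ^ ((k - 1) * ℓ) * b * c ^ ℓ) :
    ∃ (X : Fin ℓ → Matrix (Fin (k * ℓ + 1)) (Fin (k * ℓ + 1)) K)
      (Ω : Matrix (Fin (k * ℓ + 1)) (Fin (k * ℓ + 1)) K),
      IsUnit Ω ∧
      (∀ i, IsUnit (X i) ∧ (X i - 1).rank = 1 ∧ (X i).det = lam i) ∧
      ((c • (Ω ^ k)⁻¹ - 1).rank = 1 ∧ (c • (Ω ^ k)⁻¹).det = c * (b ^ k)⁻¹) ∧
      (∃ (P : Matrix (Fin (k * ℓ + 1)) (Fin (k * ℓ + 1)) K) (d : Fin (k * ℓ + 1) → K),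
        IsUnit P ∧ ((List.ofFn X).prod)⁻¹ * Ω = P * diagonal d * P⁻¹ ∧
        ∀ j : Fin (k + 1), {p | d p = ξ j}.ncard = if (j : ℕ) < k then ℓ else 1) ∧
      (∀ U : Submodule K (Fin (k * ℓ + 1) → K),
        (∀ i, U.map (X i).mulVecLin ≤ U) → U.map Ω.mulVecLin ≤ U → U = ⊥ ∨ U = ⊤) := by
  have hk0 : k ≠ 0 := Nat.one_le_iff_ne_zero.1 hk
  obtain ⟨w, ψ, hΩ, hψw, hoff⟩ := exists_prod_one_add_vecMulVec_mul_diagonal_eq_blockCompanion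
    hk0 hc hξ0 hξinj (hξb _) hη hlamη hfuchs ⟨0, hℓ⟩
  have hlam (i) : 1 + ψ i ⬝ᵥ w i = lam i := by rw [hψw, add_sub_cancel]
  set C := (List.ofFn fun i => 1 + vecMulVec (w i) (ψ i)).prod with hCdef
  have hCdet : C.det = ∏ i, lam i := by simp only [hCdef, det_prod_one_add_vecMulVec, hlam]
  have hCunit : IsUnit C.det := hCdet ▸ (Finset.prod_ne_zero_iff.2 fun i _ => hlam0 i).isUnit
  have hΩdet : (C * diagonal (ξ ∘ nodeIndex k ℓ)).det = (-1) ^ ((k - 1) * ℓ) * b * c ^ ℓ := by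
    rw [det_mul, hCdet, det_diagonal_nodeIndex ⟨0, hℓ⟩, ← mul_assoc, hfuchs]
  refine ⟨fun i => 1 + vecMulVec (w i) (ψ i), C * diagonal (ξ ∘ nodeIndex k ℓ),
    (isUnit_iff_isUnit_det _).2 (by simp [hΩdet, hb, hc]), fun i => ⟨?_, ?_, ?_⟩,
    ⟨rank_smul_inv_pow_blockCompanion_sub_one hk0 hc hξ0 hξinj hb hbk hΩ hΩdet,
      det_smul_inv_pow hc hΩdet⟩, ⟨1, ξ ∘ nodeIndex k ℓ, isUnit_one, ?_, fun j => ?_⟩,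
    fun U hUX hUΩ => ?_⟩
  · simp [isUnit_iff_isUnit_det, det_one_add_vecMulVec, hlam, hlam0]
  · exact rank_one_add_vecMulVec_sub_one (hψw i ▸ sub_ne_zero.2 (hlam1 i))
  · rw [det_one_add_vecMulVec, hlam]
  · rw [nonsing_inv_mul_cancel_left _ _ hCunit, inv_one, one_mul, mul_one]
  · simp only [Function.comp_apply, hξinj.eq_iff, ncard_nodeIndex_eq k hℓ]
  · refine eq_bot_or_eq_top_of_pseudoReflections_invariant hoff
      ((isUnit_iff_isUnit_det C).2 hCunit) (h := (X ^ k - Polynomial.C c) * (X - Polynomial.C b))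
      ?_ (isUnit_aeval_diagonal fun x => ?_) hUX hUΩ
    · rw [hΩ]
      exact (isNodeSystem_blockPolynomial hk0 b c _ hξ0 hξinj).aeval_blockCompanion_eq_zero
        fun i => blockPolynomial_dvd _ i
    · simp [sub_eq_zero, hξk, hξb]

end Realization

/-- main construction theorem for turbines with shaft T*_{n,k,ℓ}:
realization of the numerical local data (ε; b; λ₁,…,λ_ℓ; ξ₁,…,ξ_{k+1}; ℓ,…,ℓ,1)
by pseudo-reflections X₁,…,X_ℓ and a matrix Ω₀ acting irreducibly on ℂ^{kℓ+1}. -/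
theorem stmt_14 {k ℓ : ℕ} (hk : 1 ≤ k) (hℓ : 1 ≤ ℓ) (ε : ℂ) (hε : ε ≠ 0) (r : ℤ)
    (b : ℂ) (lam : Fin ℓ → ℂ) (ξ : Fin (k + 1) → ℂ) (η₁ η₂ : ℂ)
    (hη₁ : η₁ = (-1 : ℂ) ^ (k - 1) * ε ^ r * (∏ j : Fin k, ξ j.castSucc)⁻¹)
    (hη₂ : η₂ = (-1 : ℂ) ^ k * ε ^ r * b * (∏ j, ξ j)⁻¹)
    (hb : b ≠ 0) (hlam0 : ∀ i, lam i ≠ 0)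
    (hlam1 : ∀ i, lam i ≠ 1) (hlamη : ∀ i, lam i ≠ η₁)
    (hη₁1 : η₁ ≠ 1) (hη₂1 : η₂ ≠ 1) (hηη : η₁ ≠ η₂)
    (hξ0 : ∀ j, ξ j ≠ 0) (hξinj : Function.Injective ξ)
    (hξb : ∀ j, ξ j ≠ b)
    (hbk : b ^ k ≠ ε ^ r) (hξk : ∀ j, ξ j ^ k ≠ ε ^ r)
    (hξsum : ∑ j : Fin k, ξ j.castSucc ≠ 0)
    (hfuchs : (∏ i, lam i) * (∏ j : Fin k, ξ j.castSucc ^ ℓ) * ξ (Fin.last k) =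
      (-1 : ℂ) ^ ((k - 1) * ℓ) * b * (ε ^ r) ^ ℓ) :
    ∃ (X : Fin ℓ → Matrix (Fin (k * ℓ + 1)) (Fin (k * ℓ + 1)) ℂ)
      (Ω : Matrix (Fin (k * ℓ + 1)) (Fin (k * ℓ + 1)) ℂ),
      IsUnit Ω ∧
      (∀ i, IsUnit (X i) ∧ (X i - 1).rank = 1 ∧ (X i).det = lam i) ∧
      ((((ε ^ r) • (Ω ^ k)⁻¹ : Matrix (Fin (k * ℓ + 1)) (Fin (k * ℓ + 1)) ℂ) - 1).rank = 1 ∧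
        ((ε ^ r) • (Ω ^ k)⁻¹ : Matrix (Fin (k * ℓ + 1)) (Fin (k * ℓ + 1)) ℂ).det =
          ε ^ r * (b ^ k)⁻¹) ∧
      (∃ (P : Matrix (Fin (k * ℓ + 1)) (Fin (k * ℓ + 1)) ℂ) (d : Fin (k * ℓ + 1) → ℂ),
        IsUnit P ∧
        ((List.ofFn X).prod)⁻¹ * Ω = P * Matrix.diagonal d * P⁻¹ ∧
        ∀ j : Fin (k + 1),
          ({p | d p = ξ j}).ncard = if (j : ℕ) < k then ℓ else 1) ∧
      (∀ U : Submodule ℂ (Fin (k * ℓ + 1) → ℂ),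
        (∀ i, U.map (X i).mulVecLin ≤ U) → U.map Ω.mulVecLin ≤ U →
          U = ⊥ ∨ U = ⊤) :=
  stmt_14_general hk hℓ (zpow_ne_zero r hε) hb hη₁ hlam0 hlam1 hlamη hξ0 hξinj hξb hbk hξk hfuchs
end

section
/- Let k ≥ 1 and ℓ ≥ 2 be integers, m = kℓ, let ε be a nonzero complex number, let r be an integer, and let λ₁, …, λ_ℓ, ξ₁, …, ξ_{k+1} be nonzero complex numbers. Set η₁ = (−1)^{k−1}·ε^r·(ξ₁⋯ξ_k)^{−1} and η₂ = (−1)^{k−1}·ε^r·ξ_{k+1}^{−1}·(ξ₁⋯ξ_{k−1})^{−1}. Assume: λ_i ≠ 1 and λ_i ≠ η₁ for all i; η₁ ≠ 1; η₂ ≠ 1; the ξ_j are pairwise distinct; ξ₁ + ⋯ + ξ_k ≠ 0; ξ₁ + ⋯ + ξ_{k−1} + ξ_{k+1} ≠ 0; ξ_j^k ≠ ε^r for all j; and the Fuchs relation λ₁⋯λ_ℓ·ξ₁^ℓ⋯ξ_{k−1}^ℓ·ξ_k^{ℓ−1}·ξ_{k+1} = (−1)^{(k−1)ℓ}·ε^{rℓ}.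 Then there exist pseudo-reflections X₁, …, X_ℓ ∈ GL_m(ℂ) with special eigenvalues λ₁, …, λ_ℓ respectively, and a matrix Ω₀ ∈ GL_m(ℂ) with Ω₀^k = ε^r·I_m, such that: (1) each of the k distinct k-th roots of ε^r is an eigenvalue of Ω₀ of multiplicity ℓ; (2) Ω∞ := (X₁⋯X_ℓ)^{−1}·Ω₀ is diagonalizable, with eigenvalues ξ₁, …, ξ_{k−1} each of multiplicity ℓ, ξ_k of multiplicity ℓ − 1, and ξ_{k+1} of multiplicity 1; (3) the family {X₁, …, X_ℓ, Ω₀} acts irreducibly on ℂ^m. -/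
/-
Write a pseudo-reflection as `1 + u φ` with `u` a column and `φ` a row. Two facts reduce the
theorem to small matrices. First, the product of the `1 + uᵢ φᵢ` is `1 + U Ψ`, where `U` has
columns `uᵢ` and `Ψ = (1 - T)⁻¹ Φ`, with `T` the strictly upper triangular part of the matrix `G`
of pairings `φᵢ uⱼ`. So, for prescribed `G`, a matrix `1 + E F` is such a product as soon as `F E`
is conjugate to `Ψ U = (1 - T)⁻¹ G`. Second, two companion matrices of size `k` differ only in
their last column, so their quotient is `1 + w v`, and `v w` is read off the determinants.

Take `Ω₀` to be `ℓ` companion blocks with the `k`-th roots of `ε ^ r` as eigenvalues, and `Ω∞` to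
consist of `ℓ - 1` companion blocks with eigenvalues `ξ₁, …, ξ_k` and one block from which `ξ_k` is
omitted instead of `ξ_{k+1}`. Then `Ω₀ = (1 + E F) Ω∞` with `F E` diagonal, with entries `η₁ - 1`
and once `η₂ - 1`. A matrix `G` with diagonal entries `λᵢ - 1` and no zero entry off the diagonal,
for which `(1 - T)⁻¹ G` has this spectrum, is written down explicitly; the Fuchs relation is the
determinant condition.

Let `W` be an invariant subspace. As the `φᵢ uⱼ` with `i ≠ j` are nonzero, either all `φᵢ` vanish on
`W` or all `uᵢ` lie in `W`. Hence `Ω₀` and `Ω∞` agree on `W` or on the quotient by `W`; since they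
have no common eigenvalue, `W` is zero or everything.
-/

section

open Matrix Polynomial

section Conjugacy

theorem isConj_aeval {R A : Type*} [CommSemiring R] [Semiring A] [Algebra R A] {a b : A}
    (h : IsConj a b) (p : R[X]) : IsConj (aeval a p) (aeval b p) := by
  obtain ⟨c, hc⟩ := h
  refine ⟨c, ?_⟩
  induction p using Polynomial.induction_on' with
  | add p q hp hq => simpa only [map_add] using hp.add_right hq
  | monomial n r =>
    simpa only [aeval_monomial] using
      SemiconjBy.mul_right (Algebra.commute_algebraMap_right r _) (hc.pow_right n)

variable {R K n : Type*} [CommRing R] [Field K] [Fintype n] [DecidableEq n]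

theorem aeval_diagonal (d : n → R) (p : R[X]) :
    aeval (diagonal d) p = diagonal fun i ↦ p.eval (d i) := by
  rw [← diagonalAlgHom_apply (R := R), aeval_algHom_apply, diagonalAlgHom_apply, aeval_pi_apply]
  rfl

theorem isConj_diagonal_aeval {d : n → R} {M : Matrix n n R} (h : IsConj (diagonal d) M)
    (p : R[X]) : IsConj (diagonal fun i ↦ p.eval (d i)) (aeval M p) :=
  aeval_diagonal d p ▸ isConj_aeval h p

theorem det_eq_of_isConj {M N : Matrix n n R} (h : IsConj M N) : M.det = N.det :=
  isConj_iff_eq.1 (detMonoidHom.map_isConj h)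

theorem rank_eq_of_isConj {M N : Matrix n n R} (h : IsConj M N) : M.rank = N.rank := by
  obtain ⟨c, hc⟩ := h
  have hcdet : IsUnit (c : Matrix n n R).det := (isUnit_iff_isUnit_det _).1 c.isUnit
  rw [← rank_mul_eq_right_of_isUnit_det _ M hcdet, hc.eq, rank_mul_eq_left_of_isUnit_det _ _ hcdet]

theorem isConj_iff_exists_isUnit {M N : Matrix n n R} :
    IsConj M N ↔ ∃ P : Matrix n n R, IsUnit P ∧ N = P * M * P⁻¹ := by
  constructor
  · rintro ⟨c, hc⟩
    refine ⟨c, c.isUnit, ?_⟩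
    rw [hc.eq, Matrix.mul_assoc, mul_nonsing_inv _ ((isUnit_iff_isUnit_det _).1 c.isUnit),
      Matrix.mul_one]
  · rintro ⟨_, ⟨c, rfl⟩, rfl⟩
    refine ⟨c, ?_⟩
    rw [SemiconjBy, Matrix.mul_assoc _ _ (c : Matrix n n R),
      nonsing_inv_mul _ ((isUnit_iff_isUnit_det _).1 c.isUnit), Matrix.mul_one]

theorem aeval_eq_zero_of_isConj_diagonal {d : n → R} {M : Matrix n n R}
    (h : IsConj (diagonal d) M) {p : R[X]} (hp : ∀ i, p.eval (d i) = 0) : aeval M p = 0 := by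
  obtain ⟨c, hc⟩ := isConj_diagonal_aeval h p
  simp only [hp, diagonal_zero, SemiconjBy, mul_zero] at hc
  exact c.isUnit.mul_left_eq_zero.1 hc.symm

theorem isUnit_aeval_of_isConj_diagonal {d : n → K} {M : Matrix n n K}
    (h : IsConj (diagonal d) M) {p : K[X]} (hp : ∀ i, p.eval (d i) ≠ 0) : IsUnit (aeval M p) := by
  rw [isUnit_iff_isUnit_det, ← det_eq_of_isConj (isConj_diagonal_aeval h p), det_diagonal]
  exact (Finset.prod_ne_zero_iff.2 fun i _ ↦ hp i).isUnit

theorem finrank_eigenspace_of_isConj_diagonal {d : n → K} {M : Matrix n n K}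
    (h : IsConj (diagonal d) M) (μ : K) :
    Module.finrank K (Module.End.eigenspace M.mulVecLin μ) = {i | d i = μ}.ncard := by
  classical
  have hsub : M.mulVecLin - μ • 1 = (aeval M (X - C μ)).mulVecLin := by
    refine LinearMap.ext fun v ↦ ?_
    simp [Algebra.algebraMap_eq_smul_one]
  have hrank : (aeval M (X - C μ)).rank = {i | d i ≠ μ}.ncard := by
    rw [← rank_eq_of_isConj (isConj_diagonal_aeval h _), rank_diagonal, Set.ncard_eq_toFinset_card',
      Fintype.card_subtype]
    simp [sub_ne_zero]
  have hnullity := (aeval M (X - C μ)).mulVecLin.finrank_range_add_finrank_ker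
  have hcompl := Set.ncard_add_ncard_compl {i | d i = μ}
  rw [← Matrix.rank, hrank, Module.finrank_fintype_fun_eq_card] at hnullity
  rw [Nat.card_eq_fintype_card, show {i | d i = μ}ᶜ = {i | d i ≠ μ} from rfl] at hcompl
  rw [Module.End.eigenspace_def, hsub]
  omega

end Conjugacy

section RankOne

variable {R K n : Type*} [CommRing R] [Field K] [Fintype n]

theorem rank_vecMulVec {m : Type*} {u : m → K} {v : n → K} (h : vecMulVec u v ≠ 0) :
    (vecMulVec u v).rank = 1 := by
  classical
  refine le_antisymm (rank_vecMulVec_le u v) (Nat.one_le_iff_ne_zero.2 fun hrank ↦ h ?_)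
  rw [Matrix.rank, Submodule.finrank_eq_zero, LinearMap.range_eq_bot] at hrank
  exact (toLin' (R := K)).injective (by simpa only [toLin'_apply', map_zero] using hrank)

variable [DecidableEq n]

theorem det_one_add_vecMulVec_s15 (u v : n → R) : (1 + vecMulVec u v).det = 1 + v ⬝ᵥ u := by
  rw [vecMulVec_eq Unit, det_one_add_replicateCol_mul_replicateRow]

theorem det_smul_one_add_vecMulVec (r : R) (u v : n → R) :
    (r • 1 + vecMulVec u v).det =
      r ^ Fintype.card n + v ⬝ᵥ u * r ^ (Fintype.card n - 1) := by
  have h := eval_charpoly (vecMulVec (-u) v) r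
  rw [charpoly_vecMulVec] at h
  simpa [neg_vecMulVec, ← smul_one_eq_diagonal, dotProduct_comm u] using h.symm

theorem isConj_single_vecMulVec (i₀ : n) {a b : n → K} (hba : b ⬝ᵥ a ≠ 0) (hb : b i₀ ≠ 0) :
    IsConj (vecMulVec a b) (diagonal (Pi.single i₀ (b ⬝ᵥ a))) := by
  set β := b ⬝ᵥ a
  let S : Matrix n n K := (1 - vecMulVec a (β⁻¹ • b)).updateRow i₀ (β⁻¹ • b)
  have hS (v : n → K) : S *ᵥ v =
      Function.update (v - (β⁻¹ * (b ⬝ᵥ v)) • a) i₀ (β⁻¹ * (b ⬝ᵥ v)) := by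
    simp [S, updateRow_mulVec, sub_mulVec, smul_mulVec, vecMulVec_mulVec, smul_smul]
  have hSa : S *ᵥ a = Pi.single i₀ 1 := by
    rw [hS, inv_mul_cancel₀ hba, one_smul, sub_self, Pi.single]
  have hS_inj : Function.Injective S.mulVec := by
    refine (injective_iff_map_eq_zero S.mulVecLin).2 fun v hv ↦ ?_
    rw [mulVecLin_apply] at hv
    have hbv : b ⬝ᵥ v = 0 := by
      simpa [hv, hba] using congrFun (hS v) i₀
    have hv_ne {i : n} (hi : i ≠ i₀) : v i = 0 := by
      simpa [hv, hbv, hi] using (congrFun (hS v) i).symm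
    have hv_self : v i₀ = 0 := by
      rwa [dotProduct, Fintype.sum_eq_single i₀ fun i hi ↦ by rw [hv_ne hi, mul_zero],
        mul_eq_zero_iff_left hb] at hbv
    ext i
    by_cases hi : i = i₀
    · rwa [hi]
    · exact hv_ne hi
  refine ⟨(mulVec_injective_iff_isUnit.1 hS_inj).unit, ?_⟩
  rw [IsUnit.unit_spec, SemiconjBy, mul_vecMulVec, hSa]
  ext i j
  by_cases hi : i = i₀
  · simp [hi, S, vecMulVec_apply, hba]
  · simp [hi, vecMulVec_apply]

end RankOne

section ProductOfPseudoReflections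

/-- The part of `M` strictly above the diagonal. For `M` the matrix of pairings `φ i ⬝ᵥ u j` it
controls the expansion of the ordered product of the `1 + vecMulVec (u i) (φ i)`. -/
def strictUpper {ℓ : ℕ} {R : Type*} [Zero R] (M : Matrix (Fin ℓ) (Fin ℓ) R) :
    Matrix (Fin ℓ) (Fin ℓ) R :=
  of fun i j ↦ if i < j then M i j else 0

variable {R n : Type*} [CommRing R] [Fintype n] [DecidableEq n]

theorem det_one_sub_strictUpper {ℓ : ℕ} (M : Matrix (Fin ℓ) (Fin ℓ) R) :
    (1 - strictUpper M).det = 1 := by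
  rw [det_of_isUpperTriangular]
  · simp [strictUpper]
  · intro i j hij
    have hji : j < i := hij
    simp [strictUpper, hji.not_gt, hji.ne']

theorem prod_ofFn_one_add_vecMulVec {ℓ : ℕ} (u φ ψ : Fin ℓ → n → R)
    (hψ : ∀ i, ψ i = φ i + ∑ j, (if i < j then φ i ⬝ᵥ u j else 0) • ψ j) :
    (List.ofFn fun i ↦ 1 + vecMulVec (u i) (φ i)).prod = 1 + ∑ i, vecMulVec (u i) (ψ i) := by
  induction ℓ with
  | zero => simp
  | succ ℓ ih =>
    have htail := ih (Fin.tail u) (Fin.tail φ) (Fin.tail ψ) fun i ↦ by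
      simpa [Fin.sum_univ_succ, Fin.tail] using hψ i.succ
    have hhead : ψ 0 = φ 0 + ∑ j : Fin ℓ, (φ 0 ⬝ᵥ u j.succ) • ψ j.succ := by
      simpa [Fin.sum_univ_succ] using hψ 0
    have hmul (j : Fin ℓ) : vecMulVec (u 0) (φ 0) * vecMulVec (u j.succ) (ψ j.succ) =
        vecMulVec (u 0) ((φ 0 ⬝ᵥ u j.succ) • ψ j.succ) := vecMulVec_mul_vecMulVec ..
    have hsum : vecMulVec (u 0) (∑ j : Fin ℓ, (φ 0 ⬝ᵥ u j.succ) • ψ j.succ) =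
        ∑ j : Fin ℓ, vecMulVec (u 0) ((φ 0 ⬝ᵥ u j.succ) • ψ j.succ) :=
      map_sum (vecMulVecBilin R R (u 0)) _ _
    simp only [Fin.tail] at htail
    rw [List.ofFn_succ, List.prod_cons, htail, Fin.sum_univ_succ, hhead, vecMulVec_add, hsum,
      add_mul, one_mul, mul_add, mul_one, Finset.mul_sum]
    simp only [hmul]
    abel

theorem exists_prod_one_add_vecMulVec_eq_s15 {ℓ : ℕ} (G : Matrix (Fin ℓ) (Fin ℓ) R)
    (E : Matrix n (Fin ℓ) R) (F : Matrix (Fin ℓ) n R)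
    (h : IsConj ((1 - strictUpper G)⁻¹ * G) (F * E)) :
    ∃ u φ : Fin ℓ → n → R, (∀ i j, φ i ⬝ᵥ u j = G i j) ∧
      (List.ofFn fun i ↦ 1 + vecMulVec (u i) (φ i)).prod = 1 + E * F := by
  obtain ⟨c, hc⟩ := h
  set T := strictUpper G with hT
  have hdet : IsUnit (1 - T).det := by rw [det_one_sub_strictUpper]; exact isUnit_one
  let C : Matrix (Fin ℓ) (Fin ℓ) R := c
  let C' : Matrix (Fin ℓ) (Fin ℓ) R := ↑c⁻¹
  let Ψ : Matrix (Fin ℓ) n R := C' * F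
  let Φ : Matrix (Fin ℓ) n R := (1 - T) * Ψ
  let U : Matrix n (Fin ℓ) R := E * C
  have hΦU : Φ * U = G := by
    calc Φ * U = (1 - T) * (C' * (F * E * C)) := by simp only [Φ, U, Ψ, Matrix.mul_assoc]
      _ = (1 - T) * (C' * (C * ((1 - T)⁻¹ * G))) := by rw [← hc.eq]
      _ = G := by
        rw [← Matrix.mul_assoc C', Units.inv_mul, Matrix.one_mul,
          mul_nonsing_inv_cancel_left _ _ hdet]
  have hUΨ : U * Ψ = E * F := by
    rw [Matrix.mul_assoc, ← Matrix.mul_assoc C, Units.mul_inv, Matrix.one_mul]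
  have hGram (i j : Fin ℓ) : Φ i ⬝ᵥ Uᵀ j = G i j := by rw [← hΦU]; rfl
  have hΨ : Ψ = Φ + T * Ψ := by simp only [Φ, Matrix.sub_mul, Matrix.one_mul, sub_add_cancel]
  refine ⟨Uᵀ, Φ, hGram, ?_⟩
  rw [prod_ofFn_one_add_vecMulVec Uᵀ Φ Ψ, ← hUΨ]
  · congr 1
    ext p q
    simp [Matrix.sum_apply, vecMulVec_apply, mul_apply]
  · intro i
    ext p
    simp only [hGram]
    simpa [mul_apply, hT, strictUpper, ite_apply] using congrFun₂ hΨ i p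

end ProductOfPseudoReflections

section PairingMatrix

variable {K : Type*} [Field K] {ℓ : ℕ}

/-- The pairings `φ i ⬝ᵥ u j` prescribed for the pseudo-reflections `1 + vecMulVec (u i) (φ i)`.
The diagonal gives determinants `lam i`; the rest makes the associated matrix
`(1 - T)⁻¹ * G`, with `T = strictUpper G`, a scalar matrix plus a matrix of rank one. -/
def pairingMatrix (lam : Fin ℓ → K) (η : K) : Matrix (Fin ℓ) (Fin ℓ) K :=
  of fun i j ↦ if i < j then (lam j - η) / η else if i = j then lam j - 1 else lam j - η

theorem pairingMatrix_apply_self (lam : Fin ℓ → K) (η : K) (i : Fin ℓ) :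
    pairingMatrix lam η i i = lam i - 1 := by
  simp [pairingMatrix]

theorem pairingMatrix_apply_ne_zero {lam : Fin ℓ → K} {η : K} (hη : η ≠ 0) (hlam : ∀ i, lam i ≠ η)
    {i j : Fin ℓ} (hij : i ≠ j) : pairingMatrix lam η i j ≠ 0 := by
  rcases lt_or_gt_of_ne hij with h | h
  · simp [pairingMatrix, h, hη, sub_ne_zero, hlam]
  · simp [pairingMatrix, h.not_gt, hij, sub_ne_zero, hlam]

theorem det_one_sub_strictUpper_pairingMatrix_add_pairingMatrix (lam : Fin ℓ → K) (η : K) :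
    (1 - strictUpper (pairingMatrix lam η) + pairingMatrix lam η).det = ∏ i, lam i := by
  rw [det_of_isLowerTriangular]
  · simp [pairingMatrix, strictUpper]
  · intro i j hij
    have hij' : i < j := hij
    simp [pairingMatrix, strictUpper, hij', hij'.ne]

theorem pairingMatrix_eq {lam : Fin ℓ → K} {η : K} (hη : η ≠ 0) :
    pairingMatrix lam η =
      (η - 1) • (1 - strictUpper (pairingMatrix lam η)) + vecMulVec 1 (fun j ↦ lam j - η) := by
  ext i j
  rcases lt_trichotomy i j with h | h | h
  · suffices (lam j - η) / η = -((η - 1) * ((lam j - η) / η)) + (lam j - η) by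
      simpa [pairingMatrix, strictUpper, h, h.ne]
    field_simp
    ring
  · simp [pairingMatrix, strictUpper, h]
  · simp [pairingMatrix, strictUpper, h.not_gt, h.ne']

theorem isConj_pairingMatrix (i₀ : Fin ℓ) {lam : Fin ℓ → K} {η η' : K} (hη : η ≠ 0) (hη' : η ≠ η')
    (hlam : lam i₀ ≠ η) (hprod : ∏ i, lam i = η ^ (ℓ - 1) * η') :
    IsConj ((1 - strictUpper (pairingMatrix lam η))⁻¹ * pairingMatrix lam η)
      (diagonal fun i ↦ (if i = i₀ then η' else η) - 1) := by
  set T := strictUpper (pairingMatrix lam η)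
  have hdet : IsUnit (1 - T).det := by rw [det_one_sub_strictUpper]; exact isUnit_one
  let a : Fin ℓ → K := (1 - T)⁻¹ *ᵥ 1
  let b : Fin ℓ → K := fun j ↦ lam j - η
  have hG : (1 - T)⁻¹ * pairingMatrix lam η = (η - 1) • 1 + vecMulVec a b := by
    rw [pairingMatrix_eq hη, mul_add, mul_smul_comm, nonsing_inv_mul _ hdet, mul_vecMulVec]
  have hba : b ⬝ᵥ a = η' - η := by
    have hdetG : (η • 1 + vecMulVec a b).det = η ^ (ℓ - 1) * η' := by
      have hmul : (1 - T) * (η • 1 + vecMulVec a b) = 1 - T + pairingMatrix lam η := by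
        rw [show η • (1 : Matrix (Fin ℓ) (Fin ℓ) K) = 1 + (η - 1) • 1 by module, add_assoc, ← hG,
          mul_add, mul_one, mul_nonsing_inv_cancel_left _ _ hdet]
      rw [← hprod, ← det_one_sub_strictUpper_pairingMatrix_add_pairingMatrix lam η, ← hmul, det_mul,
        det_one_sub_strictUpper, one_mul]
    rw [det_smul_one_add_vecMulVec, Fintype.card_fin, ← mul_pow_sub_one i₀.pos.ne'] at hdetG
    exact mul_left_cancel₀ (pow_ne_zero (ℓ - 1) hη) (by linear_combination hdetG)
  have hconj := isConj_aeval (isConj_single_vecMulVec i₀ (a := a) (b := b)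
    (by rw [hba]; exact sub_ne_zero.2 hη'.symm) (sub_ne_zero.2 hlam)) (X + C (η - 1))
  rw [aeval_diagonal, hba] at hconj
  convert hconj using 2
  · rw [hG, map_add, aeval_X, aeval_C, Algebra.algebraMap_eq_smul_one, add_comm]
  · ext i
    by_cases hi : i = i₀ <;> simp [hi]

end PairingMatrix

section Companion

variable {K : Type*} [Field K] {k : ℕ}

/-- The companion matrix of the polynomial with simple roots `d`, i.e. the matrix of
multiplication by `X` in the basis `1, X, …, X ^ k` of `K[X] ⧸ ∏ (X - d i)`, obtained from its
diagonalization by the Vandermonde matrix. -/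
noncomputable def companionOfRoots (d : Fin (k + 1) → K) : Matrix (Fin (k + 1)) (Fin (k + 1)) K :=
  (vandermonde d)⁻¹ * diagonal d * vandermonde d

variable {z d : Fin (k + 1) → K}

theorem isUnit_det_vandermonde (hd : Function.Injective d) : IsUnit (vandermonde d).det :=
  (det_vandermonde_ne_zero_iff.2 hd).isUnit

theorem isConj_companionOfRoots (hd : Function.Injective d) :
    IsConj (diagonal d) (companionOfRoots d) := by
  have hV := isUnit_det_vandermonde hd
  refine isConj_iff_exists_isUnit.2 ⟨(vandermonde d)⁻¹, ?_, ?_⟩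
  · exact (isUnit_iff_isUnit_det _).2 (isUnit_nonsing_inv_det _ hV)
  · rw [nonsing_inv_nonsing_inv _ hV, companionOfRoots]

theorem companionOfRoots_col_castSucc (hd : Function.Injective d) (j : Fin k) :
    (companionOfRoots d).col j.castSucc = Pi.single j.succ 1 := by
  have hV := isUnit_det_vandermonde hd
  have hcol : diagonal d *ᵥ (vandermonde d).col j.castSucc = (vandermonde d).col j.succ := by
    ext i
    simp [mulVec_diagonal, vandermonde_apply, pow_succ']
  rw [← mulVec_single_one, companionOfRoots, ← mulVec_mulVec, ← mulVec_mulVec, mulVec_single_one,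
    hcol, ← mulVec_single_one, mulVec_mulVec, nonsing_inv_mul _ hV, one_mulVec]

theorem companionOfRoots_sub (hz : Function.Injective z) (hd : Function.Injective d) :
    companionOfRoots z - companionOfRoots d =
      vecMulVec ((companionOfRoots z - companionOfRoots d).col (Fin.last k))
        (Pi.single (Fin.last k) 1) := by
  ext i j
  cases j using Fin.lastCases with
  | last => simp [vecMulVec_apply]
  | cast j =>
    have h := congrFun ((companionOfRoots_col_castSucc hz j).trans
      (companionOfRoots_col_castSucc hd j).symm) i
    simpa [vecMulVec_apply, sub_eq_zero, Fin.castSucc_ne_last] using h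

theorem exists_companionOfRoots_eq_mul (hz : Function.Injective z) (hd : Function.Injective d)
    (hd0 : ∀ i, d i ≠ 0) :
    ∃ w v : Fin (k + 1) → K,
      companionOfRoots z = (1 + vecMulVec w v) * companionOfRoots d ∧
        v ⬝ᵥ w = (∏ i, z i) / (∏ i, d i) - 1 := by
  have hdet {x : Fin (k + 1) → K} (hx : Function.Injective x) :
      (companionOfRoots x).det = ∏ i, x i := by
    rw [← det_eq_of_isConj (isConj_companionOfRoots hx), det_diagonal]
  have hprod : ∏ i, d i ≠ 0 := Finset.prod_ne_zero_iff.2 fun i _ ↦ hd0 i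
  have hunit : IsUnit (companionOfRoots d).det := by rw [hdet hd]; exact hprod.isUnit
  set w := (companionOfRoots z - companionOfRoots d).col (Fin.last k)
  have hmul : companionOfRoots z =
      (1 + vecMulVec w (Pi.single (Fin.last k) 1 ᵥ* (companionOfRoots d)⁻¹)) *
        companionOfRoots d := by
    rw [add_mul, one_mul, vecMulVec_mul, vecMul_vecMul, nonsing_inv_mul _ hunit, vecMul_one,
      ← companionOfRoots_sub hz hd, add_sub_cancel]
  refine ⟨w, _, hmul, ?_⟩
  have h := congrArg det hmul
  rw [det_mul, det_one_add_vecMulVec_s15, hdet hz, hdet hd] at h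
  rw [h, mul_div_cancel_right₀ _ hprod, add_sub_cancel_left]

end Companion

section Blocks

theorem isConj_blockDiagonal {R m o : Type*} [CommRing R] [Fintype m] [DecidableEq m] [Fintype o]
    [DecidableEq o] {M N : o → Matrix m m R} (h : ∀ i, IsConj (M i) (N i)) :
    IsConj (blockDiagonal M) (blockDiagonal N) := by
  choose c hc using h
  have hpi : IsConj M N := ⟨MulEquiv.piUnits.symm c, funext hc⟩
  exact (blockDiagonalRingHom m o R).toMonoidHom.map_isConj hpi

theorem exists_isConj_diagonal_eq_one_add_mul {K ι n : Type*} [Field K] [Fintype ι] [DecidableEq ι]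
    [Fintype n] [DecidableEq n] {k : ℕ} (e : Fin (k + 1) × ι ≃ n) {z : Fin (k + 1) → K}
    {d : ι → Fin (k + 1) → K} (hz : Function.Injective z) (hd : ∀ i, Function.Injective (d i))
    (hd0 : ∀ i a, d i a ≠ 0) :
    ∃ (A B : Matrix n n K) (E : Matrix n ι K) (F : Matrix ι n K),
      IsConj (diagonal fun p ↦ z (e.symm p).1) A ∧
      IsConj (diagonal fun p ↦ d (e.symm p).2 (e.symm p).1) B ∧
      A = (1 + E * F) * B ∧
      F * E = diagonal fun i ↦ (∏ a, z a) / (∏ a, d i a) - 1 := by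
  choose w v hmul hpair using fun i ↦ exists_companionOfRoots_eq_mul hz (hd i) (hd0 i)
  let E := blockDiagonal fun i ↦ replicateCol Unit (w i)
  let F := blockDiagonal fun i ↦ replicateRow Unit (v i)
  let f : ι ≃ Unit × ι := (Equiv.punitProd ι).symm
  have hconj {x : ι → Fin (k + 1) → K} (hx : ∀ i, Function.Injective (x i)) :
      IsConj (diagonal fun p ↦ x (e.symm p).2 (e.symm p).1)
        ((blockDiagonal fun i ↦ companionOfRoots (x i)).submatrix e.symm e.symm) := by
    have h := (reindexAlgEquiv K K e).toMonoidHom.map_isConj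
      (isConj_blockDiagonal fun i ↦ isConj_companionOfRoots (hx i))
    simpa [Function.comp_def] using h
  have hmul_block : (blockDiagonal fun _ : ι ↦ companionOfRoots z) =
      (1 + E * F) * blockDiagonal fun i ↦ companionOfRoots (d i) := by
    have hEF : 1 + E * F = blockDiagonal fun i ↦ 1 + vecMulVec (w i) (v i) := by
      simp only [E, F, ← blockDiagonal_mul, ← vecMulVec_eq, ← blockDiagonal_one,
        ← blockDiagonal_add]
      rfl
    rw [hEF, ← blockDiagonal_mul, funext hmul]
  have hFE : F * E = diagonal fun q ↦ (∏ a, z a) / (∏ a, d q.2 a) - 1 := by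
    have hscalar (i : ι) : replicateRow Unit (v i) * replicateCol Unit (w i) =
        diagonal fun _ ↦ (∏ a, z a) / (∏ a, d i a) - 1 := by
      ext
      simp [← hpair]
    simp only [E, F, ← blockDiagonal_mul, hscalar, blockDiagonal_diagonal]
  refine ⟨_, _, E.submatrix e.symm f, F.submatrix f e.symm, hconj fun _ ↦ hz, hconj hd, ?_, ?_⟩
  · rw [hmul_block, ← submatrix_mul_equiv _ _ _ e.symm, submatrix_add, Pi.add_apply, Pi.add_apply,
      submatrix_one_equiv, submatrix_mul_equiv]
  · rw [submatrix_mul_equiv, hFE, submatrix_diagonal_equiv]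
    rfl

end Blocks

section Irreducibility

variable {R K n : Type*} [CommRing R] [Field K] [Fintype n] [DecidableEq n]

theorem aeval_mulVec_sub_mem {S W : Submodule R (n → R)} (hWS : W ≤ S) {A B : Matrix n n R}
    (hAS : ∀ v ∈ S, A *ᵥ v ∈ S) (hAW : ∀ v ∈ W, A *ᵥ v ∈ W)
    (hAB : ∀ v ∈ S, A *ᵥ v - B *ᵥ v ∈ W) (p : R[X]) :
    ∀ v ∈ S, aeval A p *ᵥ v - aeval B p *ᵥ v ∈ W := by
  have hBS : ∀ v ∈ S, B *ᵥ v ∈ S := fun v hv ↦ by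
    simpa using S.sub_mem (hAS v hv) (hWS (hAB v hv))
  have hBpowS (s : ℕ) : ∀ v ∈ S, (B ^ s) *ᵥ v ∈ S := by
    induction s with
    | zero => simp
    | succ s ih => exact fun v hv ↦ by simpa [pow_succ] using ih _ (hBS v hv)
  have hpow (s : ℕ) : ∀ v ∈ S, (A ^ s) *ᵥ v - (B ^ s) *ᵥ v ∈ W := by
    induction s with
    | zero => simp
    | succ s ih =>
      intro v hv
      have h := W.add_mem (hAW _ (ih v hv)) (hAB _ (hBpowS s v hv))
      simpa [pow_succ', mulVec_sub] using h
  intro v hv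
  induction p using Polynomial.induction_on' with
  | add p q hp hq => simpa [add_mulVec, add_sub_add_comm] using W.add_mem hp hq
  | monomial s r =>
    simpa [aeval_monomial, ← Algebra.smul_def, smul_mulVec, smul_sub] using
      W.smul_mem r (hpow s v hv)

/- Modulo `W`, the matrices `A` and `B` agree on `S`, so `aeval B p` maps `S` injectively
into `W`. -/
theorem eq_of_mulVec_sub_mem {S W : Submodule K (n → K)} (hWS : W ≤ S) {A B : Matrix n n K}
    (hAS : ∀ v ∈ S, A *ᵥ v ∈ S) (hAW : ∀ v ∈ W, A *ᵥ v ∈ W)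
    (hAB : ∀ v ∈ S, A *ᵥ v - B *ᵥ v ∈ W) {p : K[X]} (hpA : aeval A p = 0)
    (hpB : IsUnit (aeval B p)) : W = S := by
  have hmap : S.map (aeval B p).mulVecLin ≤ W := by
    rintro _ ⟨v, hv, rfl⟩
    simpa [hpA] using aeval_mulVec_sub_mem hWS hAS hAW hAB p v hv
  refine Submodule.eq_of_le_of_finrank_le hWS ?_
  have hinj : Function.Injective (aeval B p).mulVecLin := mulVec_injective_of_isUnit hpB
  rw [(Submodule.equivMapOfInjective _ hinj S).finrank_eq]
  exact Submodule.finrank_mono hmap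

theorem list_prod_mulVec_sub_mem_s15 {S W : Submodule R (n → R)} (hWS : W ≤ S)
    {l : List (Matrix n n R)} (hl : ∀ X ∈ l, ∀ v ∈ S, X *ᵥ v - v ∈ W) :
    ∀ v ∈ S, l.prod *ᵥ v - v ∈ W := by
  induction l with
  | nil => simp
  | cons X l ih =>
    intro v hv
    have htail := ih (fun Y hY ↦ hl Y (List.mem_cons_of_mem X hY)) v hv
    have hmem : l.prod *ᵥ v ∈ S := by simpa using S.add_mem (hWS htail) hv
    simpa using W.add_mem (hl X List.mem_cons_self _ hmem) htail

theorem one_add_vecMulVec_mulVec_sub (u φ v : n → R) :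
    (1 + vecMulVec u φ) *ᵥ v - v = (φ ⬝ᵥ v) • u := by
  simp [add_mulVec, vecMulVec_mulVec]

theorem eq_bot_or_eq_top_of_invariant {ℓ : ℕ} {u φ : Fin ℓ → n → K}
    (hpair : ∀ i j, i ≠ j → φ i ⬝ᵥ u j ≠ 0) {A B : Matrix n n K}
    (hunit : IsUnit (List.ofFn fun i ↦ 1 + vecMulVec (u i) (φ i)).prod)
    (hAB : A = (List.ofFn fun i ↦ 1 + vecMulVec (u i) (φ i)).prod * B) {p : K[X]}
    (hpA : aeval A p = 0) (hpB : IsUnit (aeval B p)) {U : Submodule K (n → K)}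
    (hXU : ∀ i, U.map (1 + vecMulVec (u i) (φ i)).mulVecLin ≤ U) (hAU : U.map A.mulVecLin ≤ U) :
    U = ⊥ ∨ U = ⊤ := by
  have hAU' : ∀ v ∈ U, A *ᵥ v ∈ U := fun v hv ↦ hAU ⟨v, hv, rfl⟩
  have hsmul (i : Fin ℓ) {v : n → K} (hv : v ∈ U) : (φ i ⬝ᵥ v) • u i ∈ U := by
    rw [← one_add_vecMulVec_mulVec_sub]
    exact U.sub_mem (hXU i ⟨v, hv, rfl⟩) hv
  set Y := (List.ofFn fun i ↦ 1 + vecMulVec (u i) (φ i)).prod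
  -- Either `A` agrees with `B` on `U`, or `U` contains every `u i` and they agree modulo `U`.
  by_cases hφ : ∀ i, ∀ v ∈ U, φ i ⬝ᵥ v = 0
  · left
    have hY : ∀ v ∈ U, Y *ᵥ v - v ∈ (⊥ : Submodule K (n → K)) := by
      refine list_prod_mulVec_sub_mem_s15 bot_le (List.forall_mem_ofFn_iff.2 fun i v hv ↦ ?_)
      rw [one_add_vecMulVec_mulVec_sub, hφ i v hv, zero_smul]
      exact zero_mem _
    refine (eq_of_mulVec_sub_mem bot_le hAU' (by simp) (fun v hv ↦ ?_) hpA hpB).symm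
    have hYA : Y *ᵥ (A *ᵥ v) = Y *ᵥ (B *ᵥ v) := by
      rw [sub_eq_zero.1 ((Submodule.mem_bot K).1 (hY _ (hAU' v hv))), hAB, mulVec_mulVec]
    rw [Submodule.mem_bot, sub_eq_zero]
    exact mulVec_injective_of_isUnit hunit hYA
  · right
    push Not at hφ
    obtain ⟨i, v, hv, hiv⟩ := hφ
    have hui : u i ∈ U := (U.smul_mem_iff hiv).1 (hsmul i hv)
    have hu (j : Fin ℓ) : u j ∈ U := by
      by_cases hji : j = i
      · rwa [hji]
      · exact (U.smul_mem_iff (hpair j i hji)).1 (hsmul j hui)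
    have hY : ∀ v ∈ (⊤ : Submodule K (n → K)), Y *ᵥ v - v ∈ U := by
      refine list_prod_mulVec_sub_mem_s15 le_top (List.forall_mem_ofFn_iff.2 fun j w _ ↦ ?_)
      rw [one_add_vecMulVec_mulVec_sub]
      exact U.smul_mem _ (hu j)
    refine eq_of_mulVec_sub_mem le_top (by simp) hAU' (fun v _ ↦ ?_) hpA hpB
    rw [hAB, ← mulVec_mulVec]
    exact hY _ Submodule.mem_top

theorem vecMulVec_ne_zero_of_pairing {ℓ : ℕ} {u φ : Fin ℓ → n → K}
    (hpair : ∀ i j, i ≠ j → φ i ⬝ᵥ u j ≠ 0)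
    (hprod : (List.ofFn fun i ↦ 1 + vecMulVec (u i) (φ i)).prod ≠ 1) (i : Fin ℓ) :
    vecMulVec (u i) (φ i) ≠ 0 := by
  intro hi
  have hsub (j : Fin ℓ) : j = i := by
    by_contra hji
    rcases vecMulVec_eq_zero.1 hi with h | h
    · exact hpair j i hji (by rw [h, dotProduct_zero])
    · exact hpair i j (Ne.symm hji) (by rw [h, zero_dotProduct])
  refine hprod (List.prod_eq_one (List.forall_mem_ofFn_iff.2 fun j ↦ ?_))
  rw [hsub j, hi, add_zero]

end Irreducibility

section KthRoots

variable {K : Type*} [Field K] {k : ℕ} {z : Fin k → K} {c : K}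

theorem nodal_univ_eq_X_pow_sub_C (hk : k ≠ 0) (hz : Function.Injective z)
    (hzc : ∀ a, z a ^ k = c) : Lagrange.nodal Finset.univ z = X ^ k - C c := by
  have hdeg : (Lagrange.nodal Finset.univ z).degree = k := by simp [Lagrange.degree_nodal]
  refine eq_of_degree_sub_lt_of_eval_index_eq Finset.univ hz.injOn ?_ fun a ha ↦ ?_
  · have hlt := degree_sub_lt_left (hdeg.trans (degree_X_pow_sub_C (Nat.pos_of_ne_zero hk) c).symm)
      Lagrange.nodal_monic.ne_zero
      (Lagrange.nodal_monic.leadingCoeff.trans (monic_X_pow_sub_C c hk).leadingCoeff.symm)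
    simpa [hdeg] using hlt
  · simp [Lagrange.eval_nodal_at_node ha, hzc]

theorem prod_eq_of_pow_eq (hk : k ≠ 0) (hz : Function.Injective z) (hzc : ∀ a, z a ^ k = c) :
    ∏ a, z a = (-1) ^ (k - 1) * c := by
  have h := congrArg (eval 0) (nodal_univ_eq_X_pow_sub_C hk hz hzc)
  obtain ⟨k, rfl⟩ := Nat.exists_eq_succ_of_ne_zero hk
  have hsq : (-1 : K) ^ k * (-1) ^ k = 1 := by rw [← mul_pow]; simp
  have hneg : (-1) ^ (k + 1) * ∏ a, z a = -c := by
    simpa [Lagrange.eval_nodal, Finset.prod_neg] using h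
  rw [Nat.succ_sub_one]
  linear_combination (-(-1) ^ k) * hneg - (∏ a, z a) * hsq

theorem pow_eq_iff_exists_eq (hk : k ≠ 0) (hz : Function.Injective z) (hzc : ∀ a, z a ^ k = c)
    (w : K) : w ^ k = c ↔ ∃ a, w = z a := by
  have h := congrArg (eval w) (nodal_univ_eq_X_pow_sub_C hk hz hzc)
  simp only [Lagrange.eval_nodal, eval_sub, eval_X_pow, eval_C] at h
  rw [← sub_eq_zero, ← h, Finset.prod_eq_zero_iff]
  simp [sub_eq_zero]

theorem exists_injective_pow_eq [IsAlgClosed K] (hk : (k : K) ≠ 0) (hc : c ≠ 0) :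
    ∃ z : Fin k → K, Function.Injective z ∧ ∀ a, z a ^ k = c := by
  have hcard : Fintype.card ((X ^ k - C c : K[X]).rootSet K) = k := by
    rw [card_rootSet_eq_natDegree (separable_X_pow_sub_C c hk hc) (IsAlgClosed.splits _),
      natDegree_X_pow_sub_C]
  let f := (Fintype.equivFinOfCardEq hcard).symm
  refine ⟨fun a ↦ f a, Subtype.val_injective.comp f.injective, fun a ↦ ?_⟩
  have ha := (mem_rootSet.1 (f a).2).2
  simpa [sub_eq_zero] using ha

end KthRoots

section Multiplicities

theorem ncard_succAbove_eq {k : ℕ} {ι n : Type*} (e : Fin k × ι ≃ n) (o : ι → Fin (k + 1))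
    (j : Fin (k + 1)) :
    {p | (o (e.symm p).2).succAbove (e.symm p).1 = j}.ncard = {i | o i ≠ j}.ncard := by
  rw [← Set.InjOn.ncard_image (f := fun p ↦ (e.symm p).2)]
  · congr 1
    ext i
    simpa [e.symm.exists_congr_left, Fin.exists_succAbove_eq_iff] using ne_comm
  · intro p hp p' hp' h
    have h' : (e.symm p).2 = (e.symm p').2 := h
    refine e.symm.injective (Prod.ext ?_ h')
    rw [Set.mem_ofPred_eq] at hp hp'
    rw [← hp', h'] at hp
    exact Fin.succAbove_right_injective hp

theorem ncard_ite_ne {ι α : Type*} [Fintype ι] [DecidableEq ι] [DecidableEq α] {q q' : α}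
    (hq : q ≠ q') (i₀ : ι) (j : α) :
    {i | (if i = i₀ then q' else q) ≠ j}.ncard =
      if j = q then 1 else if j = q' then Fintype.card ι - 1 else Fintype.card ι := by
  split_ifs with hjq hjq'
  · subst hjq
    rw [Set.ncard_eq_one]
    exact ⟨i₀, by ext i; by_cases hi : i = i₀ <;> simp [hi, hq.symm]⟩
  · subst hjq'
    rw [← Nat.card_eq_fintype_card, ← Set.ncard_singleton i₀, ← Set.ncard_compl]
    congr 1
    ext i; by_cases hi : i = i₀ <;> simp [hi, hq]
  · rw [← Nat.card_eq_fintype_card, ← Set.ncard_univ]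
    congr 1
    ext i; by_cases hi : i = i₀ <;> simp [hi, Ne.symm hjq, Ne.symm hjq']

theorem ncard_succAbove_ite_eq {k : ℕ} {ι n : Type*} [Fintype ι] [DecidableEq ι]
    (e : Fin k × ι ≃ n) {q q' : Fin (k + 1)} (hq : q ≠ q') (i₀ : ι) (j : Fin (k + 1)) :
    {p | (if (e.symm p).2 = i₀ then q' else q).succAbove (e.symm p).1 = j}.ncard =
      if j = q then 1 else if j = q' then Fintype.card ι - 1 else Fintype.card ι := by
  rw [ncard_succAbove_eq e fun i ↦ if i = i₀ then q' else q, ncard_ite_ne hq]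

theorem ncard_fst_eq {α ι n : Type*} (e : α × ι ≃ n) (a : α) :
    {p | (e.symm p).1 = a}.ncard = Nat.card ι := by
  have hinj : Function.Injective fun i ↦ e (a, i) := e.injective.comp (Prod.mk_right_injective a)
  rw [← Set.ncard_univ, ← Set.ncard_image_of_injective _ hinj]
  congr 1
  ext p
  simp [← e.eq_symm_apply, Prod.ext_iff, eq_comm]

end Multiplicities

section Construction

variable {K : Type*} [Field K]

/-- The quotient of determinants of a block with eigenvalues `z` by one with eigenvalues `ξ j`,
`j ≠ q`. In the notation of the paper, `η₁` and `η₂` are these quotients for the omission of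
`ξ_{k+1}` and `ξ_k`, the `z a` being the `k`-th roots of `ε ^ r`. -/
noncomputable def detRatio {k : ℕ} (z : Fin k → K) (ξ : Fin (k + 1) → K) (q : Fin (k + 1)) : K :=
  (∏ a, z a) / ∏ a, ξ (q.succAbove a)

section DetRatio

variable {k : ℕ} {z : Fin k → K} {ξ : Fin (k + 1) → K}

theorem detRatio_mul_prod (hξ0 : ∀ j, ξ j ≠ 0) (q : Fin (k + 1)) :
    detRatio z ξ q * ∏ j, ξ j = (∏ a, z a) * ξ q := by
  have h : ∏ a, ξ (q.succAbove a) ≠ 0 := Finset.prod_ne_zero_iff.2 fun a _ ↦ hξ0 _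
  rw [detRatio, Fin.prod_univ_succAbove ξ q]
  field_simp

theorem detRatio_ne_zero (hz0 : ∀ a, z a ≠ 0) (hξ0 : ∀ j, ξ j ≠ 0) (q : Fin (k + 1)) :
    detRatio z ξ q ≠ 0 :=
  div_ne_zero (Finset.prod_ne_zero_iff.2 fun a _ ↦ hz0 a)
    (Finset.prod_ne_zero_iff.2 fun _ _ ↦ hξ0 _)

theorem detRatio_injective (hz0 : ∀ a, z a ≠ 0) (hξ0 : ∀ j, ξ j ≠ 0)
    (hξ : Function.Injective ξ) : Function.Injective (detRatio z ξ) := fun q q' h ↦ by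
  have hprod : ∏ a, z a ≠ 0 := Finset.prod_ne_zero_iff.2 fun a _ ↦ hz0 a
  refine hξ (mul_left_cancel₀ hprod ?_)
  rw [← detRatio_mul_prod hξ0, h, detRatio_mul_prod hξ0]

end DetRatio

theorem eq_detRatio_pow_mul {k ℓ : ℕ} (hℓ : 1 ≤ ℓ) {z : Fin (k + 1) → K} {ξ : Fin (k + 2) → K}
    (hξ0 : ∀ j, ξ j ≠ 0) {x : K}
    (hx : x * (∏ j : Fin k, ξ j.castSucc.castSucc) ^ ℓ * ξ (Fin.last k).castSucc ^ (ℓ - 1) *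
      ξ (Fin.last (k + 1)) = (∏ a, z a) ^ ℓ) :
    x = detRatio z ξ (Fin.last (k + 1)) ^ (ℓ - 1) * detRatio z ξ (Fin.last k).castSucc := by
  obtain ⟨ℓ, rfl⟩ := Nat.exists_eq_add_of_le' hℓ
  have hprod : (∏ j, ξ j) ^ (ℓ + 1) ≠ 0 := pow_ne_zero _ (Finset.prod_ne_zero_iff.2 fun j _ ↦ hξ0 j)
  refine mul_right_cancel₀ hprod ?_
  calc x * (∏ j, ξ j) ^ (ℓ + 1)
      = (∏ a, z a) ^ (ℓ + 1) * (ξ (Fin.last k).castSucc * ξ (Fin.last (k + 1)) ^ ℓ) := by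
        rw [← hx, Fin.prod_univ_castSucc, Fin.prod_univ_castSucc, Nat.add_sub_cancel]
        ring
    _ = (detRatio z ξ (Fin.last (k + 1)) * ∏ j, ξ j) ^ ℓ *
          (detRatio z ξ (Fin.last k).castSucc * ∏ j, ξ j) := by
        rw [detRatio_mul_prod hξ0, detRatio_mul_prod hξ0]
        ring
    _ = _ := by
        rw [Nat.add_sub_cancel]
        ring

theorem exists_pseudoReflections {k ℓ : ℕ} {n : Type*} [Fintype n] [DecidableEq n]
    (e : Fin (k + 1) × Fin ℓ ≃ n) {z : Fin (k + 1) → K} {ξ : Fin (k + 2) → K}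
    (hz : Function.Injective z) (hz0 : ∀ a, z a ≠ 0) (hξ : Function.Injective ξ)
    (hξ0 : ∀ j, ξ j ≠ 0) (hzξ : ∀ a j, ξ j ≠ z a) {q q' : Fin (k + 2)} (hq : q ≠ q')
    (i₀ : Fin ℓ) {lam : Fin ℓ → K} (hlam : ∀ i, lam i ≠ detRatio z ξ q)
    (hprod : ∏ i, lam i = detRatio z ξ q ^ (ℓ - 1) * detRatio z ξ q') :
    ∃ (X : Fin ℓ → Matrix n n K) (Ω : Matrix n n K),
      (∀ i, (X i - 1).rank = 1 ∧ (X i).det = lam i) ∧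
      IsConj (diagonal fun p ↦ z (e.symm p).1) Ω ∧
      IsConj (diagonal fun p ↦ ξ ((if (e.symm p).2 = i₀ then q' else q).succAbove (e.symm p).1))
        ((List.ofFn X).prod⁻¹ * Ω) ∧
      ∀ U : Submodule K (n → K),
        (∀ i, U.map (X i).mulVecLin ≤ U) → U.map Ω.mulVecLin ≤ U → U = ⊥ ∨ U = ⊤ := by
  obtain ⟨A, B, E, F, hA, hB, hAB, hFE⟩ := exists_isConj_diagonal_eq_one_add_mul e hz
    (d := fun i a ↦ ξ ((if i = i₀ then q' else q).succAbove a))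
    (fun i ↦ hξ.comp Fin.succAbove_right_injective) (fun i a ↦ hξ0 _)
  have hconj := isConj_pairingMatrix i₀ (detRatio_ne_zero hz0 hξ0 q)
    ((detRatio_injective hz0 hξ0 hξ).ne hq) (hlam i₀) hprod
  have hFE' : F * E =
      diagonal fun i ↦ (if i = i₀ then detRatio z ξ q' else detRatio z ξ q) - 1 := by
    rw [hFE]
    congr 1
    ext i
    by_cases hi : i = i₀ <;> simp [hi, detRatio]
  obtain ⟨u, φ, hpair, hY⟩ := exists_prod_one_add_vecMulVec_eq_s15 _ E F (hFE' ▸ hconj)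
  have hpair_ne (i j : Fin ℓ) (hij : i ≠ j) : φ i ⬝ᵥ u j ≠ 0 :=
    hpair i j ▸ pairingMatrix_apply_ne_zero (detRatio_ne_zero hz0 hξ0 q) hlam hij
  rw [← hY] at hAB
  set Y := (List.ofFn fun i ↦ 1 + vecMulVec (u i) (φ i)).prod
  have hA_unit : IsUnit A := by
    simpa using isUnit_aeval_of_isConj_diagonal hA (p := X) (by simp [hz0])
  have hY_unit : IsUnit Y := isUnit_of_mul_isUnit_left (hAB ▸ hA_unit)
  have hpA : aeval A (Lagrange.nodal Finset.univ z) = 0 :=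
    aeval_eq_zero_of_isConj_diagonal hA fun p ↦ Lagrange.eval_nodal_at_node (Finset.mem_univ _)
  have hpB : IsUnit (aeval B (Lagrange.nodal Finset.univ z)) :=
    isUnit_aeval_of_isConj_diagonal hB fun p ↦ by
      simp [Lagrange.eval_nodal, Finset.prod_eq_zero_iff, sub_eq_zero, hzξ]
  have hY_ne : Y ≠ 1 := by
    intro h
    have : Nonempty n := ⟨e (0, i₀)⟩
    rw [h, one_mul] at hAB
    rw [← hAB, hpA] at hpB
    exact not_isUnit_zero hpB
  refine ⟨fun i ↦ 1 + vecMulVec (u i) (φ i), A, fun i ↦ ⟨?_, ?_⟩, hA, ?_, fun U hXU hAU ↦ ?_⟩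
  · rw [add_sub_cancel_left]
    exact rank_vecMulVec (vecMulVec_ne_zero_of_pairing hpair_ne hY_ne i)
  · rw [det_one_add_vecMulVec_s15, hpair, pairingMatrix_apply_self, add_sub_cancel]
  · rwa [hAB, nonsing_inv_mul_cancel_left _ _ ((isUnit_iff_isUnit_det _).1 hY_unit)]
  · exact eq_bot_or_eq_top_of_invariant hpair_ne hY_unit hAB hpA hpB hXU hAU

end Construction

theorem stmt_15_general {K : Type*} [Field K] {k ℓ : ℕ} (hℓ : 1 ≤ ℓ) {c : K} (hc : c ≠ 0)
    {z : Fin (k + 1) → K} (hz : Function.Injective z) (hzc : ∀ a, z a ^ (k + 1) = c)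
    (lam : Fin ℓ → K) (ξ : Fin (k + 2) → K)
    (hlam : ∀ i, lam i ≠ (-1) ^ k * c * (∏ j : Fin (k + 1), ξ j.castSucc)⁻¹)
    (hξ0 : ∀ j, ξ j ≠ 0) (hξ : Function.Injective ξ) (hξk : ∀ j, ξ j ^ (k + 1) ≠ c)
    (hfuchs : (∏ i, lam i) * (∏ j : Fin k, ξ j.castSucc.castSucc ^ ℓ) *
        ξ (Fin.last k).castSucc ^ (ℓ - 1) * ξ (Fin.last (k + 1)) = (-1) ^ (k * ℓ) * c ^ ℓ) :
    ∃ (X : Fin ℓ → Matrix (Fin ((k + 1) * ℓ)) (Fin ((k + 1) * ℓ)) K)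
      (Ω : Matrix (Fin ((k + 1) * ℓ)) (Fin ((k + 1) * ℓ)) K),
      IsUnit Ω ∧
      (∀ i, IsUnit (X i) ∧ (X i - 1).rank = 1 ∧ (X i).det = lam i) ∧
      Ω ^ (k + 1) = c • (1 : Matrix (Fin ((k + 1) * ℓ)) (Fin ((k + 1) * ℓ)) K) ∧
      (∀ w : K, w ^ (k + 1) = c → Module.finrank K (Module.End.eigenspace Ω.mulVecLin w) = ℓ) ∧
      (∃ (P : Matrix (Fin ((k + 1) * ℓ)) (Fin ((k + 1) * ℓ)) K) (d : Fin ((k + 1) * ℓ) → K),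
        IsUnit P ∧ (List.ofFn X).prod⁻¹ * Ω = P * diagonal d * P⁻¹ ∧
        ∀ j : Fin (k + 2), {p | d p = ξ j}.ncard =
          if (j : ℕ) < k then ℓ else if (j : ℕ) = k then ℓ - 1 else 1) ∧
      ∀ U : Submodule K (Fin ((k + 1) * ℓ) → K),
        (∀ i, U.map (X i).mulVecLin ≤ U) → U.map Ω.mulVecLin ≤ U → U = ⊥ ∨ U = ⊤ := by
  have hk0 : k + 1 ≠ 0 := k.succ_ne_zero
  have hz0 (a : Fin (k + 1)) : z a ≠ 0 := fun h ↦ hc (by rw [← hzc a, h, zero_pow hk0])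
  have hprodz : ∏ a, z a = (-1) ^ k * c := prod_eq_of_pow_eq hk0 hz hzc
  have hη : detRatio z ξ (Fin.last (k + 1)) =
      (-1) ^ k * c * (∏ j : Fin (k + 1), ξ j.castSucc)⁻¹ := by
    simp [detRatio, hprodz, div_eq_mul_inv]
  have hprod := eq_detRatio_pow_mul (z := z) hℓ hξ0 (x := ∏ i, lam i) <| by
    rwa [hprodz, mul_pow, ← pow_mul, ← Finset.prod_pow]
  have hq : Fin.last (k + 1) ≠ (Fin.last k).castSucc := (Fin.castSucc_ne_last _).symm
  obtain ⟨X, Ω, hX, hΩ, hYΩ, hirr⟩ := exists_pseudoReflections finProdFinEquiv hz hz0 hξ hξ0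
    (fun a j h ↦ hξk j (h ▸ hzc a)) hq ⟨0, hℓ⟩ (fun i ↦ hη ▸ hlam i) hprod
  refine ⟨X, Ω, ?_, fun i ↦ ⟨?_, hX i⟩, ?_, fun w hw ↦ ?_, ?_, hirr⟩
  · simpa using isUnit_aeval_of_isConj_diagonal hΩ (p := Polynomial.X) (by simp [hz0])
  · have hlam0 : ∏ i, lam i ≠ 0 := by
      rw [hprod]
      exact mul_ne_zero (pow_ne_zero _ (detRatio_ne_zero hz0 hξ0 _)) (detRatio_ne_zero hz0 hξ0 _)
    rw [isUnit_iff_isUnit_det, (hX i).2]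
    exact (Finset.prod_ne_zero_iff.1 hlam0 i (Finset.mem_univ i)).isUnit
  · have h := aeval_eq_zero_of_isConj_diagonal hΩ (p := Polynomial.X ^ (k + 1) - C c)
      (by simp [hzc])
    simpa [sub_eq_zero, Algebra.algebraMap_eq_smul_one] using h
  · obtain ⟨a, rfl⟩ := (pow_eq_iff_exists_eq hk0 hz hzc w).1 hw
    rw [finrank_eigenspace_of_isConj_diagonal hΩ]
    simp only [hz.eq_iff, ncard_fst_eq, Nat.card_fin]
  · obtain ⟨P, hP, hPd⟩ := isConj_iff_exists_isUnit.1 hYΩ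
    refine ⟨P, _, hP, hPd, fun j ↦ ?_⟩
    simp only [hξ.eq_iff]
    rw [ncard_succAbove_ite_eq finProdFinEquiv hq, Fintype.card_fin]
    simp only [Fin.ext_iff, Fin.val_last, Fin.val_castSucc]
    split_ifs <;> omega

end

/-- main construction theorem for turbines without shaft T_{n,k,ℓ}:
realization of the numerical local data (ε; λ₁,…,λ_ℓ; ξ₁,…,ξ_{k+1}; ℓ,…,ℓ,ℓ−1,1)
by pseudo-reflections X₁,…,X_ℓ and a matrix Ω₀ with Ω₀^k = ε^r·I acting
irreducibly on ℂ^{kℓ}. -/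
theorem stmt_15 {k ℓ : ℕ} (hk : 1 ≤ k) (hℓ : 2 ≤ ℓ) (ε : ℂ) (hε : ε ≠ 0) (r : ℤ)
    (lam : Fin ℓ → ℂ) (ξ : Fin (k + 1) → ℂ) (η₁ η₂ : ℂ)
    (hη₁ : η₁ = (-1 : ℂ) ^ (k - 1) * ε ^ r * (∏ j : Fin k, ξ j.castSucc)⁻¹)
    (hη₂ : η₂ = (-1 : ℂ) ^ (k - 1) * ε ^ r * (ξ (Fin.last k))⁻¹ *
      (∏ j : Fin (k - 1), ξ (Fin.castLE (by omega) j))⁻¹)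
    (hlam0 : ∀ i, lam i ≠ 0)
    (hlam1 : ∀ i, lam i ≠ 1) (hlamη : ∀ i, lam i ≠ η₁)
    (hη₁1 : η₁ ≠ 1) (hη₂1 : η₂ ≠ 1)
    (hξ0 : ∀ j, ξ j ≠ 0) (hξinj : Function.Injective ξ)
    (hξsum₁ : ∑ j : Fin k, ξ j.castSucc ≠ 0)
    (hξsum₂ : (∑ j : Fin (k - 1), ξ (Fin.castLE (by omega) j)) + ξ (Fin.last k) ≠ 0)
    (hξk : ∀ j, ξ j ^ k ≠ ε ^ r)
    (hfuchs : (∏ i, lam i) * (∏ j : Fin (k - 1), ξ (Fin.castLE (by omega) j) ^ ℓ) *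
        ξ (⟨k - 1, by omega⟩ : Fin (k + 1)) ^ (ℓ - 1) * ξ (Fin.last k) =
      (-1 : ℂ) ^ ((k - 1) * ℓ) * (ε ^ r) ^ ℓ) :
    ∃ (X : Fin ℓ → Matrix (Fin (k * ℓ)) (Fin (k * ℓ)) ℂ)
      (Ω : Matrix (Fin (k * ℓ)) (Fin (k * ℓ)) ℂ),
      IsUnit Ω ∧
      (∀ i, IsUnit (X i) ∧ (X i - 1).rank = 1 ∧ (X i).det = lam i) ∧
      Ω ^ k = (ε ^ r) • (1 : Matrix (Fin (k * ℓ)) (Fin (k * ℓ)) ℂ) ∧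
      (∀ z : ℂ, z ^ k = ε ^ r →
        Module.finrank ℂ (Module.End.eigenspace Ω.mulVecLin z) = ℓ) ∧
      (∃ (P : Matrix (Fin (k * ℓ)) (Fin (k * ℓ)) ℂ) (d : Fin (k * ℓ) → ℂ),
        IsUnit P ∧
        ((List.ofFn X).prod)⁻¹ * Ω = P * Matrix.diagonal d * P⁻¹ ∧
        ∀ j : Fin (k + 1),
          ({p | d p = ξ j}).ncard =
            if (j : ℕ) < k - 1 then ℓ
            else if (j : ℕ) = k - 1 then ℓ - 1
            else 1) ∧
      (∀ U : Submodule ℂ (Fin (k * ℓ) → ℂ),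
        (∀ i, U.map (X i).mulVecLin ≤ U) → U.map Ω.mulVecLin ≤ U →
          U = ⊥ ∨ U = ⊤) := by
  obtain ⟨z, hz, hzc⟩ := exists_injective_pow_eq (k := k) (Nat.cast_ne_zero.2 (by omega))
    (zpow_ne_zero r hε)
  obtain ⟨k, rfl⟩ := Nat.exists_eq_add_of_le' hk
  exact stmt_15_general (by omega) (zpow_ne_zero r hε) hz hzc lam ξ (hη₁ ▸ hlamη) hξ0 hξinj hξk
    hfuchs
end

section
/- Let k, ℓ ≥ 1 be integers, m = kℓ + 1, and let c be a nonzero complex number. Let X₁, …, X_ℓ ∈ GL_m(ℂ) be pseudo-reflections and let W ∈ GL_m(ℂ) be such that c·W^{−k} is a pseudo-reflection whose special eigenvalue λ₀ satisfies λ₀ ≠ 1. If the family {X₁, …, X_ℓ, W} acts irreducibly on ℂ^m, then W is diagonalizable and conjugate in GL_m(ℂ) to ζ₁·I_ℓ ⊕ ⋯ ⊕ ζ_k·I_ℓ ⊕ (b), where ζ₁, …, ζ_k are the k distinct k-th roots of c and b is a complex number with b^k = c·λ₀^{−1}, so in particular b^k ≠ c. -/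
/-!
Write `A = c • W ^ (-k)`. As `A - 1` has rank one, `(A - 1) * (A - det A) = 0`; hence `W` is
annihilated by `(X ^ k - c) * (X ^ k - c / det A)`, which is separable because `det A ≠ 1`. So `W`
is diagonalizable, and all of its eigenvalues but one, counted with multiplicity, are `k`-th roots
of `c`. An eigenspace of `W` of dimension larger than the number of pseudo-reflections would contain
a nonzero vector fixed by all of them, against irreducibility. Thus each of the at most `k` roots of
`c` has multiplicity at most `ℓ`, and since the multiplicities sum to `k * ℓ`, each equals `ℓ`.
-/

open Finset Matrix Module Polynomial

lemma card_fiber_eq_of_forall_card_fiber_le {α β : Type*} [DecidableEq β] {s : Finset α}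
    {t : Finset β} {f : α → β} {m : ℕ} (hf : ∀ a ∈ s, f a ∈ t)
    (hle : ∀ b ∈ t, #{a ∈ s | f a = b} ≤ m) (hcard : #t * m ≤ #s) :
    ∀ b ∈ t, #{a ∈ s | f a = b} = m := by
  refine (sum_eq_sum_iff_of_le hle).1 (le_antisymm (sum_le_sum hle) ?_)
  rwa [← card_eq_sum_card_fiberwise hf, sum_const, smul_eq_mul]

lemma card_fiber_eq_of_pow_eq {α R : Type*} [Fintype α] [CommRing R] [IsDomain R]
    [DecidableEq R] {d : α → R} {c : R} {k m : ℕ} (hk : 0 < k)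
    (hle : ∀ z, z ^ k = c → #{i | d i = z} ≤ m) (hcard : k * m ≤ #{i | d i ^ k = c})
    {z : R} (hz : z ^ k = c) : #{i | d i = z} = m := by
  have hroots : #(nthRoots k c).toFinset ≤ k :=
    (Multiset.toFinset_card_le _).trans (card_nthRoots k c)
  have hmem (w : R) : w ∈ (nthRoots k c).toFinset ↔ w ^ k = c := by
    rw [Multiset.mem_toFinset, mem_nthRoots hk]
  have hfiber (w : R) (hw : w ^ k = c) :
      #{i ∈ ({i | d i ^ k = c} : Finset α) | d i = w} = #{i | d i = w} := by
    rw [filter_filter]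
    exact congrArg card (filter_congr fun i _ => and_iff_right_of_imp fun h => h ▸ hw)
  rw [← hfiber z hz]
  refine card_fiber_eq_of_forall_card_fiber_le (fun i hi => (hmem _).2 (mem_filter.1 hi).2)
    (fun w hw => ?_) ((Nat.mul_le_mul_right m hroots).trans hcard) z ((hmem z).2 hz)
  exact (hfiber w ((hmem w).1 hw)).trans_le (hle w ((hmem w).1 hw))

lemma aeval_X_pow_sub_C {R A : Type*} [CommRing R] [Ring A] [Algebra R A] (a : A) (k : ℕ)
    (c : R) : aeval a (X ^ k - C c) = a ^ k - c • 1 := by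
  rw [map_sub, map_pow, aeval_X, aeval_C, Algebra.algebraMap_eq_smul_one]

section LinearMap

variable {K V ι : Type*} [DivisionRing K] [AddCommGroup V] [Module K V] [FiniteDimensional K V]
  [Fintype ι]

lemma finrank_le_finrank_iInf_ker_add_sum_finrank_range {V' : ι → Type*}
    [∀ i, AddCommGroup (V' i)] [∀ i, Module K (V' i)] (f : ∀ i, V →ₗ[K] V' i) :
    finrank K V ≤
      finrank K ↥(⨅ i, LinearMap.ker (f i)) + ∑ i, finrank K (LinearMap.range (f i)) := by
  let Φ : V →ₗ[K] ∀ i, LinearMap.range (f i) := LinearMap.pi fun i => (f i).rangeRestrict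
  have hker : LinearMap.ker Φ = ⨅ i, LinearMap.ker (f i) := by
    simp only [Φ, LinearMap.ker_pi, LinearMap.ker_rangeRestrict]
  have hrange : finrank K (LinearMap.range Φ) ≤ ∑ i, finrank K (LinearMap.range (f i)) :=
    (Submodule.finrank_le _).trans_eq (finrank_pi_fintype K)
  rw [← hker, ← Φ.finrank_range_add_finrank_ker]
  omega

end LinearMap

section CommRing

variable {R n : Type*} [CommRing R] [Fintype n] [DecidableEq n]

lemma ne_smul_one_of_rank_pow_sub_smul_one_ne_zero [Nontrivial R] {W : Matrix n n R} {k : ℕ}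
    {z : R} (h : (W ^ k - z ^ k • 1).rank ≠ 0) : W ≠ z • 1 := by
  rintro rfl
  rw [_root_.smul_pow, one_pow, sub_self, rank_zero] at h
  exact h rfl

lemma rank_smul_inv_sub_one {Y : Matrix n n R} (hY : IsUnit Y) (c : R) :
    (c • Y⁻¹ - 1).rank = (Y - c • 1).rank := by
  have hYdet := (isUnit_iff_isUnit_det Y).1 hY
  have hfactor : c • Y⁻¹ - 1 = (Y - c • 1) * -Y⁻¹ := by
    rw [mul_neg, sub_mul, smul_one_mul, mul_nonsing_inv Y hYdet, neg_sub]
  have hunit : IsUnit (-Y⁻¹) := (isUnit_nonsing_inv_iff.2 hY).neg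
  rw [hfactor, rank_mul_eq_left_of_isUnit_det _ _ ((isUnit_iff_isUnit_det _).1 hunit)]

lemma aeval_conj_diagonal {P : Matrix n n R} (hP : IsUnit P) (d : n → R) (p : R[X]) :
    aeval (P * diagonal d * P⁻¹) p = P * diagonal (fun i => p.eval (d i)) * P⁻¹ := by
  let φ : (n → R) →ₐ[R] Matrix n n R :=
    (MulSemiringAction.toAlgHom R _ (ConjAct.toConjAct hP.unit)).comp (diagonalAlgHom R)
  have hφ (x : n → R) : φ x = P * diagonal x * P⁻¹ := by
    simp [φ, ConjAct.units_smul_def]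
  rw [← hφ, ← hφ, aeval_algHom_apply]
  congr 1
  ext i
  simp

end CommRing

lemma exists_eq_vecMulVec_of_rank_le_one_s16 {K m n : Type*} [Field K] [Fintype n] {B : Matrix m n K}
    (hB : B.rank ≤ 1) : ∃ (v : m → K) (w : n → K), B = vecMulVec v w := by
  classical
  obtain ⟨v, hv⟩ := finrank_le_one_iff.1 hB
  have hcol (j : n) : ∃ a : K, a • (v : m → K) = B.col j := by
    obtain ⟨a, ha⟩ := hv ⟨B.col j, Pi.single j 1, by simp⟩
    exact ⟨a, congrArg Subtype.val ha⟩
  choose w hw using hcol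
  refine ⟨v, w, Matrix.ext fun i j => ?_⟩
  rw [vecMulVec_apply, mul_comm]
  exact (congrFun (hw j) i).symm

section Field

variable {K n : Type*} [Field K] [Fintype n] [DecidableEq n]

lemma card_le_rank_sub_smul_one_add_sum_rank_sub_one {ι : Type*} [Fintype ι]
    {X : ι → Matrix n n K} {W : Matrix n n K}
    (hirr : ∀ U : Submodule K (n → K),
      (∀ i, U.map (X i).mulVecLin ≤ U) → U.map W.mulVecLin ≤ U → U = ⊥ ∨ U = ⊤)
    {z : K} (hz : W ≠ z • 1) :
    Fintype.card n ≤ (W - z • 1).rank + ∑ i, (X i - 1).rank := by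
  let M : Option ι → Matrix n n K := fun o => o.elim (W - z • 1) (X · - 1)
  let U : Submodule K (n → K) := ⨅ o, LinearMap.ker (M o).mulVecLin
  have hU : ∀ v ∈ U, W *ᵥ v = z • v ∧ ∀ i, X i *ᵥ v = v := by
    intro v hv
    simpa [U, M, iInf_option, sub_mulVec, smul_mulVec, sub_eq_zero] using hv
  have hbot : U = ⊥ := by
    refine (hirr U ?_ ?_).resolve_right fun htop => hz ?_
    · rintro i _ ⟨v, hv, rfl⟩
      rwa [mulVecLin_apply, (hU v hv).2 i]
    · rintro _ ⟨v, hv, rfl⟩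
      rw [mulVecLin_apply, (hU v hv).1]
      exact U.smul_mem z hv
    · refine ext_of_mulVec_single fun j => ?_
      rw [(hU _ (htop ▸ Submodule.mem_top)).1, smul_mulVec, one_mulVec]
  have hdim := finrank_le_finrank_iInf_ker_add_sum_finrank_range fun o => (M o).mulVecLin
  rw [finrank_fintype_fun_eq_card, show ⨅ o, LinearMap.ker (M o).mulVecLin = ⊥ from hbot,
    finrank_bot, zero_add, Fintype.sum_option] at hdim
  exact hdim

lemma sub_one_mul_sub_det_smul_one_eq_zero {A : Matrix n n K} (hA : (A - 1).rank ≤ 1) :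
    (A - 1) * (A - A.det • 1) = 0 := by
  obtain ⟨v, w, hvw⟩ := exists_eq_vecMulVec_of_rank_le_one_s16 hA
  have hdet : A.det = 1 + w ⬝ᵥ v := by
    rw [← add_sub_cancel 1 A, hvw, vecMulVec_eq Unit, det_one_add_replicateCol_mul_replicateRow]
  have hsplit : A - A.det • 1 = (A - 1) - (w ⬝ᵥ v) • 1 := by
    rw [hdet, add_smul, one_smul, sub_sub]
  rw [hsplit, hvw, mul_sub, vecMulVec_mul_vecMulVec, vecMulVec_smul, mul_smul_comm, mul_one,
    sub_self]

lemma det_smul_inv_ne_zero {Y : Matrix n n K} (hY : IsUnit Y) {c : K} (hc : c ≠ 0) :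
    (c • Y⁻¹).det ≠ 0 := by
  rw [det_smul]
  exact mul_ne_zero (pow_ne_zero _ hc)
    (Y.isUnit_nonsing_inv_det ((isUnit_iff_isUnit_det Y).1 hY)).ne_zero

lemma sub_smul_one_mul_sub_smul_one_eq_zero_of_rank_sub_smul_one_le_one {Y : Matrix n n K}
    (hY : IsUnit Y) {c : K} (hc : c ≠ 0) (hrank : (Y - c • 1).rank ≤ 1) :
    (Y - c • 1) * (Y - (c * (c • Y⁻¹).det⁻¹) • 1) = 0 := by
  have hYdet := (isUnit_iff_isUnit_det Y).1 hY
  set A := c • Y⁻¹ with hA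
  have hdet : A.det ≠ 0 := det_smul_inv_ne_zero hY hc
  have hYA : Y * A = c • 1 := by rw [hA, mul_smul_comm, mul_nonsing_inv Y hYdet]
  have hAY : A * Y = c • 1 := by rw [hA, smul_mul_assoc, nonsing_inv_mul Y hYdet]
  have hleft : Y - c • 1 = -(Y * (A - 1)) := by rw [mul_sub, hYA, mul_one, neg_sub]
  have hright : Y - (c * A.det⁻¹) • 1 = -(A.det⁻¹ • ((A - A.det • 1) * Y)) := by
    rw [sub_mul, hAY, smul_one_mul, smul_sub, smul_smul, smul_smul, inv_mul_cancel₀ hdet,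
      one_smul, neg_sub, mul_comm c]
  have hzero : (A - 1) * (A - A.det • 1) = 0 :=
    sub_one_mul_sub_det_smul_one_eq_zero ((rank_smul_inv_sub_one hY c).trans_le hrank)
  rw [hleft, hright, neg_mul_neg, mul_smul_comm, mul_assoc, ← mul_assoc (A - 1), hzero, zero_mul,
    mul_zero, smul_zero]

section Diagonal

variable {P : Matrix n n K} (hP : IsUnit P) (d : n → K)
include hP

lemma rank_aeval_conj_diagonal_add_card [DecidableEq K] (p : K[X]) :
    (aeval (P * diagonal d * P⁻¹) p).rank + #{i | p.eval (d i) = 0} = Fintype.card n := by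
  have hPdet := (isUnit_iff_isUnit_det P).1 hP
  rw [aeval_conj_diagonal hP,
    rank_mul_eq_left_of_isUnit_det _ _ (P.isUnit_nonsing_inv_det hPdet),
    rank_mul_eq_right_of_isUnit_det _ _ hPdet, rank_diagonal, Fintype.card_subtype, add_comm,
    card_filter_add_card_filter_not, card_univ]

lemma rank_conj_diagonal_pow_sub_smul_one_add_card [DecidableEq K] (k : ℕ) (c : K) :
    ((P * diagonal d * P⁻¹) ^ k - c • 1).rank + #{i | d i ^ k = c} = Fintype.card n := by
  rw [← aeval_X_pow_sub_C, ← rank_aeval_conj_diagonal_add_card hP d (X ^ k - C c)]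
  simp only [eval_sub, eval_pow, eval_X, eval_C, sub_eq_zero]

lemma exists_forall_pow_eq_iff_ne {k : ℕ} {c : K}
    (hrank : ((P * diagonal d * P⁻¹) ^ k - c • 1).rank = 1) :
    ∃ j, ∀ i, d i ^ k = c ↔ i ≠ j := by
  classical
  have hcard := rank_conj_diagonal_pow_sub_smul_one_add_card hP d k c
  rw [hrank, ← card_univ, ← card_filter_add_card_filter_not (s := univ) (d · ^ k = c), add_comm,
    add_right_inj, eq_comm, card_eq_one] at hcard
  obtain ⟨j, hj⟩ := hcard
  refine ⟨j, fun i => not_iff_not.1 ?_⟩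
  simpa using Finset.ext_iff.1 hj i

lemma det_smul_inv_conj_diagonal_pow (k : ℕ) (c : K) :
    (c • ((P * diagonal d * P⁻¹) ^ k)⁻¹).det = ∏ i, c * (d i ^ k)⁻¹ := by
  rw [det_smul, det_nonsing_inv, det_pow, det_conj hP, det_diagonal, Ring.inverse_eq_inv',
    prod_mul_distrib, prod_const, card_univ, prod_inv_distrib, prod_pow]

lemma det_smul_inv_conj_diagonal_pow_of_forall_ne {k : ℕ} {c : K} (hc : c ≠ 0) {j : n}
    (hj : ∀ i ≠ j, d i ^ k = c) :
    (c • ((P * diagonal d * P⁻¹) ^ k)⁻¹).det = c * (d j ^ k)⁻¹ := by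
  rw [det_smul_inv_conj_diagonal_pow hP]
  refine prod_eq_single_of_mem j (mem_univ j) fun i _ hi => ?_
  rw [hj i hi, mul_inv_cancel₀ hc]

lemma card_diagonal_eq_le_sum_rank_sub_one [DecidableEq K] {ι : Type*} [Fintype ι]
    {X : ι → Matrix n n K}
    (hirr : ∀ U : Submodule K (n → K), (∀ i, U.map (X i).mulVecLin ≤ U) →
      U.map (P * diagonal d * P⁻¹).mulVecLin ≤ U → U = ⊥ ∨ U = ⊤)
    {z : K} (hz : P * diagonal d * P⁻¹ ≠ z • 1) :
    #{i | d i = z} ≤ ∑ i, (X i - 1).rank := by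
  have hcard := rank_conj_diagonal_pow_sub_smul_one_add_card hP d 1 z
  have hle := card_le_rank_sub_smul_one_add_sum_rank_sub_one hirr hz
  simp only [pow_one] at hcard
  omega

end Diagonal

lemma separable_X_pow_sub_C_mul_X_pow_sub_C {k : ℕ} (hk : (k : K) ≠ 0) {a b : K} (ha : a ≠ 0)
    (hb : b ≠ 0) (hab : a ≠ b) : ((X ^ k - C a) * (X ^ k - C b)).Separable := by
  have hk' : k ≠ 0 := fun h => hk (by rw [h, Nat.cast_zero])
  have hcoprime : IsCoprime (expand K k (X - C a)) (expand K k (X - C b)) :=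
    (isCoprime_expand hk').2 (isCoprime_X_sub_C_of_isUnit_sub (sub_ne_zero.2 hab).isUnit)
  simp only [map_sub, expand_X, expand_C] at hcoprime
  exact (separable_X_pow_sub_C a hk ha).mul (separable_X_pow_sub_C b hk hb) hcoprime

section IsAlgClosed

variable [IsAlgClosed K]

lemma exists_basis_mulVec_eq_smul {W : Matrix n n K} {p : K[X]} (hp : Squarefree p)
    (hW : aeval W p = 0) : ∃ (B : Basis n K (n → K)) (d : n → K), ∀ j, W *ᵥ B j = d j • B j := by
  have hW' : aeval (toLinAlgEquiv' W) p = 0 := by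
    rw [aeval_algHom_apply, hW, map_zero]
  let E : Set (n → K) := {v | ∃ μ : K, W *ᵥ v = μ • v}
  have hE : ⊤ ≤ Submodule.span K E := by
    rw [← (End.isSemisimple_of_squarefree_aeval_eq_zero hp hW').iSup_eigenspace_eq_top]
    exact iSup_le fun μ v hv => Submodule.subset_span ⟨μ, End.mem_eigenspace_iff.1 hv⟩
  let B := Basis.ofSpan hE
  let e := B.indexEquiv (Pi.basisFun K n)
  have heigen (j : n) : ∃ μ : K, W *ᵥ B.reindex e j = μ • B.reindex e j := by
    rw [B.reindex_apply]
    exact Basis.ofSpan_subset hE ⟨e.symm j, rfl⟩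
  choose d hd using heigen
  exact ⟨B.reindex e, d, hd⟩

lemma exists_eq_conj_diagonal_of_squarefree_aeval_eq_zero {W : Matrix n n K} {p : K[X]}
    (hp : Squarefree p) (hW : aeval W p = 0) :
    ∃ (P : Matrix n n K) (d : n → K), IsUnit P ∧ W = P * diagonal d * P⁻¹ := by
  obtain ⟨B, d, hd⟩ := exists_basis_mulVec_eq_smul hp hW
  let P := (Pi.basisFun K n).toMatrix B
  have hP : IsUnit P := by
    have := (Pi.basisFun K n).invertibleToMatrix B
    exact isUnit_of_invertible P
  have hWP : W * P = P * diagonal d := by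
    ext i j
    rw [mul_diagonal, mul_comm]
    exact congrFun (hd j) i
  refine ⟨P, d, hP, ?_⟩
  rw [← hWP, mul_nonsing_inv_cancel_right _ _ ((isUnit_iff_isUnit_det P).1 hP)]

lemma exists_eq_conj_diagonal_of_rank_pow_sub_smul_one_le_one {W : Matrix n n K} (hW : IsUnit W)
    {k : ℕ} (hk : (k : K) ≠ 0) {c : K} (hc : c ≠ 0) (hrank : (W ^ k - c • 1).rank ≤ 1)
    (hdet : (c • (W ^ k)⁻¹).det ≠ 1) :
    ∃ (P : Matrix n n K) (d : n → K), IsUnit P ∧ W = P * diagonal d * P⁻¹ := by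
  have hdet0 := det_smul_inv_ne_zero (hW.pow k) hc
  have hne : c ≠ c * (c • (W ^ k)⁻¹).det⁻¹ := by
    rwa [ne_eq, eq_comm, mul_eq_left₀ hc, inv_eq_one]
  refine exists_eq_conj_diagonal_of_squarefree_aeval_eq_zero
    (separable_X_pow_sub_C_mul_X_pow_sub_C hk hc
      (mul_ne_zero hc (inv_ne_zero hdet0)) hne).squarefree ?_
  rw [map_mul, aeval_X_pow_sub_C, aeval_X_pow_sub_C]
  exact sub_smul_one_mul_sub_smul_one_eq_zero_of_rank_sub_smul_one_le_one (hW.pow k) hc hrank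

end IsAlgClosed

end Field

theorem stmt_16_general {K n ι : Type*} [Field K] [IsAlgClosed K] [Fintype n] [DecidableEq n]
    [Fintype ι] {k : ℕ} (hk : (k : K) ≠ 0) (hn : Fintype.card n = k * Fintype.card ι + 1)
    (c : K) (hc : c ≠ 0) (X : ι → Matrix n n K) (W : Matrix n n K)
    (hX : ∀ i, (X i - 1).rank ≤ 1) (hWu : IsUnit W)
    (lam0 : K) (hlam0 : lam0 = (c • (W ^ k)⁻¹).det)
    (hpr : (c • (W ^ k)⁻¹ - 1).rank = 1) (hlam1 : lam0 ≠ 1)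
    (hirr : ∀ U : Submodule K (n → K),
      (∀ i, U.map (X i).mulVecLin ≤ U) → U.map W.mulVecLin ≤ U → U = ⊥ ∨ U = ⊤) :
    ∃ (b : K) (P : Matrix n n K) (d : n → K),
      b ^ k = c * lam0⁻¹ ∧ b ^ k ≠ c ∧
      IsUnit P ∧ W = P * diagonal d * P⁻¹ ∧
      (∀ z : K, z ^ k = c → ({p | d p = z}).ncard = Fintype.card ι) ∧
      ({p | d p = b}).ncard = 1 := by
  classical
  have hk' : 0 < k := Nat.pos_of_ne_zero fun h => hk (by rw [h, Nat.cast_zero])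
  have hrank : (W ^ k - c • 1).rank = 1 := by rwa [← rank_smul_inv_sub_one (hWu.pow k)]
  obtain ⟨P, d, hP, rfl⟩ := exists_eq_conj_diagonal_of_rank_pow_sub_smul_one_le_one hWu hk hc
    hrank.le (hlam0 ▸ hlam1)
  obtain ⟨j, hj⟩ := exists_forall_pow_eq_iff_ne hP d hrank
  have hdj : d j ^ k ≠ c := fun h => (hj j).1 h rfl
  have hsum : ∑ i, (X i - 1).rank ≤ Fintype.card ι := by
    simpa using sum_le_card_nsmul univ _ 1 fun i _ => hX i
  have hcard := rank_conj_diagonal_pow_sub_smul_one_add_card hP d k c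
  refine ⟨d j, P, d, ?_, hdj, hP, rfl, fun z hz => ?_, ?_⟩
  · rw [hlam0, det_smul_inv_conj_diagonal_pow_of_forall_ne hP d hc fun i => (hj i).2, mul_inv,
      inv_inv, mul_inv_cancel_left₀ hc]
  · rw [Set.ncard_eq_toFinset_card', Set.toFinset_ofPred]
    refine card_fiber_eq_of_pow_eq hk' (fun w hw => ?_) (by omega) hz
    refine (card_diagonal_eq_le_sum_rank_sub_one hP d hirr ?_).trans hsum
    exact ne_smul_one_of_rank_pow_sub_smul_one_ne_zero (by rw [hw, hrank]; exact one_ne_zero)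
  · refine Set.ncard_eq_one.2 ⟨j, Set.ext fun i => ⟨fun hi => ?_, congrArg d⟩⟩
    exact not_not.1 fun hij => hdj (hi ▸ (hj i).2 hij)

/-- structure of the monodromy W = ρ(ω₀) of an irreducible Pochhammer
local system of multiplicity one on a turbine with shaft: if c·W^{−k} is a
pseudo-reflection with special eigenvalue λ₀ ≠ 1 and the family {X₁,…,X_ℓ,W} acts
irreducibly, then W is conjugate to ζ₁·I_ℓ ⊕ ⋯ ⊕ ζ_k·I_ℓ ⊕ (b) with ζ_i the k-th
roots of c and b^k = c·λ₀⁻¹. -/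
theorem stmt_16 {k ℓ : ℕ} (hk : 1 ≤ k) (hℓ : 1 ≤ ℓ) (c : ℂ) (hc : c ≠ 0)
    (X : Fin ℓ → Matrix (Fin (k * ℓ + 1)) (Fin (k * ℓ + 1)) ℂ)
    (W : Matrix (Fin (k * ℓ + 1)) (Fin (k * ℓ + 1)) ℂ)
    (hX : ∀ i, IsUnit (X i) ∧ (X i - 1).rank = 1)
    (hWu : IsUnit W)
    (lam0 : ℂ)
    (hlam0 : lam0 = (c • (W ^ k)⁻¹ : Matrix (Fin (k * ℓ + 1)) (Fin (k * ℓ + 1)) ℂ).det)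
    (hpr : ((c • (W ^ k)⁻¹ : Matrix (Fin (k * ℓ + 1)) (Fin (k * ℓ + 1)) ℂ) - 1).rank = 1)
    (hlam1 : lam0 ≠ 1)
    (hirr : ∀ U : Submodule ℂ (Fin (k * ℓ + 1) → ℂ),
      (∀ i, U.map (X i).mulVecLin ≤ U) → U.map W.mulVecLin ≤ U → U = ⊥ ∨ U = ⊤) :
    ∃ (b : ℂ) (P : Matrix (Fin (k * ℓ + 1)) (Fin (k * ℓ + 1)) ℂ)
      (d : Fin (k * ℓ + 1) → ℂ),
      b ^ k = c * lam0⁻¹ ∧ b ^ k ≠ c ∧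
      IsUnit P ∧ W = P * Matrix.diagonal d * P⁻¹ ∧
      (∀ z : ℂ, z ^ k = c → ({p | d p = z}).ncard = ℓ) ∧
      ({p | d p = b}).ncard = 1 := by
  simpa only [Fintype.card_fin] using stmt_16_general (Nat.cast_ne_zero.2 (by omega)) (by simp)
    c hc X W (fun i => (hX i).2.le) hWu lam0 hlam0 hpr hlam1 hirr
end
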